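/- Big Gaps Theorem: for every clockable ordinal α there is an ordinal β such that no ordinal δ with β ≤ δ < β + α is clockable, while some clockable ordinal is greater than or equal to β + α; that is, below the clockable ordinals there are gaps of size at least α. -/

import Mathlib

open scoped Classical

namespace ITTM

/-- A real is an element of Cantor space. -/
abbrev R := ℕ → Bool

/-- The constant-zero real. -/
def zeroR : R := fun _ => false

/-- The real ⟨1,0,0,...⟩ coding the answer "Yes". -/
def oneR : R := fun n => decide (n = 0)

/-- The real coding a natural number `p`: `p` ones followed by zeros. -/
def natR (p : ℕ) : R := fun n => decide (n < p)

/-- The real coding the pair of reals `(y, z)`. -/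
def pairR (y z : R) : R := fun n => if n % 2 = 0 then y (n / 2) else z (n / 2)

/-- A snapshot of an infinite time Turing machine computation with state set
`Fin (Q+1)`: the current state, the head position, and the contents of the
three tapes (tape 0 is the input tape, tape 1 the scratch tape, tape 2 the
output tape); cells hold values in `Bool` (`true` = 1, `false` = 0). -/
structure Snapshot (Q : ℕ) where
  state : Fin (Q + 1)
  head : ℕ
  tape : Fin 3 → ℕ → Bool

/-- An infinite time Turing machine program: a finite set of states
`Fin (Q+1)` with distinguished start, limit and halt states, and a finite
transition table which, given the current state and the three cell values
read by the head, specifies the next state, the three values to write, and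
the direction to move (`true` = right, `false` = left). -/
structure Machine where
  Q : ℕ
  start : Fin (Q + 1)
  limit : Fin (Q + 1)
  halt : Fin (Q + 1)
  trans : Fin (Q + 1) × (Fin 3 → Bool) → Fin (Q + 1) × (Fin 3 → Bool) × Bool

instance : Inhabited Machine := ⟨⟨0, 0, 0, 0, fun _ => (0, fun _ => false, true)⟩⟩

namespace Machine

/-- The initial snapshot on input `x`: head on cell 0 in the start state, `x`
on the input tape, the other tapes filled with zeros. -/
def init (M : Machine) (x : R) : Snapshot M.Q where
  state := M.start
  head := 0
  tape := fun i n => if i = 0 then x n else false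

/-- One step of computation applied to a snapshot. -/
def stepSnap (M : Machine) (s : Snapshot M.Q) : Snapshot M.Q :=
  let t := M.trans (s.state, fun i => s.tape i s.head)
  { state := t.1
    head := if t.2.2 then s.head + 1 else s.head - 1
    tape := fun i n => if n = s.head then t.2.1 i else s.tape i n }

/-- The snapshot of the computation of machine `M` on input `x` at ordinal
stage `α`, defined by transfinite recursion: at stage 0 the initial snapshot,
at successor stages the transition table is applied, and at limit stages the
head is on cell 0 in the limit state and each cell holds the `limsup` of its
earlier values (1 iff its value was 1 cofinally often below the limit). -/
noncomputable def snap (M : Machine) (x : R) : Ordinal.{0} → Snapshot M.Q :=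
  WellFounded.fix Ordinal.lt_wf fun α ih =>
    if _h0 : α = 0 then M.init x
    else if hs : ∃ β, β < α ∧ α = β + 1 then
      M.stepSnap (ih hs.choose hs.choose_spec.1)
    else
      { state := M.limit
        head := 0
        tape := fun i n =>
          decide (∀ β < α, ∃ γ, β ≤ γ ∧ ∃ hγ : γ < α, (ih γ hγ).tape i n = true) }

/-- The machine is in the halt state at stage `α`. -/
def haltedAt (M : Machine) (x : R) (α : Ordinal) : Prop :=
  (M.snap x α).state = M.halt

/-- The computation of `M` on input `x` halts exactly at stage `α`: stage `α`
is the first stage at which the machine is in the halt state. -/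
def haltsAt (M : Machine) (x : R) (α : Ordinal) : Prop :=
  M.haltedAt x α ∧ ∀ β < α, ¬ M.haltedAt x β

/-- The computation of `M` on input `x` halts. -/
def halts (M : Machine) (x : R) : Prop := ∃ α, M.haltedAt x α

/-- The computation of `M` on input `x` halts with output `y`: at the first
stage at which the machine is in the halt state, the output tape reads `y`. -/
def outputs (M : Machine) (x y : R) : Prop :=
  ∃ α, M.haltsAt x α ∧ (M.snap x α).tape 2 = y

end Machine

/-- Machines are coded by natural numbers. -/
noncomputable instance : Encodable Machine :=
  Encodable.ofEquiv
    (Σ Q : ℕ, (Fin (Q + 1) × Fin (Q + 1) × Fin (Q + 1)) ×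
      ((Fin (Q + 1) × (Fin 3 → Bool)) → Fin (Q + 1) × (Fin 3 → Bool) × Bool))
    { toFun := fun M => ⟨M.Q, (M.start, M.limit, M.halt), M.trans⟩
      invFun := fun s => ⟨s.1, s.2.1.1, s.2.1.2.1, s.2.1.2.2, s.2.2⟩
      left_inv := fun _ => rfl
      right_inv := fun _ => rfl }

/-- The machine coded by the natural number `p`; every natural number codes a
machine, and every machine is coded by some natural number. -/
noncomputable def prog (p : ℕ) : Machine :=
  ((Encodable.decode p : Option Machine)).getD default

/-- `φ_p(x)` halts with output `y`. -/
noncomputable def phiOutputs (p : ℕ) (x y : R) : Prop := (prog p).outputs x y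

/-- A set of reals is infinite time decidable when some machine, on any input
`x`, halts with output ⟨1,0,0,...⟩ if `x ∈ A` and output ⟨0,0,0,...⟩ if
`x ∉ A`. -/
def ITTMDecidable (A : Set R) : Prop :=
  ∃ M : Machine, ∀ x : R, (x ∈ A → M.outputs x oneR) ∧ (x ∉ A → M.outputs x zeroR)

/-- A set of reals is infinite time semi-decidable when it is the halting set
of some machine. -/
def ITTMSemiDecidable (A : Set R) : Prop :=
  ∃ M : Machine, A = {x : R | M.halts x}

/-- The binary relation on ℕ coded by the real `x`:
`n ◁ k ⟺ x(⟨n,k⟩) = 1` where `⟨·,·⟩` is the pairing function. -/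
def rel (x : R) (n k : ℕ) : Prop := x (Nat.pair n k) = true

/-- The field of the relation coded by `x`. -/
def field (x : R) : Set ℕ := {n | ∃ k, rel x n k ∨ rel x k n}

/-- The relation coded by `x`, restricted to its field. -/
def relOn (x : R) : field x → field x → Prop := fun a b => rel x a.1 b.1

/-- The real `x` codes a well-order of (a subset of) ℕ, namely its field. -/
def codesWellOrder (x : R) : Prop := IsWellOrder (field x) (relOn x)

/-- The set of reals coding well-orders. -/
def WO : Set R := {x | codesWellOrder x}

/-- The real `x` codes a well-order of order type `α`. -/
def codesOrdinal (x : R) (α : Ordinal) : Prop :=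
  ∃ h : codesWellOrder x, @Ordinal.type _ (relOn x) h = α

/-- An ordinal is clockable when some machine on input 0 halts exactly at
stage `α`. -/
def Clockable (α : Ordinal) : Prop := ∃ M : Machine, M.haltsAt zeroR α

/-- A real is writable when it is the output of some machine on input 0. -/
def WritableReal (x : R) : Prop := ∃ M : Machine, M.outputs zeroR x

/-- An ordinal is writable when some writable real codes a well-order of that
order type. -/
def WritableOrdinal (α : Ordinal) : Prop :=
  ∃ x : R, WritableReal x ∧ codesOrdinal x α

/-- A real is eventually writable when some machine on input 0 never halts,
but from some stage onward the content of its output tape is exactly `x`. -/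
def EventuallyWritableReal (x : R) : Prop :=
  ∃ M : Machine, ¬ M.halts zeroR ∧ ∃ α : Ordinal, ∀ β ≥ α, (M.snap zeroR β).tape 2 = x

/-- An ordinal is eventually writable when some eventually writable real codes
a well-order of that order type. -/
def EventuallyWritableOrdinal (α : Ordinal) : Prop :=
  ∃ x : R, EventuallyWritableReal x ∧ codesOrdinal x α

end ITTM

namespace ITTM

/-- A transfinite dynamical system: a step function for successor stages, and observable bits
whose `limsup` determines the configuration at limit stages. -/
structure Sys where
  X : Type
  I : Type
  step : X → X
  bit : X → I → Bool
  lim : (I → Bool) → X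
  halted : X → Prop

namespace Sys

/-- The `limsup` below `o` of an ordinal-indexed sequence of bits. -/
noncomputable def limsupBit (o : Ordinal.{0}) (f : Ordinal.{0} → Bool) : Bool :=
  decide (∀ β < o, ∃ γ, β ≤ γ ∧ γ < o ∧ f γ = true)

/-- The configuration at stage `o` of the run starting with `x`. -/
noncomputable def run (S : Sys) (x : S.X) (o : Ordinal.{0}) : S.X :=
  Ordinal.limitRecOn o x (fun _ y => S.step y) fun o _ ih =>
    S.lim fun i => decide (∀ β < o, ∃ γ, β ≤ γ ∧ ∃ hγ : γ < o, S.bit (ih γ hγ) i = true)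

/-- The run starting with `x` halts for the first time at stage `o`. -/
def FirstHalt (S : Sys) (x : S.X) (o : Ordinal.{0}) : Prop :=
  S.halted (S.run x o) ∧ ∀ o' < o, ¬ S.halted (S.run x o')

variable (S : Sys) (x : S.X)

@[simp] theorem run_zero : S.run x 0 = x := by
  simp [run]

@[simp] theorem run_add_one (o : Ordinal) : S.run x (o + 1) = S.step (S.run x o) := by
  simp [run]

theorem run_limit {o : Ordinal} (ho : Order.IsSuccLimit o) :
    S.run x o = S.lim fun i => limsupBit o fun γ => S.bit (S.run x γ) i := by
  rw [run, Ordinal.limitRecOn_limit _ _ _ _ ho]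
  simp only [limsupBit, exists_prop]
  rfl

theorem limsupBit_eq_true {o : Ordinal} {f : Ordinal → Bool} :
    limsupBit o f = true ↔ ∀ β < o, ∃ γ, β ≤ γ ∧ γ < o ∧ f γ = true := by
  simp [limsupBit]

theorem limsupBit_of_eventually {o β : Ordinal} (hβ : β < o) {f : Ordinal → Bool} {v : Bool}
    (h : ∀ γ, β ≤ γ → γ < o → f γ = v) : limsupBit o f = v := by
  cases v
  · rw [Bool.eq_false_iff, ne_eq, limsupBit_eq_true]
    intro H
    obtain ⟨γ, h1, h2, h3⟩ := H β hβ
    simp [h γ h1 h2] at h3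
  · rw [limsupBit_eq_true]
    intro β' hβ'
    exact ⟨max β β', le_max_right _ _, max_lt hβ hβ', h _ (le_max_left _ _) (max_lt hβ hβ')⟩

theorem limsupBit_congr {o β : Ordinal} (hβ : β < o) {f g : Ordinal → Bool}
    (h : ∀ γ, β ≤ γ → γ < o → f γ = g γ) : limsupBit o f = limsupBit o g := by
  rw [Bool.eq_iff_iff, limsupBit_eq_true, limsupBit_eq_true]
  constructor <;> intro H β' hβ' <;>
    obtain ⟨γ, h1, h2, h3⟩ := H (max β β') (max_lt hβ hβ')
  · exact ⟨γ, (le_max_right _ _).trans h1, h2, by rwa [← h γ ((le_max_left _ _).trans h1) h2]⟩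
  · exact ⟨γ, (le_max_right _ _).trans h1, h2, by rwa [h γ ((le_max_left _ _).trans h1) h2]⟩

theorem limsupBit_add {η o : Ordinal} (ho : Order.IsSuccLimit o) (f : Ordinal → Bool) :
    limsupBit (η + o) f = limsupBit o fun γ => f (η + γ) := by
  rw [Bool.eq_iff_iff, limsupBit_eq_true, limsupBit_eq_true]
  constructor
  · intro H β hβ
    obtain ⟨γ, h1, h2, h3⟩ := H (η + β) (by gcongr)
    obtain ⟨δ, rfl⟩ : ∃ δ, γ = η + δ :=
      ⟨γ - η, (Ordinal.add_sub_cancel_of_le (le_self_add.trans h1)).symm⟩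
    exact ⟨δ, by simpa using h1, by simpa using h2, h3⟩
  · intro H β hβ
    obtain ⟨γ, h1, h2, h3⟩ := H (β - η) (by
      rcases le_total β η with h | h
      · rw [Ordinal.sub_eq_zero_iff_le.2 h]
        exact ho.bot_lt
      · rw [← Ordinal.add_sub_cancel_of_le h] at hβ
        simpa using hβ)
    refine ⟨η + γ, ?_, by gcongr, h3⟩
    exact (Ordinal.le_add_sub β η).trans (by gcongr)

theorem run_add (η ζ : Ordinal) : S.run x (η + ζ) = S.run (S.run x η) ζ := by
  induction ζ using Ordinal.limitRecOn with
  | zero => simp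
  | add_one ζ ih => rw [← add_assoc, run_add_one, run_add_one, ih]
  | limit o ho ih =>
    rw [run_limit _ _ ho, run_limit _ _ (Ordinal.isSuccLimit_add η ho)]
    congr 1
    funext i
    rw [limsupBit_add ho]
    refine limsupBit_congr ho.bot_lt fun γ _ hγ => ?_
    rw [ih γ hγ]

/-- A simulation of the system `S` started with `x₀` by the system `C` started with `y₀`.
Every step of `S` is simulated by a nonempty run of `C`, during which the bits of `C` that
represent those of `S` only take their old or their new values; and after every limit stage `C`
may first run for a while, leaving these bits alone. -/
structure Sim (S C : Sys) (x₀ : S.X) (y₀ : C.X) where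
  rep : S.X → C.X → Prop
  idx : S.I → C.I
  flags : Set C.I
  bit_eq : ∀ {x y}, rep x y → ∀ i, C.bit y (idx i) = S.bit x i
  start : ∃ γ, rep x₀ (C.run y₀ γ) ∧ ∀ ζ < γ, ¬ C.halted (C.run y₀ ζ)
  step : ∀ {x y}, rep x y → ¬ S.halted x → ∃ ν, 0 < ν ∧ rep (S.step x) (C.run y ν) ∧
    (∀ ζ < ν, ¬ C.halted (C.run y ζ) ∧ ∀ i, C.bit (C.run y ζ) (idx i) = S.bit x i ∨
      C.bit (C.run y ζ) (idx i) = S.bit (S.step x) i) ∧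
    ∀ f ∈ flags, ∃ ζ < ν, C.bit (C.run y ζ) f = true
  limit : ∀ b : C.I → Bool, (∀ f ∈ flags, b f = true) →
    ∃ γ, rep (S.lim (b ∘ idx)) (C.run (C.lim b) γ) ∧
    ∀ ζ < γ, ¬ C.halted (C.run (C.lim b) ζ) ∧
      ∀ i, C.bit (C.run (C.lim b) ζ) (idx i) = S.bit (S.lim (b ∘ idx)) i
  halt : ∀ {x y}, rep x y → S.halted x → ∃ ν, C.FirstHalt y ν

namespace Sim

variable {S C : Sys} {x₀ : S.X} {y₀ : C.X} (M : Sim S C x₀ y₀)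

/-- The length of the simulation of one step. -/
noncomputable def stepLength (x : S.X) (y : C.X) : Ordinal :=
  if h : M.rep x y ∧ ¬ S.halted x then (M.step h.1 h.2).choose else 1

/-- The length of the run of `C` that restores the representation after a limit stage. -/
noncomputable def limitLength (b : C.I → Bool) : Ordinal :=
  if h : ∀ f ∈ M.flags, b f = true then (M.limit b h).choose else 0

/-- The stage of `C` that corresponds to stage `η` of `S`. -/
noncomputable def time (η : Ordinal.{0}) : Ordinal.{0} :=
  Ordinal.limitRecOn η M.start.choose
    (fun η t => t + M.stepLength (S.run x₀ η) (C.run y₀ t))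
    (fun o _ ih => (⨆ a : Set.Iio o, ih a.1 a.2) + M.limitLength fun i =>
      limsupBit (⨆ a : Set.Iio o, ih a.1 a.2) fun γ => C.bit (C.run y₀ γ) i)

/-- The supremum of the stages that correspond to stages below `o`. -/
noncomputable def supTime (o : Ordinal.{0}) : Ordinal.{0} := ⨆ a : Set.Iio o, M.time a.1

theorem time_zero : M.time 0 = M.start.choose := by
  simp [time]

theorem time_add_one (η : Ordinal) :
    M.time (η + 1) = M.time η + M.stepLength (S.run x₀ η) (C.run y₀ (M.time η)) := by
  rw [time, Ordinal.limitRecOn_add_one]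
  rfl

theorem time_limit {o : Ordinal} (ho : Order.IsSuccLimit o) :
    M.time o = M.supTime o + M.limitLength fun i =>
      limsupBit (M.supTime o) fun γ => C.bit (C.run y₀ γ) i := by
  rw [time, Ordinal.limitRecOn_limit _ _ _ _ ho]
  rfl

theorem time_lt_time_add_one (η : Ordinal) : M.time η < M.time (η + 1) := by
  rw [time_add_one, lt_add_iff_pos_right, stepLength]
  split_ifs with h
  · exact (M.step h.1 h.2).choose_spec.1
  · exact zero_lt_one

theorem time_le_supTime {η o : Ordinal} (h : η < o) : M.time η ≤ M.supTime o :=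
  Ordinal.le_iSup (fun a : Set.Iio o => M.time a.1) ⟨η, h⟩

theorem supTime_le_time {o : Ordinal} (ho : Order.IsSuccLimit o) : M.supTime o ≤ M.time o := by
  rw [M.time_limit ho]
  exact le_self_add

theorem time_strictMono : StrictMono M.time := by
  intro a b
  induction b using Ordinal.limitRecOn with
  | zero => simp
  | add_one b ih =>
    intro h
    rcases (Order.lt_add_one_iff.1 h).lt_or_eq with h | rfl
    · exact (ih h).trans (M.time_lt_time_add_one b)
    · exact M.time_lt_time_add_one a
  | limit o ho ih =>
    intro h
    exact (M.time_lt_time_add_one a).trans_le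
      ((M.time_le_supTime (ho.add_one_lt h)).trans (M.supTime_le_time ho))

theorem lt_supTime_iff {σ o : Ordinal} : σ < M.supTime o ↔ ∃ η < o, σ < M.time η := by
  rw [supTime, Ordinal.lt_iSup_iff]
  simp

theorem isSuccLimit_supTime {o : Ordinal} (ho : Order.IsSuccLimit o) :
    Order.IsSuccLimit (M.supTime o) := by
  rw [Ordinal.isSuccLimit_iff, Order.isSuccPrelimit_iff_succ_lt]
  refine ⟨?_, fun σ hσ => ?_⟩
  · have := M.lt_supTime_iff.2 ⟨0 + 1, ho.add_one_lt ho.bot_lt, M.time_lt_time_add_one 0⟩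
    exact (pos_of_gt this).ne'
  · obtain ⟨η, h1, h2⟩ := M.lt_supTime_iff.1 hσ
    exact M.lt_supTime_iff.2 ⟨η + 1, ho.add_one_lt h1,
      (Order.add_one_le_of_lt h2).trans_lt (M.time_lt_time_add_one η)⟩

/-- The invariant of the simulation up to stage `η`. -/
def Good (η : Ordinal.{0}) : Prop :=
  M.rep (S.run x₀ η) (C.run y₀ (M.time η)) ∧
  (∀ σ < M.time η, ¬ C.halted (C.run y₀ σ)) ∧
  ∀ η₀ ≤ η, ∀ i v, (∀ ζ, η₀ ≤ ζ → ζ ≤ η → S.bit (S.run x₀ ζ) i = v) →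
    ∀ σ, M.time η₀ ≤ σ → σ ≤ M.time η → C.bit (C.run y₀ σ) (M.idx i) = v

theorem exists_flag {η : Ordinal} (hη : M.Good η) (hh : ¬ S.halted (S.run x₀ η)) {f : C.I}
    (hf : f ∈ M.flags) : ∃ σ, M.time η ≤ σ ∧ σ < M.time (η + 1) ∧ C.bit (C.run y₀ σ) f = true := by
  have h : M.rep (S.run x₀ η) (C.run y₀ (M.time η)) ∧ ¬ S.halted (S.run x₀ η) := ⟨hη.1, hh⟩
  obtain ⟨ζ, h1, h2⟩ := (M.step h.1 h.2).choose_spec.2.2.2 f hf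
  refine ⟨M.time η + ζ, le_self_add, ?_, by rwa [run_add]⟩
  rw [time_add_one, stepLength, dif_pos h]
  gcongr

theorem good_zero : M.Good 0 := by
  refine ⟨?_, ?_, ?_⟩
  · rw [time_zero, run_zero]
    exact M.start.choose_spec.1
  · rw [time_zero]
    exact M.start.choose_spec.2
  · intro η₀ h0 i v hv σ h1 h2
    obtain rfl := nonpos_iff_eq_zero.1 h0
    obtain rfl := h1.antisymm h2
    rw [M.bit_eq (x := S.run x₀ 0), hv 0 le_rfl le_rfl]
    rw [time_zero, run_zero]
    exact M.start.choose_spec.1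

theorem good_add_one {η : Ordinal} (hη : M.Good η) (hh : ¬ S.halted (S.run x₀ η)) :
    M.Good (η + 1) := by
  have h : M.rep (S.run x₀ η) (C.run y₀ (M.time η)) ∧ ¬ S.halted (S.run x₀ η) := ⟨hη.1, hh⟩
  obtain ⟨-, h1, h2, -⟩ := (M.step h.1 h.2).choose_spec
  have ht : M.time (η + 1) = M.time η + (M.step h.1 h.2).choose := by
    rw [time_add_one, stepLength, dif_pos h]
  have hrep : M.rep (S.run x₀ (η + 1)) (C.run y₀ (M.time (η + 1))) := by
    rw [run_add_one, ht, run_add]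
    exact h1
  have key : ∀ σ, M.time η ≤ σ → σ < M.time (η + 1) → ¬ C.halted (C.run y₀ σ) ∧
      ∀ i, C.bit (C.run y₀ σ) (M.idx i) = S.bit (S.run x₀ η) i ∨
        C.bit (C.run y₀ σ) (M.idx i) = S.bit (S.run x₀ (η + 1)) i := by
    intro σ hσ hσ'
    rw [ht, ← Ordinal.add_sub_cancel_of_le hσ] at hσ'
    have := h2 (σ - M.time η) (by simpa using hσ')
    rw [← run_add, Ordinal.add_sub_cancel_of_le hσ] at this
    rwa [run_add_one]
  refine ⟨hrep, fun σ hσ => ?_, fun η₀ h0 i v hv σ hσ hσ' => ?_⟩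
  · rcases lt_or_ge σ (M.time η) with h | h
    · exact hη.2.1 σ h
    · exact (key σ h hσ).1
  · rcases hσ'.lt_or_eq with hσ' | rfl
    · have h0 : η₀ ≤ η := by
        by_contra hc
        exact (hσ.trans_lt hσ').not_ge (M.time_strictMono.monotone (Order.add_one_le_of_lt
          (not_le.1 hc)))
      rcases le_total σ (M.time η) with h | h
      · exact hη.2.2 η₀ h0 i v (fun ζ a b => hv ζ a (b.trans (lt_add_one η).le)) σ hσ h
      · rcases (key σ h hσ').2 i with h | h <;> rw [h]
        · exact hv _ h0 (lt_add_one η).le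
        · exact hv _ (h0.trans (lt_add_one η).le) le_rfl
    · rw [M.bit_eq hrep]
      exact hv _ h0 le_rfl

theorem good_limit {o : Ordinal} (ho : Order.IsSuccLimit o)
    (ih : ∀ η < o, M.Good η ∧ ¬ S.halted (S.run x₀ η)) : M.Good o := by
  set s := M.supTime o with hs
  have hsl : Order.IsSuccLimit s := M.isSuccLimit_supTime ho
  set b : C.I → Bool := fun i => limsupBit s fun γ => C.bit (C.run y₀ γ) i with hb
  have hflag : ∀ f ∈ M.flags, b f = true := by
    intro f hf
    rw [hb, limsupBit_eq_true]
    intro β hβ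
    obtain ⟨η, h1, h2⟩ := M.lt_supTime_iff.1 hβ
    obtain ⟨σ, h3, h4, h5⟩ := M.exists_flag (ih η h1).1 (ih η h1).2 hf
    exact ⟨σ, h2.le.trans h3, h4.trans_le (M.time_le_supTime (ho.add_one_lt h1)), h5⟩
  have hbit : S.run x₀ o = S.lim (b ∘ M.idx) := by
    rw [run_limit _ _ ho]
    congr 1
    funext i
    have hcases : (∀ β < o, ∃ γ, β ≤ γ ∧ γ < o ∧ S.bit (S.run x₀ γ) i = true) ∨
        ∃ β < o, ∀ γ, β ≤ γ → γ < o → S.bit (S.run x₀ γ) i = false := by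
      by_contra hc
      push Not at hc
      obtain ⟨⟨β, h1, h2⟩, h3⟩ := hc
      obtain ⟨γ, h4, h5, h6⟩ := h3 β h1
      exact h6 (by simpa using h2 γ h4 h5)
    rcases hcases with h | ⟨β, hβ, h⟩
    · rw [limsupBit_eq_true.2 h]
      symm
      refine limsupBit_eq_true.2 fun β hβ => ?_
      obtain ⟨η, h1, h2⟩ := M.lt_supTime_iff.1 hβ
      obtain ⟨γ, h3, h4, h5⟩ := h η h1
      refine ⟨M.time γ, h2.le.trans (M.time_strictMono.monotone h3), ?_, ?_⟩
      · exact M.lt_supTime_iff.2 ⟨_, ho.add_one_lt h4, M.time_lt_time_add_one γ⟩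
      · rw [M.bit_eq (ih γ h4).1.1, h5]
    · rw [limsupBit_of_eventually hβ h]
      symm
      refine limsupBit_of_eventually
        (M.lt_supTime_iff.2 ⟨_, ho.add_one_lt hβ, M.time_lt_time_add_one β⟩) fun γ h1 h2 => ?_
      obtain ⟨η, h3, h4⟩ := M.lt_supTime_iff.1 h2
      have hβη : β ≤ η := by
        by_contra hc
        exact (h1.trans_lt h4).not_ge (M.time_strictMono.monotone (not_le.1 hc).le)
      exact (ih η h3).1.2.2 β hβη i false (fun ζ a c => h ζ a (c.trans_lt h3)) γ h1 h4.le
  obtain ⟨h1, h2⟩ := (M.limit b hflag).choose_spec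
  have ht : M.time o = s + (M.limit b hflag).choose := by
    rw [M.time_limit ho, limitLength, dif_pos hflag]
  have hrun : C.run y₀ s = C.lim b := run_limit _ _ hsl
  have hrep : M.rep (S.run x₀ o) (C.run y₀ (M.time o)) := by
    rw [ht, run_add, hrun, hbit]
    exact h1
  have key : ∀ σ, s ≤ σ → σ < M.time o → ¬ C.halted (C.run y₀ σ) ∧
      ∀ i, C.bit (C.run y₀ σ) (M.idx i) = S.bit (S.run x₀ o) i := by
    intro σ hσ hσ'
    rw [ht, ← Ordinal.add_sub_cancel_of_le hσ] at hσ'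
    have := h2 (σ - s) (by simpa using hσ')
    rwa [← hrun, ← run_add, Ordinal.add_sub_cancel_of_le hσ, ← hbit] at this
  refine ⟨hrep, fun σ hσ => ?_, fun η₀ h0 i v hv σ hσ hσ' => ?_⟩
  · rcases lt_or_ge σ s with h | h
    · obtain ⟨η, h3, h4⟩ := M.lt_supTime_iff.1 h
      exact (ih η h3).1.2.1 σ h4
    · exact (key σ h hσ).1
  · rcases hσ'.lt_or_eq with hσ' | rfl
    · rcases lt_or_ge σ s with h | h
      · obtain ⟨η, h3, h4⟩ := M.lt_supTime_iff.1 h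
        have hη : η₀ ≤ η := by
          by_contra hc
          exact (hσ.trans_lt h4).not_ge (M.time_strictMono.monotone (not_le.1 hc).le)
        exact (ih η h3).1.2.2 η₀ hη i v (fun ζ a c => hv ζ a (c.trans h3.le)) σ hσ h4.le
      · rw [(key σ h hσ').2 i]
        exact hv _ h0 le_rfl
    · rw [M.bit_eq hrep]
      exact hv _ h0 le_rfl

theorem good {η : Ordinal} (h : ∀ ζ < η, ¬ S.halted (S.run x₀ ζ)) : M.Good η := by
  induction η using Ordinal.limitRecOn with
  | zero => exact M.good_zero
  | add_one η ih =>
    exact M.good_add_one (ih fun ζ hζ => h ζ (hζ.trans (lt_add_one η)))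
      (h η (lt_add_one η))
  | limit o ho ih =>
    exact M.good_limit ho fun η hη => ⟨ih η hη fun ζ hζ => h ζ (hζ.trans hη), h η hη⟩

/-- A simulating system does not halt before the system it simulates. -/
theorem exists_firstHalt (M : Sim S C x₀ y₀) {η : Ordinal} (h : S.FirstHalt x₀ η) :
    ∃ ξ, η ≤ ξ ∧ C.FirstHalt y₀ ξ := by
  obtain ⟨h1, h2, -⟩ := M.good h.2
  obtain ⟨ν, h3, h4⟩ := M.halt h1 h.1
  refine ⟨M.time η + ν, (M.time_strictMono.le_apply).trans le_self_add, ?_, fun σ hσ => ?_⟩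
  · rwa [run_add]
  · rcases lt_or_ge σ (M.time η) with h | h
    · exact h2 σ h
    · rw [← Ordinal.add_sub_cancel_of_le h] at hσ ⊢
      rw [run_add]
      exact h4 _ (by simpa using hσ)

end Sim
end Sys
end ITTM

namespace ITTM

namespace Sys

/-- `S.Path P y z`: finitely many steps lead from `y` to `z`, and all configurations on the way,
except possibly the last one, satisfy `P`. -/
inductive Path (S : Sys) (P : S.X → Prop) : S.X → S.X → Prop
  | refl (y : S.X) : Path S P y y
  | head {y z : S.X} (hy : P y) (h : Path S P (S.step y) z) : Path S P y z

namespace Path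

variable {S : Sys} {P : S.X → Prop} {y z u : S.X}

theorem trans (h : S.Path P y z) (h' : S.Path P z u) : S.Path P y u := by
  induction h with
  | refl => exact h'
  | head hy _ ih => exact .head hy (ih h')

theorem single (hy : P y) : S.Path P y (S.step y) := .head hy (.refl _)

theorem tail (h : S.Path P y z) (hz : P z) : S.Path P y (S.step z) := h.trans (single hz)

theorem head_eq (hy : P y) (e : S.step y = z) (h : S.Path P z u) : S.Path P y u :=
  .head hy (by rwa [e])

theorem mono {P' : S.X → Prop} (hP : ∀ y, P y → P' y) (h : S.Path P y z) : S.Path P' y z := by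
  induction h with
  | refl => exact .refl _
  | head hy _ ih => exact .head (hP _ hy) ih

theorem head_of_ne (h : S.Path P y z) (hne : y ≠ z) : P y ∧ S.Path P (S.step y) z := by
  cases h with
  | refl => exact absurd rfl hne
  | head hy h => exact ⟨hy, h⟩

end Path

variable {S : Sys} {P : S.X → Prop} {y z : S.X}

theorem run_step (y : S.X) (n : ℕ) : S.run (S.step y) n = S.run y (n + 1 : ℕ) := by
  have h := S.run_add y 1 n
  have h1 : S.run y 1 = S.step y := by simpa using S.run_add_one y 0
  rw [h1] at h
  rw [← h, Nat.cast_add, Nat.cast_one, ← Nat.cast_one, ← Nat.cast_add, ← Nat.cast_add,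
    Nat.add_comm]

theorem Path.exists_nat (h : S.Path P y z) :
    ∃ n : ℕ, S.run y n = z ∧ ∀ m < n, P (S.run y (m : ℕ)) := by
  induction h with
  | refl => exact ⟨0, by simp, by simp⟩
  | @head y z hy _ ih =>
    obtain ⟨n, h1, h2⟩ := ih
    refine ⟨n + 1, by rw [← h1, run_step], fun m hm => ?_⟩
    cases m with
    | zero => simpa using hy
    | succ m => rw [← run_step]; exact h2 m (by omega)

theorem Path.exists_ordinal (h : S.Path P y z) :
    ∃ ν : Ordinal.{0}, S.run y ν = z ∧ ∀ ζ < ν, P (S.run y ζ) := by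
  obtain ⟨n, h1, h2⟩ := h.exists_nat
  refine ⟨n, h1, fun ζ hζ => ?_⟩
  obtain ⟨m, rfl⟩ := Ordinal.lt_omega0.1 (hζ.trans (Ordinal.natCast_lt_omega0 n))
  exact h2 m (by exact_mod_cast hζ)

theorem Path.exists_ordinal_pos (hy : P y) (h : S.Path P (S.step y) z) :
    ∃ ν : Ordinal.{0}, 0 < ν ∧ S.run y ν = z ∧ ∀ ζ < ν, P (S.run y ζ) := by
  obtain ⟨n, h1, h2⟩ := h.exists_nat
  refine ⟨(n + 1 : ℕ), by exact_mod_cast n.succ_pos, by rw [← h1, run_step], fun ζ hζ => ?_⟩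
  obtain ⟨m, rfl⟩ := Ordinal.lt_omega0.1 (hζ.trans (Ordinal.natCast_lt_omega0 _))
  have hm : m < n + 1 := by exact_mod_cast hζ
  cases m with
  | zero => simpa using hy
  | succ m => rw [← run_step]; exact h2 m (by omega)

theorem Path.exists_ordinal_step (h : S.Path P y z) (hz : P z) :
    ∃ ν : Ordinal.{0}, 0 < ν ∧ S.run y ν = S.step z ∧ ∀ ζ < ν, P (S.run y ζ) := by
  obtain ⟨ν, h1, h2⟩ := h.exists_ordinal
  refine ⟨ν + 1, by simp, by rw [run_add_one, h1], fun ζ hζ => ?_⟩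
  rcases (Order.lt_add_one_iff.1 hζ).lt_or_eq with hlt | rfl
  · exact h2 ζ hlt
  · rwa [h1]

theorem Path.exists_firstHalt (h : S.Path (fun y => ¬ S.halted y) y z) (hz : S.halted z) :
    ∃ ν, S.FirstHalt y ν := by
  obtain ⟨ν, h1, h2⟩ := h.exists_ordinal
  exact ⟨ν, by rwa [h1], h2⟩

end Sys

namespace Machine

/-- The transfinite system given by a machine. -/
abbrev sys (M : Machine) : Sys where
  X := Snapshot M.Q
  I := Fin 3 × ℕ
  step := M.stepSnap
  bit s i := s.tape i.1 i.2
  lim b := ⟨M.limit, 0, fun i n => b (i, n)⟩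
  halted s := s.state = M.halt

theorem snap_def (M : Machine) (x : R) (o : Ordinal) :
    M.snap x o = if o = 0 then M.init x
      else if hs : ∃ β, β < o ∧ o = β + 1 then M.stepSnap (M.snap x hs.choose)
      else ⟨M.limit, 0, fun i n =>
        decide (∀ β < o, ∃ γ, β ≤ γ ∧ ∃ _ : γ < o, (M.snap x γ).tape i n = true)⟩ :=
  WellFounded.fix_eq _ _ _

theorem snap_add_one (M : Machine) (x : R) (o : Ordinal) :
    M.snap x (o + 1) = M.stepSnap (M.snap x o) := by
  have hs : ∃ β, β < o + 1 ∧ o + 1 = β + 1 := ⟨o, lt_add_one o, rfl⟩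
  have h : o = hs.choose := by simpa using hs.choose_spec.2
  rw [snap_def, if_neg (by simp), dif_pos hs, ← h]

theorem snap_limit (M : Machine) (x : R) {o : Ordinal} (ho : Order.IsSuccLimit o) :
    M.snap x o = ⟨M.limit, 0, fun i n => Sys.limsupBit o fun γ => (M.snap x γ).tape i n⟩ := by
  have h : ¬ ∃ β, β < o ∧ o = β + 1 := fun ⟨β, h1, h2⟩ => (ho.add_one_lt h1).ne h2.symm
  rw [snap_def, if_neg (Ordinal.isSuccLimit_iff.1 ho).1, dif_neg h]
  simp only [exists_prop, Sys.limsupBit]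

theorem snap_eq_run (M : Machine) (x : R) (o : Ordinal) :
    M.snap x o = M.sys.run (M.init x) o := by
  induction o using Ordinal.limitRecOn with
  | zero => rw [Sys.run_zero, snap_def, if_pos rfl]
  | add_one o ih => rw [Sys.run_add_one, snap_add_one, ih]
  | limit o ho ih =>
    rw [Sys.run_limit _ _ ho, snap_limit _ _ ho]
    congr 1
    funext i n
    exact Sys.limsupBit_congr ho.bot_lt fun γ _ hγ => by rw [ih γ hγ]

theorem haltsAt_iff_firstHalt (M : Machine) (x : R) (o : Ordinal) :
    M.haltsAt x o ↔ M.sys.FirstHalt (M.init x) o := by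
  simp only [haltsAt, haltedAt, snap_eq_run]
  rfl

end Machine
end ITTM

namespace ITTM

/-- A one-tape machine whose cells hold a bit for each element of the finite set `J`, with a
single state `start` for the start and for limit stages. -/
structure Track where
  Q : Type
  J : Type
  finQ : Fintype Q
  finJ : Fintype J
  nonemptyJ : Nonempty J
  start : Q
  halt : Q
  trans : Q → (J → Bool) → Q × (J → Bool) × Bool

namespace Track

variable (T : Track)

/-- A configuration of a track machine. -/
@[ext] structure Cfg where
  state : T.Q
  head : ℕ
  cell : ℕ → T.J → Bool

/-- The head position after a move. -/
def move (d : Bool) (n : ℕ) : ℕ := if d then n + 1 else n - 1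

/-- One step of a track machine. -/
def next (c : T.Cfg) : T.Cfg :=
  let t := T.trans c.state (c.cell c.head)
  ⟨t.1, move t.2.2 c.head, Function.update c.cell c.head t.2.1⟩

/-- The transfinite system given by a track machine. -/
abbrev sys : Sys where
  X := T.Cfg
  I := T.J × ℕ
  step := T.next
  bit c i := c.cell i.2 i.1
  lim b := ⟨T.start, 0, fun n j => b (j, n)⟩
  halted c := c.state = T.halt

/-- The configuration of a track machine on a blank tape. -/
def blank : T.Cfg := ⟨T.start, 0, fun _ _ => false⟩

/-- The number of tracks. -/
noncomputable def width : ℕ := letI := T.finJ; Fintype.card T.J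

theorem width_pos : 0 < T.width := letI := T.finJ; letI := T.nonemptyJ; Fintype.card_pos

/-- The number of a track. -/
noncomputable def ix (j : T.J) : ℕ := letI := T.finJ; (Fintype.equivFin T.J j : ℕ)

theorem ix_lt (j : T.J) : T.ix j < T.width := letI := T.finJ; (Fintype.equivFin T.J j).2

/-- The track with a given number. -/
noncomputable def track (l : ℕ) : T.J :=
  letI := T.finJ
  if h : l < T.width then (Fintype.equivFin T.J).symm ⟨l, h⟩ else T.nonemptyJ.some

@[simp] theorem track_ix (j : T.J) : T.track (T.ix j) = j := by
  rw [track, dif_pos (T.ix_lt j)]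
  simp [ix]

theorem ix_track {l : ℕ} (h : l < T.width) : T.ix (T.track l) = l := by
  rw [track, dif_pos h]
  simp [ix]

/-- Phases of the simulation of one step of a track machine. -/
inductive Phase
  | read
  | back
  | go
  deriving DecidableEq

instance : Fintype Phase := ⟨{.read, .back, .go}, by rintro ⟨⟩ <;> simp⟩

/-- States of the machine simulating a track machine: a phase, the state of the track machine,
a column of bits, a direction and a counter. -/
abbrev State : Type := Phase × T.Q × (T.J → Bool) × Bool × Fin (T.width + 1)

noncomputable instance : Fintype T.State :=
  letI := T.finQ
  letI := T.finJ
  inferInstance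

/-- The state at the beginning of the simulation of a step. -/
noncomputable def ready (q : T.Q) : T.State := (.read, q, fun _ => false, false, 0)

/-- Go on moving `k` times in direction `d`. -/
noncomputable def goOn (q : T.Q) (d : Bool) (k : ℕ) : T.State :=
  if k = 0 then T.ready q else (.go, q, fun _ => false, d, Fin.ofNat _ k)

/-- The transition function of the simulating machine on its first tape: a column is read from
left to right, its new contents are written from right to left, and then the head moves to the
next column. -/
noncomputable def pstep : T.State → Bool → T.State × Bool × Bool
  | (.read, q, w, _, l), b =>
    let w' := Function.update w (T.track l) b
    if (l : ℕ) + 1 < T.width then ((.read, q, w', false, Fin.ofNat _ (l + 1)), b, true)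
    else
      let t := T.trans q w'
      ((.back, t.1, t.2.1, t.2.2, Fin.ofNat _ T.width), b, true)
  | (.back, q, w, d, l), b =>
    if (l : ℕ) = 0 then (T.goOn q d (T.width - 1), w (T.track l), d)
    else ((.back, q, w, d, Fin.ofNat _ (l - 1)),
      if (l : ℕ) < T.width then w (T.track l) else b, false)
  | (.go, q, _, d, l), b => (T.goOn q d (l - 1), b, d)

theorem card_state : Fintype.card T.State = Fintype.card T.State - 1 + 1 :=
  (Nat.succ_pred_eq_of_pos (Fintype.card_pos_iff.2 ⟨T.ready T.start⟩)).symm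

/-- The numbering of the states of the simulating machine. -/
noncomputable def num : T.State ≃ Fin (Fintype.card T.State - 1 + 1) :=
  (Fintype.equivFin T.State).trans (finCongr T.card_state)

/-- The machine simulating a track machine. -/
noncomputable def toMachine : Machine where
  Q := Fintype.card T.State - 1
  start := T.num (T.ready T.start)
  limit := T.num (T.ready T.start)
  halt := T.num (T.ready T.halt)
  trans p :=
    let t := T.pstep (T.num.symm p.1) (p.2 0)
    (T.num t.1, fun i => if i = 0 then t.2.1 else p.2 i, t.2.2)

/-- The configuration of the simulating machine. -/
noncomputable def conf (s : T.State) (h : ℕ) (t : Fin 3 → ℕ → Bool) : T.toMachine.sys.X :=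
  ⟨T.num s, h, t⟩

/-- Writing a bit on the first tape. -/
def put (t : Fin 3 → ℕ → Bool) (h : ℕ) (b : Bool) : Fin 3 → ℕ → Bool :=
  fun i n => if i = 0 ∧ n = h then b else t i n

theorem step_conf (s : T.State) (h : ℕ) (t : Fin 3 → ℕ → Bool) :
    T.toMachine.sys.step (T.conf s h t) =
      T.conf (T.pstep s (t 0 h)).1 (move (T.pstep s (t 0 h)).2.2 h)
        (put t h (T.pstep s (t 0 h)).2.1) := by
  simp only [Machine.stepSnap, conf, toMachine, move, Equiv.symm_apply_apply,
    Snapshot.mk.injEq, true_and]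
  funext i n
  by_cases hi : i = 0 <;> by_cases hn : n = h <;> simp [put, hi, hn]

theorem not_halted_conf {s : T.State} {h : ℕ} {t : Fin 3 → ℕ → Bool} (hs : s ≠ T.ready T.halt) :
    ¬ T.toMachine.sys.halted (T.conf s h t) := by
  simpa [conf, toMachine] using hs

@[simp] theorem put_self (t : Fin 3 → ℕ → Bool) (h : ℕ) : put t h (t 0 h) = t := by
  funext i n
  simp only [put]
  split_ifs with h
  · rw [h.1, h.2]
  · rfl

theorem val_ofNat {l : ℕ} (h : l ≤ T.width) : (Fin.ofNat (T.width + 1) l : ℕ) = l := by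
  simp [Nat.mod_eq_of_lt (Nat.lt_succ_of_le h)]

section Paths

variable (P : T.toMachine.sys.X → Prop)

theorem path_go {q : T.Q} {d : Bool} {t : Fin 3 → ℕ → Bool}
    (hP : ∀ l h, P (T.conf (.go, q, fun _ => false, d, l) h t)) (k : ℕ) (hk : k < T.width) (h : ℕ) :
    T.toMachine.sys.Path P (T.conf (T.goOn q d k) h t) (T.conf (T.ready q) ((move d)^[k] h) t) := by
  induction k generalizing h with
  | zero => exact .refl _
  | succ k ih =>
    have e : T.goOn q d (k + 1) = (.go, q, fun _ => false, d, Fin.ofNat _ (k + 1)) := by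
      simp [goOn]
    rw [e]
    refine .head (hP _ _) ?_
    rw [step_conf]
    simp only [pstep, T.val_ofNat hk.le, Nat.add_sub_cancel, put_self]
    exact ih (by omega) _

theorem iterate_move_true (k h : ℕ) : (move true)^[k] h = h + k := by
  induction k generalizing h with
  | zero => rfl
  | succ k ih => rw [Function.iterate_succ_apply, ih]; simp [move]; omega

theorem iterate_move_false (k h : ℕ) : (move false)^[k] h = h - k := by
  induction k generalizing h with
  | zero => rfl
  | succ k ih => rw [Function.iterate_succ_apply, ih]; simp [move]; omega

theorem iterate_move_mul (d : Bool) (n k : ℕ) : (move d)^[k] (n * k) = move d n * k := by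
  cases d
  · rw [iterate_move_false]; simp [move, Nat.sub_mul]
  · rw [iterate_move_true]; simp [move, Nat.add_mul]

/-- The tape after the tracks from `l` on of column `n` have been overwritten with `w`. -/
noncomputable def written (t : Fin 3 → ℕ → Bool) (n : ℕ) (w : T.J → Bool) (l : ℕ) :
    Fin 3 → ℕ → Bool := fun i m =>
  if i = 0 ∧ n * T.width + l ≤ m ∧ m < n * T.width + T.width then w (T.track (m - n * T.width))
  else t i m

theorem written_width (t : Fin 3 → ℕ → Bool) (n : ℕ) (w : T.J → Bool) :
    T.written t n w T.width = t := by
  funext i m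
  rw [written, if_neg (by omega)]

theorem put_written (t : Fin 3 → ℕ → Bool) (n : ℕ) (w : T.J → Bool) {l : ℕ} (hl : l < T.width) :
    put (T.written t n w (l + 1)) (n * T.width + l) (w (T.track l)) = T.written t n w l := by
  funext i m
  simp only [put, written]
  by_cases hi : i = 0
  · rcases lt_trichotomy m (n * T.width + l) with h | rfl | h
    · simp [hi, h.ne, show ¬ (n * T.width + l ≤ m) by omega,
        show ¬ (n * T.width + (l + 1) ≤ m) by omega]
    · simp [hi, hl]
    · simp [hi, h.ne', show n * T.width + l ≤ m by omega,
        show n * T.width + (l + 1) ≤ m by omega]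
  · simp [hi]

theorem path_back {q : T.Q} {w : T.J → Bool} {d : Bool} {t : Fin 3 → ℕ → Bool} {n : ℕ}
    (hb : ∀ l l' h, P (T.conf (.back, q, w, d, l) h (T.written t n w l')))
    (hg : ∀ l h, P (T.conf (.go, q, fun _ => false, d, l) h (T.written t n w 0)))
    (l : ℕ) (hl : l < T.width) :
    T.toMachine.sys.Path P
      (T.conf (.back, q, w, d, Fin.ofNat _ l) (n * T.width + l) (T.written t n w (l + 1)))
      (T.conf (T.ready q) (move d n * T.width) (T.written t n w 0)) := by
  induction l with
  | zero =>
    refine .head (hb _ _ _) ?_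
    rw [step_conf]
    have e : put (T.written t n w (0 + 1)) (n * T.width) (w (T.track 0)) = _ :=
      T.put_written t n w (l := 0) hl
    simp only [pstep, T.val_ofNat hl.le, if_true, add_zero, e]
    have := T.path_go P hg (T.width - 1) (by omega) (move d (n * T.width))
    rwa [← Function.iterate_succ_apply, show (T.width - 1).succ = T.width by omega,
      iterate_move_mul] at this
  | succ l ih =>
    refine .head (hb _ _ _) ?_
    rw [step_conf]
    simp only [pstep, T.val_ofNat hl.le, if_neg (Nat.succ_ne_zero l), if_pos hl,
      T.put_written t n w hl, Nat.add_sub_cancel]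
    exact ih (by omega)

theorem path_read {q : T.Q} {t : Fin 3 → ℕ → Bool} {n : ℕ}
    (hP : ∀ w l h, P (T.conf (.read, q, w, false, l) h t)) (k : ℕ) (l : ℕ)
    (hl : l + k + 1 = T.width) (w : T.J → Bool)
    (hw : ∀ j, T.ix j < l → w j = t 0 (n * T.width + T.ix j)) :
    T.toMachine.sys.Path P (T.conf (.read, q, w, false, Fin.ofNat _ l) (n * T.width + l) t)
      (T.conf (.back, (T.trans q fun j => t 0 (n * T.width + T.ix j)).1,
        (T.trans q fun j => t 0 (n * T.width + T.ix j)).2.1,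
        (T.trans q fun j => t 0 (n * T.width + T.ix j)).2.2, Fin.ofNat _ T.width)
        (n * T.width + T.width) t) := by
  induction k generalizing l w with
  | zero =>
    refine .head (hP _ _ _) ?_
    rw [step_conf]
    have e : Function.update w (T.track l) (t 0 (n * T.width + l)) =
        fun j => t 0 (n * T.width + T.ix j) := by
      funext j
      by_cases hj : j = T.track l
      · rw [hj, Function.update_self, T.ix_track (by omega)]
      · rw [Function.update_of_ne hj]
        refine hw j (lt_of_le_of_ne ?_ ?_)
        · have := T.ix_lt j
          omega
        · rintro rfl
          simp at hj
    simp only [pstep, T.val_ofNat (show l ≤ T.width by omega),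
      if_neg (show ¬ l + 1 < T.width by omega), put_self, e, move, if_true]
    rw [show n * T.width + l + 1 = n * T.width + T.width by omega]
    exact .refl _
  | succ k ih =>
    refine .head (hP _ _ _) ?_
    rw [step_conf]
    simp only [pstep, T.val_ofNat (show l ≤ T.width by omega),
      if_pos (show l + 1 < T.width by omega), put_self, move, if_true]
    refine ih (l + 1) (by omega) _ fun j hj => ?_
    by_cases hjl : j = T.track l
    · rw [hjl, Function.update_self, T.ix_track (by omega)]
    · rw [Function.update_of_ne hjl]
      refine hw j (lt_of_le_of_ne (Nat.le_of_lt_succ hj) ?_)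
      rintro rfl
      simp at hjl

end Paths

theorem written_cell (t : Fin 3 → ℕ → Bool) (n : ℕ) (w : T.J → Bool) (l m : ℕ) (j : T.J) :
    T.written t n w l 0 (m * T.width + T.ix j) =
      if m = n ∧ l ≤ T.ix j then w j else t 0 (m * T.width + T.ix j) := by
  have hj := T.ix_lt j
  rw [written]
  by_cases h : m = n
  · subst h
    simp [hj]
  · rw [if_neg, if_neg (by tauto)]
    rintro ⟨-, h1, h2⟩
    apply h
    rcases lt_trichotomy m n with h | h | h
    · have : (m + 1) * T.width ≤ n * T.width := Nat.mul_le_mul_right _ h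
      rw [Nat.add_mul] at this
      omega
    · exact h
    · have : (n + 1) * T.width ≤ m * T.width := Nat.mul_le_mul_right _ h
      rw [Nat.add_mul] at this
      omega

/-- The simulation of a track machine by an infinite time Turing machine. -/
noncomputable def sim : Sys.Sim T.sys T.toMachine.sys T.blank (T.toMachine.init zeroR) where
  rep x y := ∃ t, y = T.conf (T.ready x.state) (x.head * T.width) t ∧
    ∀ n j, t 0 (n * T.width + T.ix j) = x.cell n j
  idx i := (0, i.2 * T.width + T.ix i.1)
  flags := ∅
  bit_eq := by
    rintro x _ ⟨t, rfl, ht⟩ ⟨j, n⟩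
    exact ht n j
  start := by
    refine ⟨0, ?_, by simp⟩
    rw [Sys.run_zero]
    refine ⟨fun i n => if i = 0 then zeroR n else false, ?_, ?_⟩
    · simp [Machine.init, conf, blank]
      rfl
    · simp [zeroR, blank]
  step := by
    rintro x _ ⟨t, rfl, ht⟩ hx
    set q := x.state with hq
    set n := x.head with hn
    set w := (T.trans q (x.cell n)).2.1 with hw
    have hcol : (fun j => t 0 (n * T.width + T.ix j)) = x.cell n := by
      funext j
      exact ht n j
    have hnew : ∀ m j, T.written t n w 0 0 (m * T.width + T.ix j) = (T.next x).cell m j := by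
      intro m j
      rw [written_cell, next]
      by_cases h : m = n
      · subst h
        simp [hw, hn, hq]
      · rw [if_neg (by tauto), ht]
        exact (congrFun (Function.update_of_ne h _ _) j).symm
    let P : T.toMachine.sys.X → Prop := fun y => ¬ T.toMachine.sys.halted y ∧
      ∀ i : T.J × ℕ, y.tape 0 (i.2 * T.width + T.ix i.1) = x.cell i.2 i.1 ∨
        y.tape 0 (i.2 * T.width + T.ix i.1) = (T.next x).cell i.2 i.1
    have hwr : ∀ l m j, T.written t n w l 0 (m * T.width + T.ix j) = x.cell m j ∨
        T.written t n w l 0 (m * T.width + T.ix j) = (T.next x).cell m j := by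
      intro l m j
      rw [← hnew, ← ht, written_cell, written_cell]
      by_cases h : m = n ∧ l ≤ T.ix j
      · simp [h]
      · simp [h]
    have hread : ∀ w l h, P (T.conf (.read, q, w, false, l) h t) := by
      refine fun w l h => ⟨T.not_halted_conf ?_, fun i => Or.inl (ht _ _)⟩
      intro h
      exact hx (by simpa [ready] using congrArg (fun s => s.2.1) h)
    have hback : ∀ q d l l' h, P (T.conf (.back, q, w, d, l) h (T.written t n w l')) := by
      refine fun q d l l' h => ⟨T.not_halted_conf ?_, fun i => hwr _ _ _⟩
      simp [ready]
    have hgo : ∀ q d l h, P (T.conf (.go, q, fun _ => false, d, l) h (T.written t n w 0)) := by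
      refine fun q d l h => ⟨T.not_halted_conf ?_, fun i => hwr _ _ _⟩
      simp [ready]
    have hpos := T.width_pos
    obtain ⟨k, hk⟩ : ∃ k, T.width = k + 1 := ⟨T.width - 1, by omega⟩
    have p1 := T.path_read P (n := n) hread k 0 (by omega) (fun _ => false) (by simp)
    rw [hcol] at p1
    have p2 := T.path_back P (q := (T.trans q (x.cell n)).1) (d := (T.trans q (x.cell n)).2.2)
      (hback _ _) (hgo _ _) k (by omega)
    have p3 : T.toMachine.sys.step (T.conf (.back, (T.trans q (x.cell n)).1,
        w, (T.trans q (x.cell n)).2.2, Fin.ofNat _ T.width)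
        (n * T.width + T.width) t) = T.conf (.back, (T.trans q (x.cell n)).1, w,
          (T.trans q (x.cell n)).2.2, Fin.ofNat _ k) (n * T.width + k)
          (T.written t n w (k + 1)) := by
      rw [step_conf]
      have e1 : T.width - 1 = k := by omega
      have e2 : n * T.width + T.width - 1 = n * T.width + k := by omega
      simp only [pstep, T.val_ofNat le_rfl, if_neg hpos.ne', lt_irrefl, if_false, put_self, move,
        Bool.false_eq_true, e1, e2]
      rw [← hk, written_width]
    obtain ⟨h1, h2⟩ := p1.head_of_ne fun h => by
      have := congrArg Snapshot.head h
      simp [conf, hpos.ne'] at this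
    obtain ⟨ν, h0, h3, h4⟩ := Sys.Path.exists_ordinal_pos h1 (h2.trans (.head (by
      simpa [written_width] using hback (T.trans q (x.cell n)).1 (T.trans q (x.cell n)).2.2
        (Fin.ofNat _ T.width) T.width (n * T.width + T.width)) (p3 ▸ p2)))
    refine ⟨ν, h0, ?_, h4, by simp⟩
    exact ⟨_, h3, hnew⟩
  limit b _ := by
    refine ⟨0, ?_, by simp⟩
    rw [Sys.run_zero]
    exact ⟨fun i n => b (i, n), by simp [conf]; rfl, fun _ _ => rfl⟩
  halt := by
    rintro x _ ⟨t, rfl, ht⟩ hx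
    refine ⟨0, ?_, by simp⟩
    rw [Sys.run_zero]
    simpa [conf, toMachine, ready] using hx

end Track
end ITTM

namespace ITTM

/-- Instructions of a stack machine with memory. The memory cell that is accessed is the one
whose address is the height of a distinguished stack. -/
inductive SInstr (Q K Γ : Type)
  | jump (q : Q)
  | push (k : K) (s : Γ) (q : Q)
  | pop (k : K) (f : Option Γ → Q)
  | load (f : Bool → Q)
  | store (b : Bool) (q : Q)

/-- A machine with finitely many stacks and a memory of bits. At limit stages the stacks are
emptied and the control returns to the start state. -/
structure SMachine where
  Q : Type
  K : Type
  Γ : Type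
  finQ : Fintype Q
  finK : Fintype K
  finΓ : Fintype Γ
  start : Q
  halt : Q
  pos : K
  instr : Q → SInstr Q K Γ

namespace SMachine

variable (S : SMachine)

/-- A configuration of a stack machine. -/
structure Cfg where
  state : S.Q
  stk : S.K → List S.Γ
  mem : ℕ → Bool

/-- One step of a stack machine. -/
noncomputable def next (c : S.Cfg) : S.Cfg :=
  match S.instr c.state with
  | .jump q => ⟨q, c.stk, c.mem⟩
  | .push k s q => ⟨q, Function.update c.stk k (s :: c.stk k), c.mem⟩
  | .pop k f => ⟨f (c.stk k).head?, Function.update c.stk k (c.stk k).tail, c.mem⟩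
  | .load f => ⟨f (c.mem (c.stk S.pos).length), c.stk, c.mem⟩
  | .store b q => ⟨q, c.stk, Function.update c.mem (c.stk S.pos).length b⟩

/-- The transfinite system given by a stack machine. -/
noncomputable abbrev sys : Sys where
  X := S.Cfg
  I := ℕ
  step := S.next
  bit c n := c.mem n
  lim b := ⟨S.start, fun _ => [], b⟩
  halted c := c.state = S.halt

/-- The initial configuration of a stack machine with empty memory. -/
def blank : S.Cfg := ⟨S.start, fun _ => [], fun _ => false⟩

/-- The tracks used to store the memory and the stacks: two flags, the memory, and for every
stack and every symbol a track marking the occurrences of the symbol in the stack. -/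
inductive Trk (K Γ : Type)
  | dirty
  | origin
  | mem
  | sym (k : K) (s : Γ)

instance {K Γ : Type} [Finite K] [Finite Γ] : Finite (Trk K Γ) :=
  Finite.of_surjective (fun x : Option (Option (Option (K × Γ))) => match x with
    | none => Trk.dirty
    | some none => Trk.origin
    | some (some none) => Trk.mem
    | some (some (some (k, s))) => Trk.sym k s) (by
    rintro (_ | _ | _ | ⟨k, s⟩)
    · exact ⟨none, rfl⟩
    · exact ⟨some none, rfl⟩
    · exact ⟨some (some none), rfl⟩
    · exact ⟨some (some (some (k, s))), rfl⟩)

/-- Modes of the simulation of a stack machine. -/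
inductive Mode
  | clean
  | sweep
  | home
  | seek
  | act
  | ret
  deriving DecidableEq

instance : Fintype Mode :=
  ⟨{.clean, .sweep, .home, .seek, .act, .ret}, by rintro ⟨⟩ <;> simp⟩

/-- Contents of a cell. -/
abbrev Col : Type := Trk S.K S.Γ → Bool

/-- The symbol of stack `k` in a cell. -/
noncomputable def symbol (w : S.Col) (k : S.K) : Option S.Γ :=
  if h : ∃ s, w (.sym k s) = true then some h.choose else none

/-- Change the symbol of stack `k` in a cell. -/
noncomputable def setSymbol (w : S.Col) (k : S.K) (o : Option S.Γ) : S.Col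
  | .sym k' s => if k' = k then decide (o = some s) else w (.sym k' s)
  | j => w j

/-- The stack that determines the cell where an instruction is executed. -/
def target : SInstr S.Q S.K S.Γ → S.K
  | .push k _ _ => k
  | .pop k _ => k
  | _ => S.pos

/-- A cell in which everything but the memory is erased. -/
def erased (w : S.Col) (dirty : Bool) : S.Col
  | .mem => w .mem
  | .dirty => dirty
  | _ => false

/-- The transition function of the track machine simulating a stack machine. -/
noncomputable def ttrans : Mode × S.Q → S.Col → (Mode × S.Q) × S.Col × Bool
  | (.clean, q), w =>
    if w .dirty = true ∧ w .origin = false then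
      ((.home, S.start), Function.update (Function.update w .dirty false) .origin true, false)
    else ((.sweep, q), S.erased w true, true)
  | (.sweep, q), w => ((.sweep, q), S.erased w false, true)
  | (.home, q), w =>
    match S.instr q with
    | .jump q' => ((.home, q'), w, false)
    | _ => ((.seek, q), w, false)
  | (.seek, q), w =>
    if S.symbol w (S.target (S.instr q)) ≠ none then ((.seek, q), w, true)
    else match S.instr q with
      | .jump _ => ((.seek, q), w, true)
      | .push k s q' => ((.ret, q'), S.setSymbol w k (some s), false)
      | .pop _ _ => ((.act, q), w, false)
      | .load f => ((.ret, f (w .mem)), w, false)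
      | .store b q' => ((.ret, q'), Function.update w .mem b, false)
  | (.act, q), w =>
    match S.instr q with
    | .pop k f => ((.ret, f (S.symbol w k)), S.setSymbol w k none, false)
    | _ => ((.act, q), w, false)
  | (.ret, q), w => if w .origin then ((.home, q), w, false) else ((.ret, q), w, false)

/-- The track machine simulating a stack machine. -/
noncomputable def toTrack : Track where
  Q := Mode × S.Q
  J := Trk S.K S.Γ
  finQ := letI := S.finQ; inferInstance
  finJ := letI := S.finK; letI := S.finΓ; Fintype.ofFinite _
  nonemptyJ := ⟨.mem⟩
  start := (.clean, S.start)
  halt := (.home, S.halt)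
  trans := S.ttrans

/-- The configuration of the simulating track machine. -/
def conf (m : Mode) (q : S.Q) (h : ℕ) (t : ℕ → S.Col) : S.toTrack.sys.X := ⟨(m, q), h, t⟩

theorem step_conf (m : Mode) (q : S.Q) (h : ℕ) (t : ℕ → S.Col) :
    S.toTrack.sys.step (S.conf m q h t) =
      S.conf (S.ttrans (m, q) (t h)).1.1 (S.ttrans (m, q) (t h)).1.2
        (Track.move (S.ttrans (m, q) (t h)).2.2 h)
        (Function.update t h (S.ttrans (m, q) (t h)).2.1) := rfl

/-- The tape contents representing a configuration of the stack machine. -/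
noncomputable def tape (c : S.Cfg) (n : ℕ) : S.Col
  | .dirty => false
  | .origin => decide (n = 0)
  | .mem => c.mem n
  | .sym k s => decide ((c.stk k).reverse[n]? = some s)

theorem symbol_eq (w : S.Col) (k : S.K) (o : Option S.Γ)
    (h : ∀ s, w (.sym k s) = decide (o = some s)) : S.symbol w k = o := by
  rw [symbol]
  cases o with
  | none => rw [dif_neg]; simp [h]
  | some s =>
    have h' : ∃ s, w (.sym k s) = true := ⟨s, by simp [h]⟩
    rw [dif_pos h']
    have := h'.choose_spec
    rw [h] at this
    simpa using (of_decide_eq_true this).symm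

@[simp] theorem symbol_tape (c : S.Cfg) (n : ℕ) (k : S.K) :
    S.symbol (S.tape c n) k = (c.stk k).reverse[n]? :=
  S.symbol_eq _ _ _ fun _ => rfl

theorem path_seek {P : S.toTrack.sys.X → Prop} {c : S.Cfg} {q : S.Q} {k : S.K}
    (hP : ∀ h, P (S.conf .seek q h (S.tape c))) (hk : S.target (S.instr q) = k)
    (n : ℕ) (hn : n ≤ (c.stk k).length) :
    S.toTrack.sys.Path P (S.conf .seek q 0 (S.tape c)) (S.conf .seek q n (S.tape c)) := by
  induction n with
  | zero => exact .refl _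
  | succ n ih =>
    have h := (ih (by omega)).tail (hP n)
    rw [step_conf] at h
    have : S.symbol (S.tape c n) (S.target (S.instr q)) ≠ none := by
      rw [hk, symbol_tape, ne_eq, List.getElem?_eq_none_iff]
      simp
      omega
    simpa only [ttrans, if_pos this, Function.update_eq_self, Track.move, if_true] using h

theorem path_ret {P : S.toTrack.sys.X → Prop} {t : ℕ → S.Col} {q : S.Q}
    (hP : ∀ h, P (S.conf .ret q h t)) (ht : ∀ n, t n .origin = decide (n = 0)) (n : ℕ) :
    S.toTrack.sys.Path P (S.conf .ret q n t) (S.conf .home q 0 t) := by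
  induction n with
  | zero =>
    have h := Sys.Path.single (hP 0)
    rw [step_conf] at h
    simpa [ttrans, ht, Track.move] using h
  | succ n ih =>
    refine .head (hP _) ?_
    rw [step_conf]
    simpa [ttrans, ht, Track.move] using ih

theorem setSymbol_tape {c : S.Cfg} {k : S.K} {n : ℕ} {o : Option S.Γ} {l : List S.Γ} {q : S.Q}
    (h : ∀ m, l.reverse[m]? = if m = n then o else (c.stk k).reverse[m]?) :
    Function.update (S.tape c) n (S.setSymbol (S.tape c n) k o) =
      S.tape ⟨q, Function.update c.stk k l, c.mem⟩ := by
  funext m j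
  by_cases hm : m = n
  · subst hm
    rw [Function.update_self]
    cases j with
    | sym k' s =>
      simp only [setSymbol, tape]
      by_cases hk : k' = k
      · subst hk
        simp only [Function.update_self, h, if_true]
      · simp only [Function.update_of_ne hk, if_neg hk]
    | _ => rfl
  · rw [Function.update_of_ne hm]
    cases j with
    | sym k' s =>
      simp only [tape]
      by_cases hk : k' = k
      · subst hk
        simp only [Function.update_self, h, if_neg hm]
      · simp only [Function.update_of_ne hk]
    | _ => rfl

theorem store_tape (c : S.Cfg) (n : ℕ) (b : Bool) (q : S.Q) :
    Function.update (S.tape c) n (Function.update (S.tape c n) .mem b) =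
      S.tape ⟨q, c.stk, Function.update c.mem n b⟩ := by
  funext m j
  by_cases hm : m = n
  · subst hm
    rw [Function.update_self]
    cases j with
    | mem => simp [tape]
    | _ => rw [Function.update_of_ne (by simp)]; rfl
  · rw [Function.update_of_ne hm]
    cases j with
    | mem => simp [tape, hm]
    | _ => rfl

theorem not_halted_conf {m : Mode} {q : S.Q} {h : ℕ} {t : ℕ → S.Col}
    (hm : m = .home → q ≠ S.halt) : ¬ S.toTrack.sys.halted (S.conf m q h t) := by
  intro h
  cases h
  exact hm rfl rfl

/-- The tape after the cleaning sweep has treated the first `n` cells. -/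
noncomputable def swept (t : ℕ → S.Col) (n m : ℕ) : S.Col :=
  if m < n then S.erased (t m) (decide (m = 0)) else t m

theorem update_swept (t : ℕ → S.Col) (n : ℕ) :
    Function.update (S.swept t n) n (S.erased (t n) (decide (n = 0))) = S.swept t (n + 1) := by
  funext m
  rcases lt_trichotomy m n with h | rfl | h
  · rw [Function.update_of_ne h.ne, swept, swept, if_pos h, if_pos (by omega)]
  · simp [swept]
  · rw [Function.update_of_ne h.ne', swept, swept, if_neg (by omega), if_neg (by omega)]

theorem run_sweep {q : S.Q} {t : ℕ → S.Col} (ht : ¬ (t 0 .dirty = true ∧ t 0 .origin = false))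
    (n : ℕ) : S.toTrack.sys.run (S.conf .clean q 0 t) ((n + 1 : ℕ) : Ordinal) =
      S.conf .sweep q (n + 1) (S.swept t (n + 1)) := by
  induction n with
  | zero =>
    rw [← Sys.run_step, Nat.cast_zero, Sys.run_zero, step_conf]
    simp only [ttrans, if_neg ht, Track.move, if_true, zero_add]
    rw [← update_swept]
    rfl
  | succ n ih =>
    rw [Nat.cast_succ, Sys.run_add_one, ih, step_conf]
    simp only [ttrans, Track.move, if_true]
    rw [← update_swept S t (n + 1)]
    simp [swept]

/-- Cleaning the tape after a limit stage. -/
theorem run_clean {t : ℕ → S.Col} (ht : ¬ (t 0 .dirty = true ∧ t 0 .origin = false)) :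
    S.toTrack.sys.run (S.conf .clean S.start 0 t) (Ordinal.omega0 + 1) =
      S.conf .home S.start 0 (S.tape ⟨S.start, fun _ => [], fun n => t n .mem⟩) ∧
    ∀ ζ < Ordinal.omega0 + 1, ¬ S.toTrack.sys.halted (S.toTrack.sys.run (S.conf .clean S.start 0 t) ζ) ∧
      ∀ n, (S.toTrack.sys.run (S.conf .clean S.start 0 t) ζ).cell n .mem = t n .mem := by
  have hω : S.toTrack.sys.run (S.conf .clean S.start 0 t) Ordinal.omega0 =
      S.conf .clean S.start 0 fun n => S.erased (t n) (decide (n = 0)) := by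
    rw [Sys.run_limit _ _ Ordinal.isSuccLimit_omega0]
    refine Track.Cfg.ext rfl rfl ?_
    funext n j
    refine Sys.limsupBit_of_eventually (Ordinal.natCast_lt_omega0 (n + 1)) fun γ h1 h2 => ?_
    obtain ⟨m, rfl⟩ := Ordinal.lt_omega0.1 h2
    have h3 : n + 1 ≤ m := by exact_mod_cast h1
    obtain ⟨m, rfl⟩ : ∃ l, m = l + 1 := ⟨m - 1, by omega⟩
    rw [S.run_sweep ht]
    simp only [conf, swept]
    rw [if_pos (by omega)]
  constructor
  · rw [Sys.run_add_one, hω, step_conf]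
    simp only [ttrans, erased, decide_true, and_self, if_true, Track.move]
    congr 1
    funext n j
    by_cases hn : n = 0
    · subst hn
      rw [Function.update_self]
      cases j <;> simp [tape, Function.update, erased]
    · rw [Function.update_of_ne hn]
      cases j <;> simp [tape, erased, hn]
  · intro ζ hζ
    rcases (Order.lt_add_one_iff.1 hζ).lt_or_eq with h | rfl
    · obtain ⟨m, rfl⟩ := Ordinal.lt_omega0.1 h
      cases m with
      | zero =>
        rw [Nat.cast_zero, Sys.run_zero]
        exact ⟨S.not_halted_conf (by simp), fun n => rfl⟩
      | succ m =>
        rw [S.run_sweep ht]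
        refine ⟨S.not_halted_conf (by simp), fun n => ?_⟩
        simp only [conf, swept]
        split_ifs <;> rfl
    · rw [hω]
      exact ⟨S.not_halted_conf (by simp), fun n => rfl⟩

theorem path_next {c : S.Cfg} {P : S.toTrack.sys.X → Prop}
    (hold : ∀ m q h, m ≠ .home → P (S.conf m q h (S.tape c)))
    (hnew : ∀ m q h, m ≠ .home → P (S.conf m q h (S.tape (S.next c)))) :
    S.toTrack.sys.Path P (S.toTrack.sys.step (S.conf .home c.state 0 (S.tape c)))
      (S.conf .home (S.next c).state 0 (S.tape (S.next c))) := by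
  have horig : ∀ n, S.tape (S.next c) n .origin = decide (n = 0) := fun n => rfl
  have hret : ∀ q n, S.toTrack.sys.Path P (S.conf .ret q n (S.tape (S.next c)))
      (S.conf .home q 0 (S.tape (S.next c))) := fun q n =>
    S.path_ret (fun h => hnew _ _ _ (by simp)) horig n
  have hseek : ∀ k, S.target (S.instr c.state) = k → S.toTrack.sys.Path P
      (S.conf .seek c.state 0 (S.tape c))
      (S.conf .seek c.state (c.stk k).length (S.tape c)) := fun k hk =>
    S.path_seek (fun h => hold _ _ _ (by simp)) hk _ le_rfl
  have hsym : ∀ k, S.symbol (S.tape c (c.stk k).length) k = none := fun k => by simp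
  cases hi : S.instr c.state with
  | jump q =>
    rw [step_conf]
    simp only [ttrans, hi, Track.move, next, Function.update_eq_self]
    exact .refl _
  | push k s q =>
    have e : Function.update (S.tape c) (c.stk k).length
        (S.setSymbol (S.tape c (c.stk k).length) k (some s)) = S.tape (S.next c) := by
      rw [next, hi]
      refine S.setSymbol_tape fun m => ?_
      rw [List.reverse_cons]
      rcases lt_trichotomy m (c.stk k).length with h | rfl | h
      · rw [List.getElem?_append_left (by simpa using h), if_neg h.ne]
      · simp
      · rw [if_neg h.ne', List.getElem?_eq_none (by simp; omega),
          List.getElem?_eq_none (by simp; omega)]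
    rw [step_conf]
    simp only [ttrans, hi, Track.move, Function.update_eq_self]
    refine (hseek k (by simp [hi, target])).trans (.head (hold _ _ _ (by simp)) ?_)
    rw [step_conf]
    simp only [ttrans, hi, target, hsym, ne_eq, not_true_eq_false, if_false, e]
    have hq : (S.next c).state = q := by rw [next, hi]
    rw [hq]
    exact hret _ _
  | pop k f =>
    have e : Function.update (S.tape c) ((c.stk k).length - 1)
        (S.setSymbol (S.tape c ((c.stk k).length - 1)) k none) = S.tape (S.next c) := by
      rw [next, hi]
      refine S.setSymbol_tape fun m => ?_
      cases c.stk k with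
      | nil => simp
      | cons s l =>
        simp only [List.tail_cons, List.length_cons, Nat.add_sub_cancel, List.reverse_cons]
        rcases lt_trichotomy m l.length with h | rfl | h
        · rw [List.getElem?_append_left (by simpa using h), if_neg h.ne]
        · simp
        · rw [if_neg h.ne', List.getElem?_eq_none (by simp; omega),
            List.getElem?_eq_none (by simp; omega)]
    have e' : S.symbol (S.tape c ((c.stk k).length - 1)) k = (c.stk k).head? := by
      rw [symbol_tape]
      cases c.stk k with
      | nil => simp
      | cons s l => simp
    rw [step_conf]
    simp only [ttrans, hi, Track.move, Function.update_eq_self]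
    refine (hseek k (by simp [hi, target])).trans (.head (hold _ _ _ (by simp)) ?_)
    rw [step_conf]
    simp only [ttrans, hi, target, hsym, ne_eq, not_true_eq_false, if_false,
      Function.update_eq_self, Track.move, Bool.false_eq_true]
    refine .head (hold _ _ _ (by simp)) ?_
    rw [step_conf]
    simp only [ttrans, hi, e, e']
    have hq : (S.next c).state = f (c.stk k).head? := by rw [next, hi]
    rw [hq]
    exact hret _ _
  | load f =>
    have e : S.tape c = S.tape (S.next c) := by
      rw [next, hi]
      rfl
    rw [step_conf]
    simp only [ttrans, hi, Track.move, Function.update_eq_self]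
    refine (hseek S.pos (by simp [hi, target])).trans (.head (hold _ _ _ (by simp)) ?_)
    rw [step_conf]
    simp only [ttrans, hi, target, hsym, ne_eq, not_true_eq_false, if_false,
      Function.update_eq_self]
    have hq : (S.next c).state = f (S.tape c (c.stk S.pos).length .mem) := by
      rw [next, hi]
      rfl
    rw [hq, e]
    exact hret _ _
  | store b q =>
    have e : Function.update (S.tape c) (c.stk S.pos).length
        (Function.update (S.tape c (c.stk S.pos).length) .mem b) = S.tape (S.next c) := by
      rw [next, hi]
      exact S.store_tape _ _ _ _
    rw [step_conf]
    simp only [ttrans, hi, Track.move, Function.update_eq_self]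
    refine (hseek S.pos (by simp [hi, target])).trans (.head (hold _ _ _ (by simp)) ?_)
    rw [step_conf]
    simp only [ttrans, hi, target, hsym, ne_eq, not_true_eq_false, if_false, e]
    have hq : (S.next c).state = q := by rw [next, hi]
    rw [hq]
    exact hret _ _

/-- The simulation of a stack machine by a track machine. -/
noncomputable def sim : Sys.Sim S.sys S.toTrack.sys S.blank S.toTrack.blank where
  rep x y := y = S.conf .home x.state 0 (S.tape x)
  idx n := (.mem, n)
  flags := {(.origin, 0)}
  bit_eq := by
    rintro x _ rfl n
    rfl
  start := by
    have := S.run_clean (t := fun _ _ => false) (by simp)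
    exact ⟨_, this.1, fun ζ hζ => (this.2 ζ hζ).1⟩
  step := by
    rintro x _ rfl hx
    have h : ¬ S.toTrack.sys.halted (S.conf .home x.state 0 (S.tape x)) :=
      S.not_halted_conf fun _ => hx
    have hp := S.path_next (c := x) (P := fun y => ¬ S.toTrack.sys.halted y ∧
        ∀ i, S.toTrack.sys.bit y (.mem, i) = x.mem i ∨
          S.toTrack.sys.bit y (.mem, i) = (S.next x).mem i)
      (fun m q h hm => ⟨S.not_halted_conf fun h => absurd h hm, fun i => Or.inl rfl⟩)
      (fun m q h hm => ⟨S.not_halted_conf fun h => absurd h hm, fun i => Or.inr rfl⟩)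
    obtain ⟨ν, h0, h1, h2⟩ := Sys.Path.exists_ordinal_pos ⟨h, fun i => Or.inl rfl⟩ hp
    refine ⟨ν, h0, h1, h2, fun f hf => ⟨0, h0, ?_⟩⟩
    rw [Set.mem_singleton_iff] at hf
    rw [hf, Sys.run_zero]
    rfl
  limit b hb := by
    have := S.run_clean (t := fun n j => b (j, n)) (by
      have := hb _ rfl
      simp [this])
    exact ⟨_, this.1, this.2⟩
  halt := by
    rintro x _ rfl hx
    refine ⟨0, ?_, by simp⟩
    rw [Sys.run_zero]
    simp only at hx
    rw [hx]
    rfl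

end SMachine
end ITTM

namespace ITTM

/-- A controller whose internal state is a natural number and whose head moves on a memory of
bits. Depending on its state and the bit under its head, it moves right (`0`), moves left (`1`),
writes a zero (`2`), writes a one (`3`) or halts (`4`). -/
structure Ctrl where
  op : ℕ → Bool → Fin 5
  nxt : ℕ → Bool → ℕ
  op_prim : Primrec₂ op
  nxt_prim : Primrec₂ nxt

namespace Ctrl

/-- A configuration of a controller. -/
structure Cfg where
  state : ℕ
  head : ℕ
  mem : ℕ → Bool

/-- The effect of an operation on the head position. -/
def moveHead (j : Fin 5) (h : ℕ) : ℕ :=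
  if j = 0 then h + 1 else if j = 1 then h - 1 else h

/-- The effect of an operation on the memory. -/
noncomputable def write (j : Fin 5) (h : ℕ) (m : ℕ → Bool) : ℕ → Bool :=
  if j = 2 then Function.update m h false else if j = 3 then Function.update m h true else m

variable (A : Ctrl)

/-- The transfinite system given by a controller. -/
noncomputable abbrev sys : Sys where
  X := Cfg
  I := ℕ
  step c := ⟨A.nxt c.state (c.mem c.head), moveHead (A.op c.state (c.mem c.head)) c.head,
    write (A.op c.state (c.mem c.head)) c.head c.mem⟩
  bit c n := c.mem n
  lim b := ⟨0, 0, b⟩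
  halted c := A.op c.state (c.mem c.head) = 4

/-- The initial configuration with empty memory. -/
def blank : Cfg := ⟨0, 0, fun _ => false⟩

open Turing Turing.PartrecToTM2 Turing.ToPartrec

/-- Bits as numbers. -/
def bitNat (b : Bool) : ℕ := if b then 1 else 0

/-- Operations are coded by numbers whose binary digits are all one. -/
def opNat (j : Fin 5) : ℕ := 2 ^ (j : ℕ) - 1

theorem exists_code₂ {f : ℕ → ℕ → ℕ} (hf : Primrec₂ f) :
    ∃ c : Code, ∀ m n, c.eval [m, n] = pure [f m n] := by
  obtain ⟨c, hc⟩ := Code.exists_code (Nat.Partrec'.of_prim ((Nat.Primrec'.prim_iff₂).2 hf).to_prim)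
  refine ⟨c, fun m n => ?_⟩
  have h := hc (m ::ᵥ n ::ᵥ List.Vector.nil)
  exact h.trans (by simp)

theorem exists_code : ∃ c : Code, ∀ s b,
    c.eval [bitNat b, s] = pure [opNat (A.op s b), A.nxt s b] := by
  have hb : Primrec fun p : ℕ × ℕ => decide (p.1 = 1) :=
    (Primrec.eq.comp Primrec.fst (Primrec.const 1)).decide
  obtain ⟨c₁, h₁⟩ := exists_code₂ (f := fun b s => opNat (A.op s (decide (b = 1))))
    ((Primrec.dom_finite opNat).comp (A.op_prim.comp Primrec.snd hb))
  obtain ⟨c₂, h₂⟩ := exists_code₂ (f := fun b s => A.nxt s (decide (b = 1)))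
    (A.nxt_prim.comp Primrec.snd hb)
  refine ⟨Code.cons c₁ c₂, fun s b => ?_⟩
  simp only [Code.eval, h₁, h₂]
  cases b <;> simp [bitNat]

/-- A program computing the transition function of a controller. -/
noncomputable def code : Code := A.exists_code.choose

theorem code_eval (s : ℕ) (b : Bool) :
    A.code.eval [bitNat b, s] = pure [opNat (A.op s b), A.nxt s b] :=
  A.exists_code.choose_spec s b

/-- The labels of the program computing the transition function. -/
noncomputable def labels : Finset Λ' := codeSupp A.code Cont'.halt

/-- The statements of the program computing the transition function. -/
noncomputable def stmts : Finset (Option (TM2.Stmt (fun _ : K' => Γ') Λ' (Option Γ'))) :=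
  TM2.stmts tr A.labels

/-- The control states of the stack machine simulating a controller. -/
inductive St (T : Type)
  | init
  | loop
  | arg (b : Bool)
  | one
  | tm (q : T) (v : Option Γ')
  | unpop (k : K') (s : Γ') (q : T) (v : Option Γ')
  | parse (j : Fin 5)
  | exec (j : Fin 5)

instance : Fintype K' := ⟨{.main, .rev, .aux, .stack}, by rintro ⟨⟩ <;> simp⟩

instance {T : Type} [Finite T] : Finite (St T) :=
  Finite.of_surjective (fun x : Option (Option (Option (Bool ⊕ (T × Option Γ') ⊕
      (K' × Γ' × T × Option Γ') ⊕ Fin 5 ⊕ Fin 5))) => match x with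
    | none => St.init
    | some none => St.loop
    | some (some none) => St.one
    | some (some (some (.inl b))) => St.arg b
    | some (some (some (.inr (.inl (q, v))))) => St.tm q v
    | some (some (some (.inr (.inr (.inl (k, s, q, v)))))) => St.unpop k s q v
    | some (some (some (.inr (.inr (.inr (.inl j)))))) => St.parse j
    | some (some (some (.inr (.inr (.inr (.inr j)))))) => St.exec j) (by
    rintro (_ | _ | b | _ | ⟨q, v⟩ | ⟨k, s, q, v⟩ | j | j)
    exacts [⟨none, rfl⟩, ⟨some none, rfl⟩, ⟨some (some (some (.inl b))), rfl⟩,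
      ⟨some (some none), rfl⟩, ⟨some (some (some (.inr (.inl (q, v))))), rfl⟩,
      ⟨some (some (some (.inr (.inr (.inl (k, s, q, v)))))), rfl⟩,
      ⟨some (some (some (.inr (.inr (.inr (.inl j)))))), rfl⟩,
      ⟨some (some (some (.inr (.inr (.inr (.inr j)))))), rfl⟩])

/-- The control state for executing a statement. -/
noncomputable def stm (q : TM2.Stmt (fun _ : K' => Γ') Λ' (Option Γ')) (v : Option Γ') :
    St A.stmts :=
  if h : some q ∈ A.stmts then .tm ⟨some q, h⟩ v else .init

/-- The control state for pushing back a symbol before executing a statement. -/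
noncomputable def pushBack (k : K') (o : Option Γ')
    (q : TM2.Stmt (fun _ : K' => Γ') Λ' (Option Γ')) (v : Option Γ') : St A.stmts :=
  match o with
  | none => A.stm q v
  | some s => if h : some q ∈ A.stmts then .unpop k s ⟨some q, h⟩ v else .init

/-- The instruction that executes the first action of a statement. -/
noncomputable def stmtInstr (v : Option Γ') :
    Option (TM2.Stmt (fun _ : K' => Γ') Λ' (Option Γ')) → SInstr (St A.stmts) (Option K') Γ'
  | none => .jump .init
  | some (.push k f q) => .push (some k) (f v) (A.stm q v)
  | some (.peek k f q) => .pop (some k) fun o => A.pushBack k o q (f v o)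
  | some (.pop k f q) => .pop (some k) fun o => A.stm q (f v o)
  | some (.load f q) => .jump (A.stm q (f v))
  | some (.branch f q₁ q₂) => .jump (cond (f v) (A.stm q₁ v) (A.stm q₂ v))
  | some (.goto l) => .jump (A.stm (tr (l v)) v)
  | some .halt => .jump (.parse 0)

/-- The instructions of the stack machine simulating a controller. -/
noncomputable def instr : St A.stmts → SInstr (St A.stmts) (Option K') Γ'
  | .init => .push (some .main) .cons .loop
  | .loop => .load .arg
  | .arg b => .push (some .main) .cons (if b then .one
      else A.stm (tr (trNormal A.code Cont'.halt)) none)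
  | .one => .push (some .main) .bit1 (A.stm (tr (trNormal A.code Cont'.halt)) none)
  | .tm q v => A.stmtInstr v q.1
  | .unpop k s q v => .push (some k) s (.tm q v)
  | .parse j => .pop (some .main) fun o => if o = some .bit1 then .parse (j + 1) else .exec j
  | .exec j =>
    if j = 0 then .push none .cons .loop
    else if j = 1 then .pop none fun _ => .loop
    else if j = 2 then .store false .loop
    else if j = 3 then .store true .loop
    else .jump .loop

/-- The stack machine simulating a controller. -/
noncomputable def toSMachine : SMachine where
  Q := St A.stmts
  K := Option K'
  Γ := Γ'
  finQ := Fintype.ofFinite _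
  finK := inferInstance
  finΓ := inferInstance
  start := .init
  halt := .exec 4
  pos := none
  instr := A.instr

/-- The contents of all stacks of the simulating machine. -/
def allStk (p : List Γ') (S : K' → List Γ') : Option K' → List Γ'
  | none => p
  | some k => S k

theorem update_allStk_some (inst : DecidableEq (Option K')) (p : List Γ') (S : K' → List Γ')
    (k : K') (l : List Γ') :
    @Function.update _ _ inst (allStk p S) (some k) l = allStk p (Function.update S k l) := by
  funext k'
  cases k' with
  | none => rw [Function.update_of_ne (by simp)]; rfl
  | some k' =>
    by_cases h : k' = k
    · subst h
      rw [Function.update_self, allStk, Function.update_self]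
    · rw [Function.update_of_ne (by simpa using h), allStk, allStk, Function.update_of_ne h]

theorem update_allStk_none (inst : DecidableEq (Option K')) (p : List Γ') (S : K' → List Γ')
    (l : List Γ') : @Function.update _ _ inst (allStk p S) none l = allStk l S := by
  funext k'
  cases k' with
  | none => rw [Function.update_self]; rfl
  | some k' => rw [Function.update_of_ne (by simp)]; rfl

/-- Configurations of the simulating machine. -/
noncomputable def cfg (q : St A.stmts) (p : List Γ') (S : K' → List Γ') (m : ℕ → Bool) :
    A.toSMachine.Cfg :=
  ⟨q, allStk p S, m⟩

theorem next_push {q q' : St A.stmts} {k : K'} {s : Γ'} (h : A.instr q = .push (some k) s q')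
    (p : List Γ') (S : K' → List Γ') (m : ℕ → Bool) :
    A.toSMachine.next (A.cfg q p S m) = A.cfg q' p (Function.update S k (s :: S k)) m := by
  have h' : A.toSMachine.instr (A.cfg q p S m).state = .push (some k) s q' := h
  rw [SMachine.next, h']
  exact congrArg (fun t => (⟨q', t, m⟩ : A.toSMachine.Cfg)) (update_allStk_some _ p S k _)

theorem next_pop {q : St A.stmts} {f : Option Γ' → St A.stmts} {k : K'}
    (h : A.instr q = .pop (some k) f) (p : List Γ') (S : K' → List Γ') (m : ℕ → Bool) :
    A.toSMachine.next (A.cfg q p S m) =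
      A.cfg (f (S k).head?) p (Function.update S k (S k).tail) m := by
  have h' : A.toSMachine.instr (A.cfg q p S m).state = .pop (some k) f := h
  rw [SMachine.next, h']
  exact congrArg (fun t => (⟨f (S k).head?, t, m⟩ : A.toSMachine.Cfg))
    (update_allStk_some _ p S k _)

theorem next_jump {q q' : St A.stmts} (h : A.instr q = .jump q')
    (p : List Γ') (S : K' → List Γ') (m : ℕ → Bool) :
    A.toSMachine.next (A.cfg q p S m) = A.cfg q' p S m := by
  have h' : A.toSMachine.instr (A.cfg q p S m).state = .jump q' := h
  rw [SMachine.next, h']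
  rfl

/-- The condition imposed on all intermediate configurations while computing a transition. -/
def Quiet (m : ℕ → Bool) (c : A.toSMachine.Cfg) : Prop :=
  c.state ≠ A.toSMachine.halt ∧ c.mem = m

theorem quiet_cfg {q : St A.stmts} (hq : q ≠ .exec 4) (p : List Γ') (S : K' → List Γ')
    (m : ℕ → Bool) : A.Quiet m (A.cfg q p S m) :=
  ⟨hq, rfl⟩

variable {A}

theorem path_push {q q' : St A.stmts} {k : K'} {s : Γ'} {p : List Γ'} {S : K' → List Γ'}
    {m : ℕ → Bool} {z : A.toSMachine.Cfg} (h : A.instr q = .push (some k) s q') (hq : q ≠ .exec 4)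
    (hz : A.toSMachine.sys.Path (A.Quiet m) (A.cfg q' p (Function.update S k (s :: S k)) m) z) :
    A.toSMachine.sys.Path (A.Quiet m) (A.cfg q p S m) z :=
  .head_eq (A.quiet_cfg hq ..) (A.next_push h p S m) hz

theorem path_pop {q : St A.stmts} {f : Option Γ' → St A.stmts} {k : K'} {p : List Γ'}
    {S : K' → List Γ'} {m : ℕ → Bool} {z : A.toSMachine.Cfg}
    (h : A.instr q = .pop (some k) f) (hq : q ≠ .exec 4)
    (hz : A.toSMachine.sys.Path (A.Quiet m)
      (A.cfg (f (S k).head?) p (Function.update S k (S k).tail) m) z) :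
    A.toSMachine.sys.Path (A.Quiet m) (A.cfg q p S m) z :=
  .head_eq (A.quiet_cfg hq ..) (A.next_pop h p S m) hz

theorem path_jump {q q' : St A.stmts} {p : List Γ'} {S : K' → List Γ'}
    {m : ℕ → Bool} {z : A.toSMachine.Cfg} (h : A.instr q = .jump q') (hq : q ≠ .exec 4)
    (hz : A.toSMachine.sys.Path (A.Quiet m) (A.cfg q' p S m) z) :
    A.toSMachine.sys.Path (A.Quiet m) (A.cfg q p S m) z :=
  .head_eq (A.quiet_cfg hq ..) (A.next_jump h p S m) hz

variable (A)

/-- The configuration of the simulating machine that corresponds to a configuration of the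
program computing the transition function. -/
noncomputable def trCfg (p : List Γ') (m : ℕ → Bool) (c : Cfg') : A.toSMachine.Cfg :=
  A.cfg (match c.l with
    | none => .parse 0
    | some l => A.stm (tr l) c.var) p c.stk m

theorem stm_eq {q : TM2.Stmt (fun _ : K' => Γ') Λ' (Option Γ')} (h : some q ∈ A.stmts)
    (v : Option Γ') : A.stm q v = .tm ⟨some q, h⟩ v := by
  rw [stm, dif_pos h]

theorem mem_stmts_of_mem_labels {l : Λ'} (h : l ∈ A.labels) : some (tr l) ∈ A.stmts := by
  exact Finset.some_mem_insertNone.2 (Finset.mem_biUnion.2 ⟨l, h, TM2.stmts₁_self⟩)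

theorem supports : @TM2.Supports _ _ _ _ ⟨trNormal A.code Cont'.halt⟩ tr A.labels :=
  tr_supports A.code Cont'.halt

theorem path_stmt {q : TM2.Stmt (fun _ : K' => Γ') Λ' (Option Γ')} (hq : some q ∈ A.stmts)
    (p : List Γ') (m : ℕ → Bool) (v : Option Γ') (S : K' → List Γ') :
    A.toSMachine.sys.Path (A.Quiet m) (A.cfg (A.stm q v) p S m)
      (A.trCfg p m (TM2.stepAux q v S)) := by
  induction q generalizing v S with
  | push k f q ih =>
    have hq' : some q ∈ A.stmts := TM2.stmts_trans (by simp [TM2.stmts₁, TM2.stmts₁_self]) hq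
    rw [A.stm_eq hq]
    exact path_push rfl (by simp) (ih hq' v _)
  | peek k f q ih =>
    have hq' : some q ∈ A.stmts := TM2.stmts_trans (by simp [TM2.stmts₁, TM2.stmts₁_self]) hq
    rw [A.stm_eq hq]
    refine path_pop rfl (by simp) ?_
    refine .trans ?_ (ih hq' _ _)
    rcases hS : S k with _ | ⟨s, l⟩
    · simp only [List.head?_nil, List.tail_nil, pushBack]
      rw [← hS, Function.update_eq_self]
      exact .refl _
    · simp only [List.head?_cons, List.tail_cons, pushBack, dif_pos hq']
      refine path_push rfl (by simp) ?_
      rw [A.stm_eq hq', Function.update_self, Function.update_idem, ← hS,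
        Function.update_eq_self]
      exact .refl _
  | pop k f q ih =>
    have hq' : some q ∈ A.stmts := TM2.stmts_trans (by simp [TM2.stmts₁, TM2.stmts₁_self]) hq
    rw [A.stm_eq hq]
    exact path_pop rfl (by simp) (ih hq' _ _)
  | load f q ih =>
    have hq' : some q ∈ A.stmts := TM2.stmts_trans (by simp [TM2.stmts₁, TM2.stmts₁_self]) hq
    rw [A.stm_eq hq]
    exact path_jump rfl (by simp) (ih hq' _ _)
  | branch f q₁ q₂ ih₁ ih₂ =>
    have hq₁ : some q₁ ∈ A.stmts := TM2.stmts_trans (by simp [TM2.stmts₁, TM2.stmts₁_self]) hq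
    have hq₂ : some q₂ ∈ A.stmts := TM2.stmts_trans (by simp [TM2.stmts₁, TM2.stmts₁_self]) hq
    rw [A.stm_eq hq, TM2.stepAux]
    refine path_jump rfl (by simp) ?_
    cases f v
    · exact ih₂ hq₂ _ _
    · exact ih₁ hq₁ _ _
  | goto l =>
    rw [A.stm_eq hq]
    exact path_jump rfl (by simp) (.refl _)
  | halt =>
    rw [A.stm_eq hq]
    exact path_jump rfl (by simp) (.refl _)

theorem label_mem_stepAux {q : TM2.Stmt (fun _ : K' => Γ') Λ' (Option Γ')}
    (hq : TM2.SupportsStmt A.labels q) (v : Option Γ') (S : K' → List Γ') {l : Λ'}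
    (hl : (TM2.stepAux q v S).l = some l) : l ∈ A.labels := by
  induction q generalizing v S with
  | push k f q ih => exact ih hq _ _ hl
  | peek k f q ih => exact ih hq _ _ hl
  | pop k f q ih => exact ih hq _ _ hl
  | load f q ih => exact ih hq _ _ hl
  | branch f q₁ q₂ ih₁ ih₂ =>
    rw [TM2.stepAux] at hl
    cases h : f v <;> rw [h] at hl
    · exact ih₂ hq.2 _ _ hl
    · exact ih₁ hq.1 _ _ hl
  | goto f =>
    simp only [TM2.stepAux, Option.some.injEq] at hl
    exact hl ▸ hq v
  | halt => simp [TM2.stepAux] at hl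

theorem path_reaches {c c' : Cfg'} (hc : ∀ l, c.l = some l → l ∈ A.labels)
    (h : StateTransition.Reaches (TM2.step tr) c c') (p : List Γ') (m : ℕ → Bool) :
    A.toSMachine.sys.Path (A.Quiet m) (A.trCfg p m c) (A.trCfg p m c') := by
  induction h using Relation.ReflTransGen.head_induction_on with
  | refl => exact .refl _
  | @head c c₁ h _ ih =>
    rcases c with ⟨_ | l, v, S⟩
    · exact (Option.some_ne_none _ (Eq.symm h)).elim
    · obtain rfl : TM2.stepAux (tr l) v S = c₁ := Option.some.inj h
      have hl := A.supports.2 l (hc l rfl)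
      refine .trans ?_ (ih fun l' hl' => A.label_mem_stepAux hl v S hl')
      exact A.path_stmt (A.mem_stmts_of_mem_labels (hc l rfl)) p m v S

theorem path_code (s : ℕ) (b : Bool) (p : List Γ') (m : ℕ → Bool) :
    A.toSMachine.sys.Path (A.Quiet m)
      (A.cfg (A.stm (tr (trNormal A.code Cont'.halt)) none) p
        (K'.elim (trList [bitNat b, s]) [] [] []) m)
      (A.cfg (.parse 0) p (K'.elim (trList [opNat (A.op s b), A.nxt s b]) [] [] []) m) := by
  have h : PartrecToTM2.halt [opNat (A.op s b), A.nxt s b] ∈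
      StateTransition.eval (TM2.step tr) (PartrecToTM2.init A.code [bitNat b, s]) := by
    rw [tr_eval, code_eval]
    exact Part.mem_map _ (Part.mem_some _)
  refine A.path_reaches (c := PartrecToTM2.init A.code [bitNat b, s]) (fun l hl => ?_)
    (StateTransition.mem_eval.1 h).1 p m
  simp only [PartrecToTM2.init, Option.some.injEq] at hl
  exact hl ▸ codeSupp_self _ _ (trStmts₁_self _)

theorem trNat_opNat (j : Fin 5) : trNat (opNat j) = List.replicate j .bit1 := by
  fin_cases j <;> rfl

theorem path_parse (i j : ℕ) (hj : j + i < 5) (p : List Γ') (m : ℕ → Bool) (l : List Γ') :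
    A.toSMachine.sys.Path (A.Quiet m)
      (A.cfg (.parse (Fin.ofNat 5 j)) p (K'.elim (List.replicate i .bit1 ++ .cons :: l) [] [] []) m)
      (A.cfg (.exec (Fin.ofNat 5 (j + i))) p (K'.elim l [] [] []) m) := by
  induction i generalizing j with
  | zero =>
    refine path_pop rfl (by simp) ?_
    simp only [K'.elim_main, List.replicate_zero, List.nil_append, List.head?_cons, List.tail_cons,
      K'.elim_update_main]
    exact .refl _
  | succ i ih =>
    refine path_pop rfl (by simp) ?_
    simp only [K'.elim_main, List.replicate_succ, List.cons_append, List.head?_cons,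
      List.tail_cons, K'.elim_update_main, if_true]
    have h : Fin.ofNat 5 j + 1 = Fin.ofNat 5 (j + 1) := by
      have : j < 5 := by omega
      interval_cases j <;> rfl
    rw [h, show j + (i + 1) = j + 1 + i by ring]
    exact ih (j + 1) (by omega)

/-- The configurations of the simulating machine in which a step of the controller begins. -/
noncomputable def ready (c : Cfg) : A.toSMachine.Cfg :=
  A.cfg .loop (List.replicate c.head .cons) (K'.elim (trList [c.state]) [] [] []) c.mem

theorem path_exec (c : Cfg) : A.toSMachine.sys.Path (A.Quiet c.mem) (A.ready c)
    (A.cfg (.exec (A.op c.state (c.mem c.head))) (List.replicate c.head .cons)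
      (K'.elim (trList [A.nxt c.state (c.mem c.head)]) [] [] []) c.mem) := by
  set b := c.mem c.head with hb
  have h1 : A.toSMachine.next (A.ready c) = A.cfg (.arg b) (List.replicate c.head .cons)
      (K'.elim (trList [c.state]) [] [] []) c.mem := by
    have h' : A.toSMachine.instr (A.ready c).state = .load .arg := rfl
    rw [SMachine.next, h']
    have : (A.ready c).mem ((A.ready c).stk A.toSMachine.pos).length = b := by
      have : ((A.ready c).stk A.toSMachine.pos).length = c.head := List.length_replicate
      rw [this, hb]
      rfl
    simp only [this]
    rfl
  refine .head_eq (A.quiet_cfg (by simp) ..) h1 ?_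
  refine path_push rfl (by simp) ?_
  have h2 := A.path_code c.state b (List.replicate c.head .cons) c.mem
  have h3 := A.path_parse (A.op c.state b) 0 (by simp) (List.replicate c.head .cons) c.mem
    (trList [A.nxt c.state b])
  have h4 : Fin.ofNat 5 (0 + (A.op c.state b : ℕ)) = A.op c.state b := by
    ext
    simp
  rw [h4, ← trNat_opNat] at h3
  refine .trans ?_ (h2.trans h3)
  cases b
  · simp only [K'.elim_update_main, bitNat]
    exact .refl _
  · refine path_push rfl (by simp) ?_
    simp only [K'.elim_update_main]
    exact .refl _

theorem next_exec (j : Fin 5) (hj : j ≠ 4) (h : ℕ) (S : K' → List Γ') (m : ℕ → Bool) :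
    A.toSMachine.next (A.cfg (.exec j) (List.replicate h .cons) S m) =
      A.cfg .loop (List.replicate (moveHead j h) .cons) S (write j h m) := by
  have e : A.toSMachine.instr (A.cfg (.exec j) (List.replicate h .cons) S m).state =
    A.instr (.exec j) := rfl
  have hlen : ((A.cfg (.exec j) (List.replicate h .cons) S m).stk A.toSMachine.pos).length = h :=
    List.length_replicate
  rw [SMachine.next, e, instr]
  by_cases h0 : j = 0
  · subst h0
    exact congrArg (fun t => (⟨.loop, t, m⟩ : A.toSMachine.Cfg))
      (update_allStk_none _ (List.replicate h .cons) S _)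
  by_cases h1 : j = 1
  · subst h1
    refine congrArg (fun t => (⟨.loop, t, m⟩ : A.toSMachine.Cfg))
      ((update_allStk_none _ (List.replicate h .cons) S _).trans ?_)
    congr 1
    exact List.tail_replicate
  by_cases h2 : j = 2
  · subst h2
    simp only [h0, h1, if_false, if_true, hlen]
    rfl
  by_cases h3 : j = 3
  · subst h3
    simp only [h0, h1, h2, if_false, if_true, hlen]
    rfl
  · omega

theorem path_step {c : Cfg} (hc : ¬ A.sys.halted c) :
    A.Quiet c.mem (A.ready c) ∧ A.toSMachine.sys.Path (A.Quiet c.mem)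
      (A.toSMachine.sys.step (A.ready c)) (A.ready (A.sys.step c)) := by
  obtain ⟨h1, h2⟩ := (A.path_exec c).head_of_ne fun h =>
    St.noConfusion rfl (heq_of_eq (congrArg SMachine.Cfg.state h))
  refine ⟨h1, ?_⟩
  exact h2.trans (.head_eq (A.quiet_cfg (fun h => hc (by simpa using h)) ..)
    (A.next_exec _ hc _ _ _) (.refl _))

theorem path_init (m : ℕ → Bool) : A.toSMachine.sys.Path (A.Quiet m)
    ⟨A.toSMachine.start, fun _ => [], m⟩ (A.ready ⟨0, 0, m⟩) := by
  have h : (⟨A.toSMachine.start, fun _ => [], m⟩ : A.toSMachine.Cfg) =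
      A.cfg .init [] (K'.elim [] [] [] []) m := by
    refine congrArg (fun t => (⟨.init, t, m⟩ : A.toSMachine.Cfg)) ?_
    funext k
    rcases k with _ | _ | _ | _ | _ <;> rfl
  rw [h]
  refine path_push rfl (by simp) ?_
  rw [K'.elim_update_main, ready]
  simp only [trList, trNat_zero]
  exact .refl _

/-- Controllers are simulated by stack machines. -/
noncomputable def sim : Sys.Sim A.sys A.toSMachine.sys blank A.toSMachine.blank where
  rep c d := d = A.ready c
  idx n := n
  flags := ∅
  bit_eq := by
    rintro c _ rfl n
    rfl
  start := by
    obtain ⟨γ, h1, h2⟩ := (A.path_init fun _ => false).exists_ordinal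
    exact ⟨γ, h1, fun ζ hζ => (h2 ζ hζ).1⟩
  step := by
    rintro c _ rfl hc
    obtain ⟨h1, h2⟩ := A.path_step hc
    obtain ⟨ν, h3, h4, h5⟩ := Sys.Path.exists_ordinal_pos h1 h2
    exact ⟨ν, h3, h4, fun ζ hζ => ⟨(h5 ζ hζ).1, fun n => .inl (congrFun (h5 ζ hζ).2 n)⟩, by simp⟩
  limit := by
    intro b _
    obtain ⟨γ, h1, h2⟩ := (A.path_init b).exists_ordinal
    exact ⟨γ, h1, fun ζ hζ => ⟨(h2 ζ hζ).1, fun n => congrFun (h2 ζ hζ).2 n⟩⟩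
  halt := by
    rintro c _ rfl hc
    refine ((A.path_exec c).mono fun y hy => hy.1).exists_firstHalt ?_
    exact congrArg St.exec hc

end Ctrl
end ITTM

namespace ITTM

/-- A machine working on a memory of bits with addresses in `A`. In task number `k` it first
reads bits, one after the other, and then performs finitely many writes and passes to the next
task, remembering the first three bits it has read. -/
structure Task (A : Type) [Primcodable A] where
  ask : ℕ → List Bool → Option A
  ans : ℕ → List Bool → List (A × Bool)
  quits : ℕ → List Bool → Bool
  ask_prim : Primrec₂ ask
  ans_prim : Primrec₂ ans
  quits_prim : Primrec₂ quits

namespace Task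

variable {A : Type} [Primcodable A] (T : Task A)

/-- The internal states: the number of the task, the bits read so far, and the pending writes. -/
abbrev State (A : Type) : Type := ℕ × List Bool × List (A × Bool)

/-- The successor of an internal state when the requested bit is `b`. -/
def advance (s : State A) (b : Bool) : State A :=
  if s.2.2.head?.isSome then (s.1, s.2.1, s.2.2.tail)
  else if (T.ask s.1 s.2.1).isSome then (s.1, s.2.1 ++ [b], [])
  else (s.1 + 1, s.2.1.take 3, T.ans s.1 s.2.1)

/-- The address accessed in an internal state. -/
def address (s : State A) : Option A :=
  (s.2.2.head?.map Prod.fst).or (T.ask s.1 s.2.1)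

/-- The machine stops in this internal state. -/
def done (s : State A) : Bool :=
  !s.2.2.head?.isSome && (!(T.ask s.1 s.2.1).isSome && T.quits s.1 s.2.1)

/-- The bit found at an optional address. -/
def look (m : A → Bool) (o : Option A) : Bool := (o.map m).getD false

/-- Perform the first of a list of writes. -/
noncomputable def writeFirst (m : A → Bool) (w : List (A × Bool)) : A → Bool :=
  match w with
  | [] => m
  | p :: _ => Function.update m p.1 p.2

/-- The transfinite system given by a task machine. -/
noncomputable abbrev sys : Sys where
  X := State A × (A → Bool)
  I := A
  step c := (T.advance c.1 (look c.2 (T.address c.1)), writeFirst c.2 c.1.2.2)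
  bit c a := c.2 a
  lim b := ((0, [], []), b)
  halted c := T.done c.1 = true

/-- The initial configuration with empty memory. -/
def blank : State A × (A → Bool) := ((0, [], []), fun _ => false)

/-- The position of the head required in an internal state. -/
def target (s : State A) (h : ℕ) : ℕ := ((T.address s).map Encodable.encode).getD h

/-- The operation performed by the simulating controller. -/
def ctrlOp (s : State A × ℕ) (b : Bool) : Fin 5 :=
  if s.2 < T.target s.1 s.2 then 0
  else if T.target s.1 s.2 < s.2 then 1
  else if T.done s.1 then 4
  else if ((s.1.2.2.head?.map Prod.snd).getD b) then 3 else 2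

/-- The next state of the simulating controller. -/
def ctrlNxt (s : State A × ℕ) (b : Bool) : State A × ℕ :=
  if s.2 < T.target s.1 s.2 then (s.1, s.2 + 1)
  else if T.target s.1 s.2 < s.2 then (s.1, s.2 - 1)
  else (T.advance s.1 b, s.2)

theorem advance_prim : Primrec₂ T.advance := by
  have h1 : Primrec fun p : State A × Bool => p.1.1 := Primrec.fst.comp Primrec.fst
  have h2 : Primrec fun p : State A × Bool => p.1.2.1 :=
    Primrec.fst.comp (Primrec.snd.comp Primrec.fst)
  have h3 : Primrec fun p : State A × Bool => p.1.2.2 :=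
    Primrec.snd.comp (Primrec.snd.comp Primrec.fst)
  have ha : Primrec fun p : State A × Bool => T.ask p.1.1 p.1.2.1 := T.ask_prim.comp h1 h2
  refine Primrec.ite ?_ (h1.pair (h2.pair (Primrec.list_tail.comp h3)))
    (Primrec.ite ?_ (h1.pair ((Primrec.list_concat.comp h2 Primrec.snd).pair (Primrec.const [])))
      ((Primrec.succ.comp h1).pair ((Primrec.list_take.comp (Primrec.const 3) h2).pair
        (T.ans_prim.comp h1 h2))))
  · exact Primrec.eq.comp (Primrec.option_isSome.comp (Primrec.list_head?.comp h3))
      (Primrec.const true)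
  · exact Primrec.eq.comp (Primrec.option_isSome.comp ha) (Primrec.const true)

theorem address_prim : Primrec T.address := by
  have h2 : Primrec fun p : State A => p.2.1 := Primrec.fst.comp Primrec.snd
  have h3 : Primrec fun p : State A => p.2.2 := Primrec.snd.comp Primrec.snd
  have hfst : Primrec₂ fun (_ : State A) (p : A × Bool) => p.1 := Primrec.fst.comp Primrec.snd
  refine (Primrec.option_orElse.comp (Primrec.option_map (Primrec.list_head?.comp h3)
    hfst)
    (T.ask_prim.comp Primrec.fst h2)).of_eq fun s => ?_
  rw [address]
  cases s.2.2.head? <;> rfl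

theorem done_prim : Primrec T.done := by
  have h2 : Primrec fun p : State A => p.2.1 := Primrec.fst.comp Primrec.snd
  have h3 : Primrec fun p : State A => p.2.2 := Primrec.snd.comp Primrec.snd
  exact Primrec.and.comp (Primrec.not.comp (Primrec.option_isSome.comp
    (Primrec.list_head?.comp h3))) (Primrec.and.comp (Primrec.not.comp
      (Primrec.option_isSome.comp (T.ask_prim.comp Primrec.fst h2)))
      (T.quits_prim.comp Primrec.fst h2))

theorem target_prim : Primrec₂ T.target :=
  Primrec.option_getD.comp (Primrec.option_map (T.address_prim.comp Primrec.fst)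
    (g := fun _ a => Encodable.encode a) (Primrec.encode.comp Primrec.snd)) Primrec.snd

theorem ctrlOp_prim : Primrec₂ T.ctrlOp := by
  have h1 : Primrec fun p : (State A × ℕ) × Bool => p.1.1 := Primrec.fst.comp Primrec.fst
  have h2 : Primrec fun p : (State A × ℕ) × Bool => p.1.2 := Primrec.snd.comp Primrec.fst
  have h3 : Primrec fun p : (State A × ℕ) × Bool => p.1.1.2.2 :=
    Primrec.snd.comp (Primrec.snd.comp h1)
  have ht : Primrec fun p : (State A × ℕ) × Bool => T.target p.1.1 p.1.2 :=
    T.target_prim.comp h1 h2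
  have hsnd : Primrec₂ fun (_ : (State A × ℕ) × Bool) (p : A × Bool) => p.2 :=
    Primrec.snd.comp Primrec.snd
  have hv : Primrec fun p : (State A × ℕ) × Bool =>
      (p.1.1.2.2.head?.map Prod.snd).getD p.2 :=
    Primrec.option_getD.comp (Primrec.option_map (Primrec.list_head?.comp h3) hsnd) Primrec.snd
  have hd : Primrec fun p : (State A × ℕ) × Bool => T.done p.1.1 := T.done_prim.comp h1
  have e1 : PrimrecPred fun p : (State A × ℕ) × Bool => p.1.2 < T.target p.1.1 p.1.2 :=
    Primrec.nat_lt.comp h2 ht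
  have e2 : PrimrecPred fun p : (State A × ℕ) × Bool => T.target p.1.1 p.1.2 < p.1.2 :=
    Primrec.nat_lt.comp ht h2
  have e3 : PrimrecPred fun p : (State A × ℕ) × Bool => T.done p.1.1 = true :=
    Primrec.eq.comp hd (Primrec.const true)
  have e4 : PrimrecPred fun p : (State A × ℕ) × Bool =>
      (p.1.1.2.2.head?.map Prod.snd).getD p.2 = true :=
    Primrec.eq.comp hv (Primrec.const true)
  have f (i : Fin 5) : Primrec fun _ : (State A × ℕ) × Bool => i := Primrec.const i
  exact Primrec.ite e1 (f 0) (Primrec.ite e2 (f 1) (Primrec.ite e3 (f 4)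
    (Primrec.ite e4 (f 3) (f 2))))

theorem ctrlNxt_prim : Primrec₂ T.ctrlNxt := by
  have h1 : Primrec fun p : (State A × ℕ) × Bool => p.1.1 := Primrec.fst.comp Primrec.fst
  have h2 : Primrec fun p : (State A × ℕ) × Bool => p.1.2 := Primrec.snd.comp Primrec.fst
  have ht : Primrec fun p : (State A × ℕ) × Bool => T.target p.1.1 p.1.2 :=
    T.target_prim.comp h1 h2
  exact Primrec.ite (Primrec.nat_lt.comp h2 ht) (h1.pair (Primrec.succ.comp h2))
    (Primrec.ite (Primrec.nat_lt.comp ht h2) (h1.pair (Primrec.pred.comp h2))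
      ((T.advance_prim.comp h1 Primrec.snd).pair h2))

/-- The controller simulating a task machine. -/
noncomputable def toCtrl : Ctrl where
  op n b := ((Encodable.decode (α := State A × ℕ) n).map fun s => T.ctrlOp s b).getD 4
  nxt n b := ((Encodable.decode (α := State A × ℕ) n).map fun s =>
    Encodable.encode (T.ctrlNxt s b)).getD 0
  op_prim := Primrec.option_getD.comp (Primrec.option_map (Primrec.decode.comp Primrec.fst)
    (T.ctrlOp_prim.comp Primrec.snd (Primrec.snd.comp Primrec.fst))) (Primrec.const 4)
  nxt_prim := Primrec.option_getD.comp (Primrec.option_map (Primrec.decode.comp Primrec.fst)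
    (Primrec.encode.comp (T.ctrlNxt_prim.comp Primrec.snd (Primrec.snd.comp Primrec.fst))))
    (Primrec.const 0)

/-- A configuration of the simulating controller. -/
def ctrlCfg (s : State A) (h : ℕ) (m : ℕ → Bool) : Ctrl.Cfg := ⟨Encodable.encode (s, h), h, m⟩

theorem toCtrl_step (s : State A) (h : ℕ) (m : ℕ → Bool) :
    T.toCtrl.sys.step (ctrlCfg s h m) = ⟨Encodable.encode (T.ctrlNxt (s, h) (m h)),
      Ctrl.moveHead (T.ctrlOp (s, h) (m h)) h, Ctrl.write (T.ctrlOp (s, h) (m h)) h m⟩ := by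
  simp only [ctrlCfg, toCtrl, Encodable.encodek, Option.map_some, Option.getD_some]

theorem toCtrl_halted (s : State A) (h : ℕ) (m : ℕ → Bool) :
    T.toCtrl.sys.halted (ctrlCfg s h m) ↔ T.ctrlOp (s, h) (m h) = 4 := by
  simp only [ctrlCfg, toCtrl, Encodable.encodek, Option.map_some, Option.getD_some]

theorem path_seek (s : State A) (h : ℕ) (m : ℕ → Bool) :
    T.toCtrl.sys.Path (fun c => ¬ T.toCtrl.sys.halted c ∧ c.mem = m) (ctrlCfg s h m)
      (ctrlCfg s (T.target s h) m) := by
  rcases ha : T.address s with _ | a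
  · simp only [target, ha]
    exact .refl _
  have ht : ∀ h, T.target s h = Encodable.encode a := fun h => by simp [target, ha]
  rw [ht]
  generalize Encodable.encode a = t at ht
  have up : ∀ d h, h + d = t → T.toCtrl.sys.Path
      (fun c => ¬ T.toCtrl.sys.halted c ∧ c.mem = m) (ctrlCfg s h m) (ctrlCfg s t m) := by
    intro d
    induction d with
    | zero =>
      rintro h rfl
      exact .refl _
    | succ d ih =>
      intro h hd
      have hlt : h < t := by omega
      refine .head_eq ⟨?_, rfl⟩ ?_ (ih (h + 1) (by omega))
      · rw [toCtrl_halted, ctrlOp, if_pos (by rwa [ht])]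
        decide
      · rw [toCtrl_step, ctrlOp, ctrlNxt, if_pos (by rwa [ht]), if_pos (by rwa [ht])]
        rfl
  have down : ∀ d h, t + d = h → T.toCtrl.sys.Path
      (fun c => ¬ T.toCtrl.sys.halted c ∧ c.mem = m) (ctrlCfg s h m) (ctrlCfg s t m) := by
    intro d
    induction d with
    | zero =>
      rintro h rfl
      exact .refl _
    | succ d ih =>
      intro h hd
      have hlt : t < h := by omega
      refine .head_eq ⟨?_, rfl⟩ ?_ (ih (h - 1) (by omega))
      · rw [toCtrl_halted, ctrlOp, if_neg (by rw [ht]; omega), if_pos (by rwa [ht])]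
        decide
      · rw [toCtrl_step, ctrlOp, ctrlNxt, if_neg (by rw [ht]; omega), if_pos (by rwa [ht]),
          if_neg (by rw [ht]; omega), if_pos (by rwa [ht])]
        rfl
  rcases le_total h t with h1 | h1
  · exact up (t - h) h (by omega)
  · exact down (h - t) h (by omega)

theorem target_target (s : State A) (h : ℕ) : T.target s (T.target s h) = T.target s h := by
  rw [target, target]
  cases T.address s <;> rfl

/-- Task machines are simulated by controllers. -/
noncomputable def sim : Sys.Sim T.sys T.toCtrl.sys blank Ctrl.blank where
  rep c d := ∃ h m, d = ctrlCfg c.1 h m ∧ ∀ a, m (Encodable.encode a) = c.2 a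
  idx a := Encodable.encode a
  flags := ∅
  bit_eq := by
    rintro c _ ⟨h, m, rfl, hm⟩ a
    exact hm a
  start := ⟨0, ⟨0, fun _ => false, by rw [Sys.run_zero]; rfl, fun a => rfl⟩, by simp⟩
  step := by
    rintro ⟨s, m'⟩ _ ⟨h, m, rfl, hm⟩ hc
    replace hm : ∀ a, m (Encodable.encode a) = m' a := hm
    replace hc : ¬ T.done s = true := hc
    have h1 := T.path_seek s h m
    set t := T.target s h with ht
    have htt : T.target s t = t := T.target_target s h
    have hrep : (T.toCtrl.sys.step (ctrlCfg s t m)) = ctrlCfg (T.advance s (m t)) t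
        (Ctrl.write (T.ctrlOp (s, t) (m t)) t m) := by
      rw [toCtrl_step, ctrlNxt, if_neg (by simp [htt]), if_neg (by simp [htt]), ctrlOp,
        if_neg (by simp [htt]), if_neg (by simp [htt]), if_neg hc]
      split <;> rfl
    have hwrite : Ctrl.write (T.ctrlOp (s, t) (m t)) t m =
        Function.update m t ((s.2.2.head?.map Prod.snd).getD (m t)) := by
      rw [ctrlOp, if_neg (by simp [htt]), if_neg (by simp [htt]), if_neg hc]
      split <;> rename_i hv
      · rw [hv]
        rfl
      · rw [Bool.not_eq_true] at hv
        rw [hv]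
        rfl
    have hlook : T.advance s (m t) = T.advance s (look m' (T.address s)) := by
      rcases ha : T.address s with _ | a
      · have := ha
        rw [address, Option.or_eq_none_iff, Option.map_eq_none_iff] at this
        simp [advance, this]
      · have : t = Encodable.encode a := by rw [ht, target, ha]; rfl
        rw [this, hm]
        rfl
    have hmem : ∀ a, Function.update m t ((s.2.2.head?.map Prod.snd).getD (m t))
        (Encodable.encode a) = writeFirst m' s.2.2 a := by
      intro a
      rcases hw : s.2.2 with _ | ⟨p, w⟩
      · simp [writeFirst, hm]
      · have : t = Encodable.encode p.1 := by simp [ht, target, address, hw]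
        rw [this, writeFirst, Function.update_apply, Function.update_apply]
        simp [hm]
    have hhalt : ¬ T.toCtrl.sys.halted (ctrlCfg s t m) := by
      rw [toCtrl_halted, ctrlOp, if_neg (by simp [htt]), if_neg (by simp [htt]), if_neg hc]
      split <;> decide
    obtain ⟨ν, hν, hrun, hbefore⟩ := h1.exists_ordinal_step ⟨hhalt, rfl⟩
    refine ⟨ν, hν, ⟨t, Function.update m t ((s.2.2.head?.map Prod.snd).getD (m t)), ?_, hmem⟩,
      fun ζ hζ => ⟨(hbefore ζ hζ).1, fun a => .inl ?_⟩, by simp⟩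
    · rw [hwrite, hlook] at hrep
      exact hrun.trans hrep
    · exact (congrFun (hbefore ζ hζ).2 _).trans (hm a)
  limit := by
    intro b _
    exact ⟨0, ⟨0, b, by rw [Sys.run_zero]; rfl, fun a => rfl⟩, by simp⟩
  halt := by
    rintro ⟨s, m'⟩ _ ⟨h, m, rfl, hm⟩ hc
    replace hc : T.done s = true := hc
    refine ((T.path_seek s h m).mono fun y hy => hy.1).exists_firstHalt ?_
    have htt := T.target_target s h
    rw [toCtrl_halted, ctrlOp, if_neg (by simp [htt]), if_neg (by simp [htt]), if_pos hc]

end Task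
end ITTM

namespace ITTM

namespace Sys

/-- An infinite sequence of finite paths is traversed by a run. -/
theorem exists_chain {S : Sys} (c : ℕ → S.X) (P : ℕ → S.X → Prop) (h0 : ∀ k, P k (c k))
    (h : ∀ k, S.Path (P k) (S.step (c k)) (c (k + 1))) :
    ∃ τ : ℕ → ℕ, StrictMono τ ∧ τ 0 = 0 ∧ (∀ k, S.run (c 0) (τ k : ℕ) = c k) ∧
      ∀ k n, τ k ≤ n → n < τ (k + 1) → P k (S.run (c 0) (n : ℕ)) := by
  have h1 : ∀ k, ∃ n : ℕ, 0 < n ∧ S.run (c k) (n : ℕ) = c (k + 1) ∧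
      ∀ m < n, P k (S.run (c k) (m : ℕ)) := by
    intro k
    obtain ⟨n, hn, hb⟩ := (h k).exists_nat
    refine ⟨n + 1, n.succ_pos, by rw [← run_step, hn], fun m hm => ?_⟩
    cases m with
    | zero => simpa using h0 k
    | succ m =>
      rw [← run_step]
      exact hb m (by omega)
  choose ν hpos hrun hbefore using h1
  obtain ⟨τ, hτ0, hτ⟩ : ∃ τ : ℕ → ℕ, τ 0 = 0 ∧ ∀ k, τ (k + 1) = τ k + ν k :=
    ⟨fun k => Nat.rec 0 (fun k t => t + ν k) k, rfl, fun k => rfl⟩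
  have hc : ∀ k, S.run (c 0) (τ k : ℕ) = c k := by
    intro k
    induction k with
    | zero => simp [hτ0]
    | succ k ih => rw [hτ, Nat.cast_add, run_add, ih, hrun]
  refine ⟨τ, strictMono_nat_of_lt_succ fun k => by rw [hτ]; have := hpos k; omega, hτ0, hc,
    fun k n hk hn => ?_⟩
  obtain ⟨m, rfl⟩ := Nat.exists_eq_add_of_le hk
  rw [Nat.cast_add, run_add, hc]
  exact hbefore k m (by rw [hτ] at hn; omega)

end Sys

theorem exists_between_of_strictMono {τ : ℕ → ℕ} (hτ : StrictMono τ) {k₀ n : ℕ} (h : τ k₀ ≤ n) :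
    ∃ k, k₀ ≤ k ∧ τ k ≤ n ∧ n < τ (k + 1) := by
  by_contra! H
  have h1 : ∀ d, τ (k₀ + d) ≤ n := by
    intro d
    induction d with
    | zero => exact h
    | succ d ih => exact H (k₀ + d) (by omega) ih
  have := hτ.le_apply (x := k₀ + (n + 1))
  have := h1 (n + 1)
  omega

namespace Task

variable {A : Type} [Primcodable A] (T : Task A)

/-- Task `k`, having read the bits `l`, reads from the memory `m` until it has the bits `l'`. -/
inductive Reads (k : ℕ) (m : A → Bool) : List Bool → List Bool → Prop
  | done {l : List Bool} (h : T.ask k l = none) : Reads k m l l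
  | ask {l l' : List Bool} {a : A} (h : T.ask k l = some a) (h' : Reads k m (l ++ [m a]) l') :
      Reads k m l l'

/-- Perform a list of writes. -/
noncomputable def writeAll {A : Type} (m : A → Bool) (w : List (A × Bool)) : A → Bool :=
  w.foldl (fun m p => Function.update m p.1 p.2) m

variable {T} {k : ℕ} {m : A → Bool} {l l' : List Bool}

theorem Reads.ask_eq_none (h : T.Reads k m l l') : T.ask k l' = none := by
  induction h with
  | done h => exact h
  | ask _ _ ih => exact ih

theorem Reads.not_done (h : T.Reads k m l l') (hs : T.quits k l' = false) :
    ¬ T.done (k, l, []) = true := by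
  cases h with
  | done h => simp [Task.done, hs]
  | ask h _ => simp [Task.done, h]

theorem Reads.path (h : T.Reads k m l l') :
    T.sys.Path (fun c => ¬ T.sys.halted c ∧ c.2 = m) ((k, l, []), m) ((k, l', []), m) := by
  induction h with
  | done h => exact .refl _
  | ask h h' ih =>
    refine .head_eq ⟨by simp [Task.done, h], rfl⟩ ?_ ih
    simp [advance, h, address, look, writeFirst]

theorem path_writeAll (w : List (A × Bool)) (m : A → Bool) (W : List (A × Bool)) (m₀ : A → Bool)
    (hw : ∀ p ∈ w, p ∈ W) (hm : ∀ a, m a = m₀ a ∨ (a, m a) ∈ W) :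
    T.sys.Path (fun c => ¬ T.sys.halted c ∧ ∀ a, c.2 a = m₀ a ∨ (a, c.2 a) ∈ W)
      ((k, l, w), m) ((k, l, []), writeAll m w) := by
  induction w generalizing m with
  | nil => exact .refl _
  | cons p w ih =>
    refine .head_eq ⟨by simp [Task.done], hm⟩ (z := ((k, l, w), Function.update m p.1 p.2))
      (by simp [advance, writeFirst]) (ih _ (fun q hq => hw q (by simp [hq])) fun a => ?_)
    rw [Function.update_apply]
    split <;> rename_i e
    · subst e
      exact .inr (hw p (by simp))
    · exact hm a

theorem writeAll_eq_or {A : Type} (w : List (A × Bool)) (m : A → Bool) (a : A) :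
    (writeAll m w a = m a ∧ ∀ v, (a, v) ∉ w) ∨ (a, writeAll m w a) ∈ w := by
  induction w generalizing m with
  | nil => simp [writeAll]
  | cons p w ih =>
    rcases ih (Function.update m p.1 p.2) with ⟨h1, h2⟩ | h
    · change writeAll m (p :: w) a = _ at h1
      rw [h1, Function.update_apply]
      by_cases e : a = p.1
      · subst e
        simp
      · refine .inl ⟨by simp [e], fun v hv => ?_⟩
        rcases List.mem_cons.1 hv with rfl | hv
        · exact e rfl
        · exact h2 v hv
    · exact .inr (List.mem_cons_of_mem _ h)

theorem Reads.exists_firstHalt (h : T.Reads k m l l') (hs : T.quits k l' = true) :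
    ∃ ν, T.sys.FirstHalt ((k, l, []), m) ν :=
  (h.path.mono fun _ hy => hy.1).exists_firstHalt (by simp [Task.done, h.ask_eq_none, hs])

/-- The run of a task machine through all its tasks. -/
theorem run_tasks (M : ℕ → A → Bool) (L : ℕ → List Bool) (N : A → Bool)
    (h0 : T.Reads 0 (M 0) [] (L 0))
    (h : ∀ k, T.Reads (k + 1) (M (k + 1)) ((L k).take 3) (L (k + 1)))
    (hs : ∀ k, T.quits k (L k) = false) (hM : ∀ k, M (k + 1) = writeAll (M k) (T.ans k (L k)))
    (hN : ∀ a, ∃ k₀, ∀ k ≥ k₀, M k a = N a ∧ ∀ v, (a, v) ∈ T.ans k (L k) → v = N a) :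
    T.sys.run ((0, [], []), M 0) Ordinal.omega0 = ((0, [], []), N) ∧
    (∀ ζ < Ordinal.omega0, ¬ T.sys.halted (T.sys.run ((0, [], []), M 0) ζ) ∧
      ∃ k, ∀ a, (T.sys.run ((0, [], []), M 0) ζ).2 a = M k a ∨
        (a, (T.sys.run ((0, [], []), M 0) ζ).2 a) ∈ T.ans k (L k)) ∧
    ∀ k, ∃ ζ < Ordinal.omega0, (T.sys.run ((0, [], []), M 0) ζ).2 = M k := by
  let I : ℕ → List Bool := fun k => Nat.casesOn k [] fun k => (L k).take 3
  have hI : ∀ k, T.Reads k (M k) (I k) (L k) := by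
    rintro (_ | k)
    · exact h0
    · exact h k
  let c : ℕ → T.sys.X := fun k => ((k, I k, []), M k)
  let P : ℕ → T.sys.X → Prop := fun k c => ¬ T.sys.halted c ∧
    ∀ a, c.2 a = M k a ∨ (a, c.2 a) ∈ T.ans k (L k)
  have hP : ∀ k, P k (c k) := fun k => ⟨(hI k).not_done (hs k), fun a => .inl rfl⟩
  have hlast : ∀ k, T.sys.Path (P k) ((k + 1, (L k).take 3, T.ans k (L k)), M k) (c (k + 1)) := by
    intro k
    change T.sys.Path _ _ ((k + 1, (L k).take 3, []), M (k + 1))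
    rw [hM]
    exact path_writeAll _ _ _ _ (fun _ h => h) fun a => .inl rfl
  have hpath : ∀ k, T.sys.Path (P k) (T.sys.step (c k)) (c (k + 1)) := by
    intro k
    have hstep : T.sys.step ((k, L k, []), M k) =
        ((k + 1, (L k).take 3, T.ans k (L k)), M k) := by
      simp [advance, (hI k).ask_eq_none, writeFirst]
    have hend : P k ((k, L k, []), M k) :=
      ⟨(Reads.done (hI k).ask_eq_none).not_done (m := M k) (hs k), fun a => .inl rfl⟩
    have := (hI k).path.mono (P' := P k) fun y hy => ⟨hy.1, fun a => .inl (by rw [hy.2])⟩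
    have hall : T.sys.Path (P k) (c k) (c (k + 1)) := this.trans (.head_eq hend hstep (hlast k))
    exact (hall.head_of_ne fun e => by simpa [c] using congrArg (fun c => c.1.1) e).2
  obtain ⟨τ, hτ, hτ0, hrun, hbetween⟩ := Sys.exists_chain c P hP hpath
  have hc0 : c 0 = ((0, [], []), M 0) := rfl
  rw [hc0] at hrun hbetween
  refine ⟨?_, fun ζ hζ => ?_, fun k => ⟨(τ k : ℕ), Ordinal.natCast_lt_omega0 _, by rw [hrun]⟩⟩
  · rw [Sys.run_limit _ _ Ordinal.isSuccLimit_omega0]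
    refine Prod.ext rfl (funext fun a => ?_)
    obtain ⟨k₀, hk₀⟩ := hN a
    refine Sys.limsupBit_of_eventually (Ordinal.natCast_lt_omega0 (τ k₀)) fun γ h1 h2 => ?_
    obtain ⟨n, rfl⟩ := Ordinal.lt_omega0.1 h2
    obtain ⟨k, hk, h3, h4⟩ := exists_between_of_strictMono hτ (Nat.cast_le.1 h1)
    rcases (hbetween k n h3 h4).2 a with h5 | h5
    · exact h5.trans (hk₀ k hk).1
    · exact (hk₀ k hk).2 _ h5
  · obtain ⟨n, rfl⟩ := Ordinal.lt_omega0.1 hζ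
    obtain ⟨k, -, h3, h4⟩ := exists_between_of_strictMono hτ (k₀ := 0) (n := n) (by simp [hτ0])
    exact ⟨(hbetween k n h3 h4).1, k, (hbetween k n h3 h4).2⟩

end Task
end ITTM

namespace ITTM

/-- The transition tables of infinitely many machines, given in a primitive recursive way. -/
structure Table where
  start : ℕ → ℕ
  limit : ℕ → ℕ
  halt : ℕ → ℕ
  next : ℕ → ℕ × Bool × Bool × Bool → ℕ × (Bool × Bool × Bool) × Bool
  start_prim : Primrec start
  limit_prim : Primrec limit
  halt_prim : Primrec halt
  next_prim : Primrec₂ next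

namespace Table

/-- The addresses of the memory used to run all machines of a table simultaneously. -/
abbrev Addr : Type := (Fin 3 × ℕ × ℕ) ⊕ (ℕ × ℕ) ⊕ ℕ ⊕ Fin 3

namespace Addr

/-- Cell `n` on tape `i` of machine `r`. -/
abbrev tape (i : Fin 3) (r n : ℕ) : Addr := Sum.inl (i, r, n)

/-- The bits that mark the state and the head position of machine `r`. -/
abbrev mark (r m : ℕ) : Addr := Sum.inr (Sum.inl (r, m))

/-- The bit that tells whether machine `r` has halted before. -/
abbrev dead (r : ℕ) : Addr := Sum.inr (Sum.inr (Sum.inl r))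

/-- The bit that tells whether a machine has halted since the last restart. -/
abbrev hit : Addr := Sum.inr (Sum.inr (Sum.inr 1))

/-- The bit that asks for a restart of machine `0`. -/
abbrev kick : Addr := Sum.inr (Sum.inr (Sum.inr 2))

/-- The bit that flashes in every simulated step. -/
abbrev flash : Addr := Sum.inr (Sum.inr (Sum.inr 0))

end Addr

variable (T : Table)

/-- The number representing the start state with the head on cell `0`. -/
def origin (r : ℕ) : ℕ := Nat.pair (T.start r) 0

/-- The bit stored at mark `n` of machine `r` when the marked number is `m`; an empty memory
represents the start configuration. -/
def raw (r m n : ℕ) : Bool := (n == m) ^^ (n == T.origin r)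

/-- The marked number of machine `k` according to the bits read in task `k`, or the number of bits
read if it has not yet been found. -/
def pos (p : ℕ × List Bool) : ℕ :=
  (List.range (p.2.length - 3)).findIdx fun j => p.2.getD (j + 3) false ^^ (j == T.origin p.1)

/-- The state of machine `k` according to the bits read in task `k`. -/
def qOf (p : ℕ × List Bool) : ℕ := (T.pos p).unpair.1

/-- The head position of machine `k` according to the bits read in task `k`. -/
def hOf (p : ℕ × List Bool) : ℕ := (T.pos p).unpair.2

/-- The bits read after the marked number has been found. -/
def extra (j : ℕ) (p : ℕ × List Bool) : Bool := p.2.getD (T.pos p + (j + 4)) false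

/-- The restart bit read at the beginning. -/
def kickOf (p : ℕ × List Bool) : Bool := p.2.getD 1 false

/-- Machine `k` has to be reset. -/
def resets (p : ℕ × List Bool) : Bool := p.1 == 0 && kickOf p

/-- The instruction to be executed by machine `k`. -/
def out (p : ℕ × List Bool) : ℕ × (Bool × Bool × Bool) × Bool :=
  T.next p.1 (T.qOf p, T.extra 1 p, T.extra 2 p, T.extra 3 p)

/-- The next state of machine `k`. -/
def newState (p : ℕ × List Bool) : ℕ := bif resets p then T.start p.1 else (T.out p).1

/-- The next head position of machine `k`. -/
def newHead (p : ℕ × List Bool) : ℕ :=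
  bif resets p then 0 else bif (T.out p).2.2 then T.hOf p + 1 else T.hOf p - 1

/-- The next marked number of machine `k`. -/
def newPos (p : ℕ × List Bool) : ℕ := Nat.pair (T.newState p) (T.newHead p)

/-- The bits to be written on the tapes of machine `k`. -/
def newBits (p : ℕ × List Bool) : Bool × Bool × Bool :=
  bif resets p then (false, false, false) else (T.out p).2.1

/-- Machine `k` is in its halt state. -/
def atHalt (p : ℕ × List Bool) : Bool := T.qOf p == T.halt p.1

/-- The bit requested in task `k`. -/
def ask (p : ℕ × List Bool) : Option Addr :=
  bif p.2.length == 0 then some Addr.flash else bif p.2.length == 1 then some Addr.kick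
  else bif p.2.length == 2 then some Addr.hit else bif p.2.getD 0 false then none
  else bif p.2.length == T.pos p + 3 then some (Addr.mark p.1 (T.pos p))
  else bif p.2.length == T.pos p + 4 then some (Addr.dead p.1)
  else bif p.2.length == T.pos p + 5 then some (Addr.tape 0 p.1 (T.hOf p))
  else bif p.2.length == T.pos p + 6 then some (Addr.tape 1 p.1 (T.hOf p))
  else bif p.2.length == T.pos p + 7 then some (Addr.tape 2 p.1 (T.hOf p)) else none

/-- The writes that put all machines into their limit states. -/
def ansLimit (k : ℕ) : List (Addr × Bool) :=
  [(Addr.flash, false), (Addr.mark k.unpair.1 k.unpair.2,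
    T.raw k.unpair.1 (Nat.pair (T.limit k.unpair.1) 0) k.unpair.2)]

/-- The writes that concern machine `k`. -/
def ansRow (p : ℕ × List Bool) : List (Addr × Bool) :=
  [(Addr.flash, p.1 == 0), (Addr.mark p.1 (T.pos p), T.raw p.1 (T.newPos p) (T.pos p)),
    (Addr.mark p.1 (T.newPos p), T.raw p.1 (T.newPos p) (T.newPos p)),
    (Addr.tape 0 p.1 (T.hOf p), (T.newBits p).1), (Addr.tape 1 p.1 (T.hOf p), (T.newBits p).2.1),
    (Addr.tape 2 p.1 (T.hOf p), (T.newBits p).2.2), (Addr.dead p.1, T.extra 0 p || T.atHalt p)]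

/-- The writes that concern the global bits and the reset of machine `0`. -/
def ansGlobal (p : ℕ × List Bool) : List (Addr × Bool) :=
  bif p.1 == 0 then
    bif kickOf p then [(Addr.kick, false), (Addr.hit, false)] else [(Addr.kick, T.atHalt p)]
  else bif kickOf p then [(Addr.tape 0 0 (p.1 - 1), false), (Addr.tape 1 0 (p.1 - 1), false),
    (Addr.tape 2 0 (p.1 - 1), false)]
  else bif !T.extra 0 p && T.atHalt p then [(Addr.hit, true)] else []

/-- The writes of task `k`. -/
def ans (p : ℕ × List Bool) : List (Addr × Bool) :=
  bif p.2.getD 0 false then T.ansLimit p.1 else T.ansRow p ++ T.ansGlobal p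

/-- The criterion for stopping. -/
def quits (p : ℕ × List Bool) : Bool :=
  !p.2.getD 0 false && (p.1 == 0 && (!kickOf p && (T.atHalt p && !p.2.getD 2 false)))

section Prim

theorem origin_prim : Primrec T.origin := Primrec₂.natPair.comp T.start_prim (Primrec.const 0)

theorem xor_prim : Primrec₂ Bool.xor := Primrec.dom_bool₂ _

theorem raw_prim {α : Type} [Primcodable α] {f g h : α → ℕ} (hf : Primrec f) (hg : Primrec g)
    (hh : Primrec h) : Primrec fun a => T.raw (f a) (g a) (h a) :=
  xor_prim.comp (Primrec.beq.comp hh hg) (Primrec.beq.comp hh (T.origin_prim.comp hf))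

theorem getD_prim {α : Type} [Primcodable α] {f : α → List Bool} {g : α → ℕ} (hf : Primrec f)
    (hg : Primrec g) : Primrec fun a => (f a).getD (g a) false :=
  (Primrec.list_getD false).comp hf hg

theorem add_const_prim {α : Type} [Primcodable α] {f : α → ℕ} (hf : Primrec f) (n : ℕ) :
    Primrec fun a => f a + n := Primrec.nat_add.comp hf (Primrec.const n)

theorem pos_prim : Primrec T.pos := by
  have h1 : Primrec fun p : ℕ × List Bool => List.range (p.2.length - 3) :=
    Primrec.list_range.comp (Primrec.nat_sub.comp (Primrec.list_length.comp Primrec.snd)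
      (Primrec.const 3))
  have h2 : Primrec₂ fun (p : ℕ × List Bool) (j : ℕ) =>
      p.2.getD (j + 3) false ^^ (j == T.origin p.1) :=
    xor_prim.comp (getD_prim (Primrec.snd.comp Primrec.fst) (add_const_prim Primrec.snd 3))
      (Primrec.beq.comp Primrec.snd (T.origin_prim.comp (Primrec.fst.comp Primrec.fst)))
  exact Primrec.list_findIdx h1 h2

theorem qOf_prim : Primrec T.qOf := Primrec.fst.comp (Primrec.unpair.comp T.pos_prim)

theorem hOf_prim : Primrec T.hOf := Primrec.snd.comp (Primrec.unpair.comp T.pos_prim)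

theorem extra_prim (j : ℕ) : Primrec (T.extra j) :=
  getD_prim Primrec.snd (add_const_prim T.pos_prim _)

theorem kickOf_prim : Primrec kickOf := getD_prim Primrec.snd (Primrec.const 1)

theorem first_eq_zero_prim : Primrec fun p : ℕ × List Bool => p.1 == 0 :=
  Primrec.beq.comp Primrec.fst (Primrec.const 0)

theorem resets_prim : Primrec resets := Primrec.and.comp first_eq_zero_prim kickOf_prim

theorem out_prim : Primrec T.out :=
  T.next_prim.comp Primrec.fst (T.qOf_prim.pair ((T.extra_prim 1).pair
    ((T.extra_prim 2).pair (T.extra_prim 3))))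

theorem newState_prim : Primrec T.newState :=
  Primrec.cond resets_prim (T.start_prim.comp Primrec.fst) (Primrec.fst.comp T.out_prim)

theorem newHead_prim : Primrec T.newHead :=
  Primrec.cond resets_prim (Primrec.const 0)
    (Primrec.cond (Primrec.snd.comp (Primrec.snd.comp T.out_prim))
      (Primrec.succ.comp T.hOf_prim) (Primrec.pred.comp T.hOf_prim))

theorem newPos_prim : Primrec T.newPos := Primrec₂.natPair.comp T.newState_prim T.newHead_prim

theorem newBits_prim : Primrec T.newBits :=
  Primrec.cond resets_prim (Primrec.const _) (Primrec.fst.comp (Primrec.snd.comp T.out_prim))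

theorem atHalt_prim : Primrec T.atHalt :=
  Primrec.beq.comp T.qOf_prim (T.halt_prim.comp Primrec.fst)

theorem tape_prim {α : Type} [Primcodable α] (i : Fin 3) {f g : α → ℕ} (hf : Primrec f)
    (hg : Primrec g) : Primrec fun a => Addr.tape i (f a) (g a) :=
  Primrec.sumInl.comp ((Primrec.const i).pair (hf.pair hg))

theorem mark_prim {α : Type} [Primcodable α] {f g : α → ℕ} (hf : Primrec f)
    (hg : Primrec g) : Primrec fun a => Addr.mark (f a) (g a) :=
  Primrec.sumInr.comp (Primrec.sumInl.comp (hf.pair hg))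

theorem dead_prim {α : Type} [Primcodable α] {f : α → ℕ} (hf : Primrec f) :
    Primrec fun a => Addr.dead (f a) :=
  Primrec.sumInr.comp (Primrec.sumInr.comp (Primrec.sumInl.comp hf))

theorem length_prim : Primrec fun p : ℕ × List Bool => p.2.length :=
  Primrec.list_length.comp Primrec.snd

theorem mode_prim : Primrec fun p : ℕ × List Bool => p.2.getD 0 false :=
  getD_prim Primrec.snd (Primrec.const 0)

theorem length_eq_prim {f : ℕ × List Bool → ℕ} (hf : Primrec f) :
    Primrec fun p : ℕ × List Bool => p.2.length == f p :=
  Primrec.beq.comp length_prim hf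

theorem ask_prim : Primrec T.ask := by
  have htape (i : Fin 3) : Primrec fun p : ℕ × List Bool => Addr.tape i p.1 (T.hOf p) :=
    tape_prim i Primrec.fst T.hOf_prim
  have hmark : Primrec fun p : ℕ × List Bool => Addr.mark p.1 (T.pos p) :=
    mark_prim Primrec.fst T.pos_prim
  have hdead : Primrec fun p : ℕ × List Bool => Addr.dead p.1 := dead_prim Primrec.fst
  have hlen (n : ℕ) : Primrec fun p : ℕ × List Bool => p.2.length == n :=
    length_eq_prim (Primrec.const n)
  have hpos (n : ℕ) : Primrec fun p : ℕ × List Bool => p.2.length == T.pos p + n :=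
    length_eq_prim (add_const_prim T.pos_prim n)
  exact Primrec.cond (hlen 0) (Primrec.const _) (Primrec.cond (hlen 1) (Primrec.const _)
    (Primrec.cond (hlen 2) (Primrec.const _) (Primrec.cond mode_prim (Primrec.const none)
    (Primrec.cond (hpos 3) (Primrec.option_some.comp hmark)
    (Primrec.cond (hpos 4) (Primrec.option_some.comp hdead)
    (Primrec.cond (hpos 5) (Primrec.option_some.comp (htape 0))
    (Primrec.cond (hpos 6) (Primrec.option_some.comp (htape 1))
    (Primrec.cond (hpos 7) (Primrec.option_some.comp (htape 2)) (Primrec.const none)))))))))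

theorem cons_prim {α : Type} [Primcodable α] {f : α → Addr} {g : α → Bool}
    {w : α → List (Addr × Bool)} (hf : Primrec f) (hg : Primrec g) (hw : Primrec w) :
    Primrec fun a => (f a, g a) :: w a :=
  Primrec.list_cons.comp (hf.pair hg) hw

theorem ansLimit_prim : Primrec T.ansLimit := by
  have h1 : Primrec fun k : ℕ => k.unpair.1 := Primrec.fst.comp Primrec.unpair
  have h2 : Primrec fun k : ℕ => k.unpair.2 := Primrec.snd.comp Primrec.unpair
  have h3 : Primrec fun k : ℕ => Nat.pair (T.limit k.unpair.1) 0 :=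
    Primrec₂.natPair.comp (T.limit_prim.comp h1) (Primrec.const 0)
  exact cons_prim (Primrec.const _) (Primrec.const _)
    (cons_prim (mark_prim h1 h2) (T.raw_prim h1 h3 h2) (Primrec.const []))

theorem ansRow_prim : Primrec T.ansRow := by
  have hfst : Primrec fun p : ℕ × List Bool => p.1 := Primrec.fst
  have htape (i : Fin 3) : Primrec fun p : ℕ × List Bool => Addr.tape i p.1 (T.hOf p) :=
    tape_prim i hfst T.hOf_prim
  have hb : Primrec fun p => (T.newBits p).2 := Primrec.snd.comp T.newBits_prim
  exact cons_prim (Primrec.const _) first_eq_zero_prim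
    (cons_prim (mark_prim hfst T.pos_prim) (T.raw_prim hfst T.newPos_prim T.pos_prim)
    (cons_prim (mark_prim hfst T.newPos_prim) (T.raw_prim hfst T.newPos_prim T.newPos_prim)
    (cons_prim (htape 0) (Primrec.fst.comp T.newBits_prim)
    (cons_prim (htape 1) (Primrec.fst.comp hb) (cons_prim (htape 2) (Primrec.snd.comp hb)
    (cons_prim (dead_prim hfst) (Primrec.or.comp (T.extra_prim 0) T.atHalt_prim)
      (Primrec.const [])))))))

theorem ansGlobal_prim : Primrec T.ansGlobal := by
  have htape (i : Fin 3) : Primrec fun p : ℕ × List Bool => Addr.tape i 0 (p.1 - 1) :=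
    tape_prim i (Primrec.const 0) (Primrec.pred.comp Primrec.fst)
  exact Primrec.cond first_eq_zero_prim
    (Primrec.cond kickOf_prim (Primrec.const _)
      (cons_prim (Primrec.const _) T.atHalt_prim (Primrec.const [])))
    (Primrec.cond kickOf_prim (cons_prim (htape 0) (Primrec.const _)
      (cons_prim (htape 1) (Primrec.const _) (cons_prim (htape 2) (Primrec.const _)
        (Primrec.const []))))
    (Primrec.cond (Primrec.and.comp (Primrec.not.comp (T.extra_prim 0)) T.atHalt_prim)
      (Primrec.const _) (Primrec.const [])))

theorem ans_prim : Primrec T.ans :=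
  Primrec.cond mode_prim (T.ansLimit_prim.comp Primrec.fst)
    (Primrec.list_append.comp T.ansRow_prim T.ansGlobal_prim)

theorem quits_prim : Primrec T.quits := by
  have h2 : Primrec fun p : ℕ × List Bool => p.2.getD 2 false :=
    getD_prim Primrec.snd (Primrec.const 2)
  exact Primrec.and.comp (Primrec.not.comp mode_prim) (Primrec.and.comp first_eq_zero_prim
    (Primrec.and.comp (Primrec.not.comp kickOf_prim)
      (Primrec.and.comp T.atHalt_prim (Primrec.not.comp h2))))

end Prim

/-- The task machine running all machines of a table simultaneously. -/
def toTask : Task Addr where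
  ask k l := T.ask (k, l)
  ans k l := T.ans (k, l)
  quits k l := T.quits (k, l)
  ask_prim := T.ask_prim
  ans_prim := T.ans_prim
  quits_prim := T.quits_prim

theorem toTask_ask (k : ℕ) (l : List Bool) : T.toTask.ask k l = T.ask (k, l) := rfl

theorem toTask_ans (k : ℕ) (l : List Bool) : T.toTask.ans k l = T.ans (k, l) := rfl

theorem toTask_quits (k : ℕ) (l : List Bool) : T.toTask.quits k l = T.quits (k, l) := rfl

end Table
end ITTM

namespace ITTM
namespace Table

/-- A joint configuration of all machines of a table. -/
structure Cfg where
  state : ℕ → ℕ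
  head : ℕ → ℕ
  tape : ℕ → Fin 3 → ℕ → Bool
  dead : ℕ → Bool
  hit : Bool
  kick : Bool

/-- The bits of a joint configuration that survive limits. -/
inductive Bit
  | tape (i : Fin 3) (r n : ℕ)
  | dead (r : ℕ)
  | hit
  | kick

variable (T : Table)

/-- The component with number `i` of a triple. -/
def pick (v : Bool × Bool × Bool) (i : Fin 3) : Bool :=
  if i = 0 then v.1 else if i = 1 then v.2.1 else v.2.2

/-- The instruction that machine `r` executes. -/
def instr (c : Cfg) (r : ℕ) : ℕ × (Bool × Bool × Bool) × Bool :=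
  T.next r (c.state r, c.tape r 0 (c.head r), c.tape r 1 (c.head r), c.tape r 2 (c.head r))

/-- Machine `r` is reset in the next step. -/
def reset (c : Cfg) (r : ℕ) : Bool := r == 0 && c.kick

/-- The number marking the state and the head position of machine `r`. -/
def marked (c : Cfg) (r : ℕ) : ℕ := Nat.pair (c.state r) (c.head r)

/-- One step of all machines. Machine `0` serves as a clock: when it halts, it is restarted one
step later, and then the record that another machine has halted for the first time is cleared. -/
noncomputable def stepCfg (c : Cfg) : Cfg where
  state r := bif reset c r then T.start r else (T.instr c r).1
  head r := bif reset c r then 0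
    else bif (T.instr c r).2.2 then c.head r + 1 else c.head r - 1
  tape r i n := bif reset c r then false
    else if n = c.head r then pick (T.instr c r).2.1 i else c.tape r i n
  dead r := c.dead r || c.state r == T.halt r
  hit := bif c.kick then false
    else c.hit || decide (∃ r, r ≠ 0 ∧ c.dead r = false ∧ c.state r = T.halt r)
  kick := bif c.kick then false else c.state 0 == T.halt 0

/-- The value of a surviving bit. -/
def bitOf (c : Cfg) : Bit → Bool
  | .tape i r n => c.tape r i n
  | .dead r => c.dead r
  | .hit => c.hit
  | .kick => c.kick

/-- The configuration at a limit stage. -/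
def limCfg (b : Bit → Bool) : Cfg where
  state := T.limit
  head _ := 0
  tape r i n := b (.tape i r n)
  dead r := b (.dead r)
  hit := b .hit
  kick := b .kick

/-- The joint run of all machines. It stops when the clock halts and no machine has halted for the
first time since the last restart of the clock. -/
noncomputable abbrev sys : Sys where
  X := Cfg
  I := Bit
  step := T.stepCfg
  bit := bitOf
  lim := T.limCfg
  halted c := c.kick = false ∧ c.state 0 = T.halt 0 ∧ c.hit = false

/-- The initial joint configuration. -/
def blank : Cfg where
  state := T.start
  head _ := 0
  tape _ _ _ := false
  dead _ := false
  hit := false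
  kick := false

/-- The memory representing a joint configuration. -/
def enc (c : Cfg) : Addr → Bool
  | .inl (i, r, n) => c.tape r i n
  | .inr (.inl (r, n)) => T.raw r (marked c r) n
  | .inr (.inr (.inl r)) => c.dead r
  | .inr (.inr (.inr i)) => if i = 0 then false else if i = 1 then c.hit else c.kick

/-- The address of a surviving bit. -/
def Bit.addr : Bit → Addr
  | .tape i r n => Addr.tape i r n
  | .dead r => Addr.dead r
  | .hit => Addr.hit
  | .kick => Addr.kick

theorem Bit.addr_ne_flash (i : Bit) : i.addr ≠ Addr.flash := by
  cases i <;> simp [Bit.addr]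

theorem enc_addr (c : Cfg) (i : Bit) : T.enc c i.addr = bitOf c i := by
  cases i <;> rfl

/-- The marks read by task `k` until there are `n` of them. -/
def marks (c : Cfg) (k n : ℕ) : List Bool :=
  [false, c.kick, c.hit] ++ (List.range n).map (T.raw k (marked c k))

theorem pos_marks (c : Cfg) (k n : ℕ) (hn : n ≤ marked c k) : T.pos (k, T.marks c k n) = n := by
  have h := List.findIdx_eq_length_of_false (xs := List.range n)
    (p := fun j => (T.marks c k n).getD (j + 3) false ^^ (j == T.origin k)) fun j hj => by
      rw [List.mem_range] at hj
      have : j ≠ marked c k := by omega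
      simp [marks, hj, raw, this]
  simpa [pos, marks] using h

theorem pos_marks_append (c : Cfg) (k : ℕ) (l : List Bool) :
    T.pos (k, T.marks c k (marked c k + 1) ++ l) = marked c k := by
  have hlen : marked c k < (List.range ((T.marks c k (marked c k + 1) ++ l).length - 3)).length := by
    simp [marks]
    omega
  refine (List.findIdx_eq hlen).2 ⟨?_, fun j hj => ?_⟩
  · simp [marks, raw]
  · have h1 : j < marked c k + 1 := by omega
    simp [marks, raw, h1, hj.ne, List.getElem?_append]

/-- All bits read by task `k`. -/
def allRead (c : Cfg) (k : ℕ) : List Bool :=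
  T.marks c k (marked c k + 1) ++ [c.dead k, c.tape k 0 (c.head k), c.tape k 1 (c.head k),
    c.tape k 2 (c.head k)]

theorem reads_marks (c : Cfg) (k : ℕ) (m : Addr → Bool)
    (hmark : ∀ n, m (Addr.mark k n) = T.raw k (marked c k) n) (hdead : m (Addr.dead k) = c.dead k)
    (htape : ∀ i, m (Addr.tape i k (c.head k)) = c.tape k i (c.head k)) :
    T.toTask.Reads k m [false, c.kick, c.hit] (T.allRead c k) := by
  have hlen : ∀ n, (T.marks c k n).length = n + 3 := fun n => by simp [marks]
  have hh : ∀ l, T.hOf (k, T.marks c k (marked c k + 1) ++ l) = c.head k := fun l => by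
    rw [hOf, pos_marks_append, marked, Nat.unpair_pair]
  have hmode : ∀ n l, (T.marks c k n ++ l).getD 0 false = false := fun n l => rfl
  have hgo : ∀ d n, n + d = marked c k + 1 →
      T.toTask.Reads k m (T.marks c k n) (T.allRead c k) := by
    intro d
    induction d with
    | zero =>
      rintro n hn
      obtain rfl : n = marked c k + 1 := hn
      have hask : ∀ l, T.toTask.ask k (T.marks c k (marked c k + 1) ++ l) =
          bif l.length == 0 then some (Addr.dead k)
          else bif l.length == 1 then some (Addr.tape 0 k (c.head k))
          else bif l.length == 2 then some (Addr.tape 1 k (c.head k))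
          else bif l.length == 3 then some (Addr.tape 2 k (c.head k)) else none := by
        intro l
        rw [toTask_ask]
        have e (i j : ℕ) (h : i = 4 + j) : (marked c k + 1 + 3 + l.length == marked c k + i) =
            (l.length == j) := by
          rw [Bool.eq_iff_iff, beq_iff_eq, beq_iff_eq]
          omega
        have e' (i : ℕ) (h : i ≤ 3) : (marked c k + 1 + 3 + l.length == i) = false := by
          rw [beq_eq_false_iff_ne]
          omega
        have e'' : (marked c k + 1 + 3 + l.length == marked c k + 3) = false := by
          rw [beq_eq_false_iff_ne]
          omega
        rw [ask, hh, pos_marks_append]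
        simp only [List.length_append, hlen, hmode, e 4 0, e 5 1, e 6 2, e 7 3, e' 0 (by simp),
          e' 1 (by simp), e' 2 (by simp), e'', cond_false]
      have h0 := hask []
      rw [List.append_nil] at h0
      refine .ask h0 (.ask (hask _) (.ask (a := Addr.tape 1 k (c.head k)) ?_
        (.ask (a := Addr.tape 2 k (c.head k)) ?_ ?_)))
      · rw [List.append_assoc]
        exact hask _
      · rw [List.append_assoc, List.append_assoc]
        exact hask _
      · rw [hdead, htape, htape, htape]
        simp only [List.append_assoc]
        exact .done (hask _)
    | succ d ih =>
      intro n hn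
      have hask : T.toTask.ask k (T.marks c k n) = some (Addr.mark k n) := by
        rw [toTask_ask]
        have := hmode n []
        rw [List.append_nil] at this
        simp only [ask, T.pos_marks c k n (by omega), hlen, this]
        simp
      refine .ask hask ?_
      rw [hmark]
      have : T.marks c k n ++ [T.raw k (marked c k) n] = T.marks c k (n + 1) := by
        simp [marks, List.range_succ]
      rw [this]
      exact ih (n + 1) (by omega)
  simpa [marks] using hgo (marked c k + 1) 0 (by omega)

/-- The addresses, other than the flashing bit, to which task `k` writes. -/
noncomputable def touched (c : Cfg) (k : ℕ) : List Addr :=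
  [Addr.mark k (marked c k), Addr.mark k (marked (T.stepCfg c) k), Addr.tape 0 k (c.head k),
    Addr.tape 1 k (c.head k), Addr.tape 2 k (c.head k), Addr.dead k] ++
  bif k == 0 then bif c.kick then [Addr.kick, Addr.hit] else [Addr.kick]
  else bif c.kick then [Addr.tape 0 0 (k - 1), Addr.tape 1 0 (k - 1), Addr.tape 2 0 (k - 1)]
  else bif !c.dead k && c.state k == T.halt k then [Addr.hit] else []

section

variable (c : Cfg) (k : ℕ)

theorem pos_allRead : T.pos (k, T.allRead c k) = marked c k := T.pos_marks_append c k _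

theorem qOf_allRead : T.qOf (k, T.allRead c k) = c.state k := by
  rw [qOf, pos_allRead, marked, Nat.unpair_pair]

theorem hOf_allRead : T.hOf (k, T.allRead c k) = c.head k := by
  rw [hOf, pos_allRead, marked, Nat.unpair_pair]

theorem extra_allRead (j : ℕ) : T.extra j (k, T.allRead c k) =
    [c.dead k, c.tape k 0 (c.head k), c.tape k 1 (c.head k), c.tape k 2 (c.head k)].getD j false := by
  have hlen : (T.marks c k (marked c k + 1)).length = marked c k + 4 := by simp [marks]
  rw [extra, pos_allRead, allRead, List.getD_append_right _ _ _ _ (by rw [hlen]; omega), hlen]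
  congr 1
  omega

theorem kickOf_allRead : kickOf (k, T.allRead c k) = c.kick := rfl

theorem resets_allRead : resets (k, T.allRead c k) = reset c k := rfl

theorem out_allRead : T.out (k, T.allRead c k) = T.instr c k := by
  rw [out, qOf_allRead, extra_allRead, extra_allRead, extra_allRead]
  rfl

theorem newPos_allRead : T.newPos (k, T.allRead c k) = marked (T.stepCfg c) k := by
  rw [newPos, newState, newHead, out_allRead, hOf_allRead, resets_allRead]
  rfl

theorem atHalt_allRead : T.atHalt (k, T.allRead c k) = (c.state k == T.halt k) := by
  rw [atHalt, qOf_allRead]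

theorem ans_allRead : T.toTask.ans k (T.allRead c k) =
    (Addr.flash, k == 0) :: (T.touched c k).map fun a => (a, T.enc (T.stepCfg c) a) := by
  rw [toTask_ans, ans]
  have hmode : (T.allRead c k).getD 0 false = false := rfl
  simp only [hmode, cond_false]
  have hrow : T.ansRow (k, T.allRead c k) = (Addr.flash, k == 0) ::
      [Addr.mark k (marked c k), Addr.mark k (marked (T.stepCfg c) k), Addr.tape 0 k (c.head k),
        Addr.tape 1 k (c.head k), Addr.tape 2 k (c.head k), Addr.dead k].map
          fun a => (a, T.enc (T.stepCfg c) a) := by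
    rw [ansRow, pos_allRead, newPos_allRead, hOf_allRead, newBits, resets_allRead, out_allRead,
      extra_allRead, atHalt_allRead]
    cases h : reset c k <;> simp [enc, stepCfg, h, pick]
  have hglobal : T.ansGlobal (k, T.allRead c k) =
      (bif k == 0 then bif c.kick then [Addr.kick, Addr.hit] else [Addr.kick]
      else bif c.kick then [Addr.tape 0 0 (k - 1), Addr.tape 1 0 (k - 1), Addr.tape 2 0 (k - 1)]
      else bif !c.dead k && c.state k == T.halt k then [Addr.hit] else []).map
          fun a => (a, T.enc (T.stepCfg c) a) := by
    rw [ansGlobal, kickOf_allRead, atHalt_allRead, extra_allRead]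
    by_cases hk : k = 0
    · subst hk
      cases hK : c.kick <;> simp [enc, stepCfg, hK]
    · have hk' : (k == 0) = false := by simpa using hk
      simp only [hk', cond_false]
      cases hK : c.kick
      · simp only [cond_false]
        cases hc : (!c.dead k && c.state k == T.halt k)
        · have : (!c.dead k && c.state k == T.halt k) = false := hc
          simp only [List.getD_cons_zero, this, cond_false, List.map_nil]
        · have hr : c.dead k = false ∧ c.state k = T.halt k := by simpa using hc
          have hhit : (T.stepCfg c).hit = true := by
            simp only [stepCfg, hK, cond_false, Bool.or_eq_true, decide_eq_true_eq]
            exact .inr ⟨k, hk, hr⟩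
          simp only [List.getD_cons_zero, hc, cond_true, List.map_cons, List.map_nil]
          exact congrArg (fun b => [(Addr.hit, b)]) hhit.symm
      · simp [enc, stepCfg, hK, reset]
  rw [hrow, hglobal, touched, List.map_append]
  rfl

theorem mem_ans_allRead {a : Addr} {v : Bool} (ha : a ≠ Addr.flash)
    (h : (a, v) ∈ T.toTask.ans k (T.allRead c k)) :
    a ∈ T.touched c k ∧ v = T.enc (T.stepCfg c) a := by
  rw [ans_allRead, List.mem_cons, Prod.mk.injEq, List.mem_map] at h
  rcases h with ⟨h, -⟩ | ⟨a', h1, h2⟩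
  · exact absurd h ha
  · rw [Prod.mk.injEq] at h2
    obtain ⟨rfl, rfl⟩ := h2
    exact ⟨h1, rfl⟩

end

end Table
end ITTM

namespace ITTM
namespace Table

variable (T : Table) (c : Cfg)

/-- The memory at the beginning of task `k` during the simulation of a step. -/
noncomputable def mem : ℕ → Addr → Bool
  | 0 => T.enc c
  | k + 1 => Task.writeAll (mem k) (T.toTask.ans k (T.allRead c k))

variable {a : Addr}

theorem mem_succ (ha : a ≠ Addr.flash) (k : ℕ) :
    (T.mem c (k + 1) a = T.mem c k a ∧ a ∉ T.touched c k) ∨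
      (a ∈ T.touched c k ∧ T.mem c (k + 1) a = T.enc (T.stepCfg c) a) := by
  rcases Task.writeAll_eq_or (T.toTask.ans k (T.allRead c k)) (T.mem c k) a with ⟨h1, h2⟩ | h
  · refine .inl ⟨h1, fun h => h2 (T.enc (T.stepCfg c) a) ?_⟩
    rw [ans_allRead]
    exact List.mem_cons_of_mem _ (List.mem_map_of_mem h)
  · exact .inr (T.mem_ans_allRead c k ha h)

theorem mem_eq_or (ha : a ≠ Addr.flash) (k : ℕ) :
    T.mem c k a = T.enc c a ∨ T.mem c k a = T.enc (T.stepCfg c) a := by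
  induction k with
  | zero => exact .inl rfl
  | succ k ih =>
    rcases T.mem_succ c ha k with h | h
    · rwa [h.1]
    · exact .inr h.2

theorem mem_of_untouched (ha : a ≠ Addr.flash) (k : ℕ) (h : ∀ j < k, a ∉ T.touched c j) :
    T.mem c k a = T.enc c a := by
  induction k with
  | zero => rfl
  | succ k ih =>
    rcases T.mem_succ c ha k with h' | h'
    · rw [h'.1, ih fun j hj => h j (by omega)]
    · exact absurd h'.1 (h k (by omega))

theorem mem_of_touched (ha : a ≠ Addr.flash) {j k : ℕ} (hj : j < k) (h : a ∈ T.touched c j) :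
    T.mem c k a = T.enc (T.stepCfg c) a := by
  induction k with
  | zero => omega
  | succ k ih =>
    rcases T.mem_succ c ha k with h' | h'
    · rw [h'.1]
      refine ih ((Nat.lt_succ_iff.1 hj).lt_of_ne ?_)
      rintro rfl
      exact h'.2 h
    · exact h'.2

theorem flash_notMem_touched (k : ℕ) : Addr.flash ∉ T.touched c k := by
  rw [touched]
  cases k == 0 <;> cases c.kick <;> cases !c.dead k && c.state k == T.halt k <;> simp

theorem flash_mem_ans {k : ℕ} {v : Bool} :
    (Addr.flash, v) ∈ T.toTask.ans k (T.allRead c k) ↔ v = (k == 0) := by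
  rw [ans_allRead, List.mem_cons, Prod.mk.injEq, List.mem_map]
  constructor
  · rintro (⟨-, h⟩ | ⟨a, h1, h2⟩)
    · exact h
    · rw [Prod.mk.injEq] at h2
      exact absurd (h2.1 ▸ h1) (T.flash_notMem_touched c k)
  · exact fun h => .inl ⟨rfl, h⟩

theorem mem_flash (k : ℕ) : T.mem c (k + 1) Addr.flash = (k == 0) := by
  rcases Task.writeAll_eq_or (T.toTask.ans k (T.allRead c k)) (T.mem c k) Addr.flash with h | h
  · exact absurd ((T.flash_mem_ans c).2 rfl) (h.2 (k == 0))
  · exact (T.flash_mem_ans c).1 h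

theorem exists_touched (ha : a ≠ Addr.flash) (h : T.enc c a ≠ T.enc (T.stepCfg c) a) :
    ∃ k, a ∈ T.touched c k := by
  rcases a with ⟨i, r, n⟩ | ⟨r, n⟩ | r | i
  · have h' : c.tape r i n ≠ (T.stepCfg c).tape r i n := h
    have key : n = c.head r → ∃ k, Addr.tape i r n ∈ T.touched c k := by
      rintro rfl
      refine ⟨r, ?_⟩
      fin_cases i <;> simp [touched]
    by_cases hn : n = c.head r
    · exact key hn
    · cases hr : reset c r
      · simp [stepCfg, hr, hn] at h'
      · rw [reset, Bool.and_eq_true, beq_iff_eq] at hr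
        obtain ⟨rfl, hK⟩ := hr
        refine ⟨n + 1, ?_⟩
        fin_cases i <;> simp [touched, hK]
  · have h' : T.raw r (marked c r) n ≠ T.raw r (marked (T.stepCfg c) r) n := h
    refine ⟨r, ?_⟩
    by_cases h1 : n = marked c r
    · simp [touched, h1]
    · by_cases h2 : n = marked (T.stepCfg c) r
      · simp [touched, h2]
      · simp [raw, h1, h2] at h'
  · exact ⟨r, by simp [touched]⟩
  · fin_cases i
    · exact absurd rfl ha
    · have h' : c.hit ≠ (T.stepCfg c).hit := h
      cases hK : c.kick
      · simp only [stepCfg, hK, cond_false] at h'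
        by_cases hr : ∃ r, r ≠ 0 ∧ c.dead r = false ∧ c.state r = T.halt r
        · obtain ⟨r, h0, h1, h2⟩ := hr
          have h0' : (r == 0) = false := beq_eq_false_iff_ne.2 h0
          exact ⟨r, by simp [touched, h0', h1, h2, hK]⟩
        · rw [decide_eq_false hr, Bool.or_false] at h'
          exact absurd rfl h'
      · exact ⟨0, by simp [touched, hK]⟩
    · exact ⟨0, by cases hK : c.kick <;> simp [touched, hK]⟩

theorem mark_notMem_touched {j k : ℕ} (h : j < k) (n : ℕ) : Addr.mark k n ∉ T.touched c j := by
  rw [touched]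
  cases j == 0 <;> cases c.kick <;> cases !c.dead j && c.state j == T.halt j <;> simp <;> omega

theorem dead_notMem_touched {j k : ℕ} (h : j < k) : Addr.dead k ∉ T.touched c j := by
  rw [touched]
  cases j == 0 <;> cases c.kick <;> cases !c.dead j && c.state j == T.halt j <;> simp <;> omega

theorem tape_notMem_touched {j k : ℕ} (h : j < k) (i : Fin 3) (n : ℕ) :
    Addr.tape i k n ∉ T.touched c j := by
  rw [touched]
  cases j == 0 <;> cases c.kick <;> cases !c.dead j && c.state j == T.halt j <;> simp <;> omega

theorem reads_mem (k : ℕ) :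
    T.toTask.Reads k (T.mem c k) [false, c.kick, c.hit] (T.allRead c k) := by
  refine T.reads_marks c k _ (fun n => ?_) ?_ fun i => ?_
  · exact T.mem_of_untouched c (by simp) k fun j hj => T.mark_notMem_touched c hj n
  · exact T.mem_of_untouched c (by simp) k fun j hj => T.dead_notMem_touched c hj
  · exact T.mem_of_untouched c (by simp) k fun j hj => T.tape_notMem_touched c hj i _

theorem reads_of_reads {m : Addr → Bool} {k : ℕ} {l : List Bool}
    (h : T.toTask.Reads k m [m Addr.flash, m Addr.kick, m Addr.hit] l) :
    T.toTask.Reads k m [] l :=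
  .ask (a := Addr.flash) rfl (.ask (a := Addr.kick) rfl (.ask (a := Addr.hit) rfl h))

theorem quits_allRead (k : ℕ) : T.toTask.quits k (T.allRead c k) = true ↔ k = 0 ∧ T.sys.halted c := by
  have h0 : (T.allRead c k).getD 0 false = false := rfl
  have h2 : (T.allRead c k).getD 2 false = c.hit := rfl
  rw [toTask_quits, quits, atHalt_allRead, kickOf_allRead]
  simp only [h0, h2, Bool.and_eq_true, beq_iff_eq, Bool.not_eq_true']
  constructor
  · rintro ⟨-, rfl, h⟩
    exact ⟨rfl, h⟩
  · rintro ⟨rfl, h⟩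
    exact ⟨trivial, rfl, h⟩

/-- The simulation of one step. -/
theorem run_enc (hc : ¬ T.sys.halted c) :
    T.toTask.sys.run ((0, [], []), T.enc c) Ordinal.omega0 = ((0, [], []), T.enc (T.stepCfg c)) ∧
    (∀ ζ < Ordinal.omega0, ¬ T.toTask.sys.halted (T.toTask.sys.run ((0, [], []), T.enc c) ζ) ∧
      ∀ a, a ≠ Addr.flash →
        (T.toTask.sys.run ((0, [], []), T.enc c) ζ).2 a = T.enc c a ∨
        (T.toTask.sys.run ((0, [], []), T.enc c) ζ).2 a = T.enc (T.stepCfg c) a) ∧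
    ∃ ζ < Ordinal.omega0, (T.toTask.sys.run ((0, [], []), T.enc c) ζ).2 Addr.flash = true := by
  obtain ⟨h1, h2, h3⟩ := Task.run_tasks (T := T.toTask) (T.mem c) (T.allRead c)
    (T.enc (T.stepCfg c)) (T.reads_of_reads (T.reads_mem c 0)) (fun k => T.reads_mem c (k + 1))
    (fun k => by
      rw [← Bool.not_eq_true, quits_allRead]
      exact fun h => hc h.2) (fun k => rfl) (fun a => by
      by_cases ha : a = Addr.flash
      · subst ha
        refine ⟨2, fun k hk => ?_⟩
        obtain ⟨k, rfl⟩ := Nat.exists_eq_add_of_le hk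
        rw [show 2 + k = (k + 1) + 1 by omega]
        exact ⟨T.mem_flash c _, fun v hv => (T.flash_mem_ans c).1 hv⟩
      · by_cases h : T.enc c a = T.enc (T.stepCfg c) a
        · exact ⟨0, fun k _ => ⟨(T.mem_eq_or c ha k).elim (fun e => e.trans h) id,
            fun v hv => (T.mem_ans_allRead c k ha hv).2⟩⟩
        · obtain ⟨j, hj⟩ := T.exists_touched c ha h
          exact ⟨j + 1, fun k hk => ⟨T.mem_of_touched c ha hk hj,
            fun v hv => (T.mem_ans_allRead c k ha hv).2⟩⟩)
  refine ⟨h1, fun ζ hζ => ⟨(h2 ζ hζ).1, fun a ha => ?_⟩, ?_⟩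
  · obtain ⟨k, hk⟩ := (h2 ζ hζ).2
    rcases hk a with h | h
    · exact (T.mem_eq_or c ha k).imp h.trans h.trans
    · exact .inr (T.mem_ans_allRead c k ha h).2
  · obtain ⟨ζ, h4, h5⟩ := h3 1
    exact ⟨ζ, h4, by rw [show T.enc c = T.mem c 0 from rfl, h5, mem_flash]; rfl⟩

/-- The memory at the beginning of task `k` after a limit stage. -/
noncomputable def limMem (b : Addr → Bool) : ℕ → Addr → Bool
  | 0 => b
  | k + 1 => Task.writeAll (limMem b k) (T.ansLimit k)

theorem enc_limCfg (b : Addr → Bool) (k : ℕ) {v : Bool} (h : (a, v) ∈ T.ansLimit k) :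
    v = T.enc (T.limCfg (b ∘ Bit.addr)) a := by
  simp only [ansLimit, List.mem_cons, Prod.mk.injEq, List.not_mem_nil, or_false] at h
  rcases h with ⟨rfl, rfl⟩ | ⟨rfl, rfl⟩ <;> rfl

theorem limMem_eq_or (b : Addr → Bool) (k : ℕ) :
    T.limMem b k a = b a ∨ T.limMem b k a = T.enc (T.limCfg (b ∘ Bit.addr)) a := by
  induction k with
  | zero => exact .inl rfl
  | succ k ih =>
    rcases Task.writeAll_eq_or (T.ansLimit k) (T.limMem b k) a with h | h
    · exact ih.imp h.1.trans h.1.trans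
    · exact .inr (T.enc_limCfg b k h)

theorem limMem_of_mem (b : Addr → Bool) {j k : ℕ} {v : Bool} (hj : j < k)
    (h : (a, v) ∈ T.ansLimit j) : T.limMem b k a = T.enc (T.limCfg (b ∘ Bit.addr)) a := by
  induction k with
  | zero => omega
  | succ k ih =>
    rcases Task.writeAll_eq_or (T.ansLimit k) (T.limMem b k) a with h' | h'
    · refine h'.1.trans (ih ((Nat.lt_succ_iff.1 hj).lt_of_ne ?_))
      rintro rfl
      exact h'.2 v h
    · exact T.enc_limCfg b k h'

/-- After a limit stage, the representation of the joint configuration is restored. -/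
theorem run_lim (b : Addr → Bool) (hb : b Addr.flash = true) :
    T.toTask.sys.run ((0, [], []), b) Ordinal.omega0 =
      ((0, [], []), T.enc (T.limCfg (b ∘ Bit.addr))) ∧
    ∀ ζ < Ordinal.omega0, ¬ T.toTask.sys.halted (T.toTask.sys.run ((0, [], []), b) ζ) ∧
      ∀ i : Bit, (T.toTask.sys.run ((0, [], []), b) ζ).2 i.addr = b i.addr := by
  have hread : ∀ k m, T.toTask.Reads k m [true, b Addr.kick, b Addr.hit]
      [true, b Addr.kick, b Addr.hit] := fun k m => .done rfl
  have hans : ∀ k, T.toTask.ans k [true, b Addr.kick, b Addr.hit] = T.ansLimit k := fun k => rfl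
  obtain ⟨h1, h2, -⟩ := Task.run_tasks (T := T.toTask) (T.limMem b)
    (fun _ => [true, b Addr.kick, b Addr.hit]) (T.enc (T.limCfg (b ∘ Bit.addr)))
    (T.reads_of_reads (by rw [show T.limMem b 0 = b from rfl, hb]; exact hread _ _))
    (fun k => hread _ _) (fun k => rfl) (fun k => rfl) (fun a => by
      by_cases h : ∃ k v, (a, v) ∈ T.ansLimit k
      · obtain ⟨j, v, hj⟩ := h
        exact ⟨j + 1, fun k hk => ⟨T.limMem_of_mem b hk hj, fun v hv => T.enc_limCfg b k hv⟩⟩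
      · refine ⟨0, fun k _ => ⟨?_, fun v hv => absurd ⟨k, v, hv⟩ h⟩⟩
        refine (T.limMem_eq_or b k).elim (fun e => e.trans ?_) id
        rcases a with ⟨i, r, n⟩ | ⟨r, n⟩ | r | i
        · rfl
        · exact absurd ⟨Nat.pair r n, T.raw r (Nat.pair (T.limit r) 0) n, by simp [ansLimit]⟩ h
        · rfl
        · fin_cases i
          · exact absurd ⟨0, false, by simp [ansLimit]⟩ h
          · rfl
          · rfl)
  refine ⟨h1, fun ζ hζ => ⟨(h2 ζ hζ).1, fun i => ?_⟩⟩
  have hi : T.enc (T.limCfg (b ∘ Bit.addr)) i.addr = b i.addr := by cases i <;> rfl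
  obtain ⟨k, hk⟩ := (h2 ζ hζ).2
  rcases hk i.addr with h | h
  · exact (T.limMem_eq_or b k).elim h.trans fun e => (h.trans e).trans hi
  · exact (T.enc_limCfg b k h).trans hi

/-- The joint run of all machines of a table is simulated by a task machine. -/
noncomputable def sim : Sys.Sim T.sys T.toTask.sys T.blank Task.blank where
  rep c d := d = ((0, [], []), T.enc c)
  idx i := i.addr
  flags := {Addr.flash}
  bit_eq := by
    rintro c _ rfl i
    exact T.enc_addr c i
  start := by
    refine ⟨0, ?_, by simp⟩
    rw [Sys.run_zero]
    refine Prod.ext rfl (funext fun a => ?_)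
    rcases a with ⟨i, r, n⟩ | ⟨r, n⟩ | r | i
    · rfl
    · exact (Bool.xor_self _).symm
    · rfl
    · fin_cases i <;> rfl
  step := by
    rintro c _ rfl hc
    obtain ⟨h1, h2, h3⟩ := T.run_enc c hc
    refine ⟨Ordinal.omega0, Ordinal.omega0_pos, h1, fun ζ hζ => ⟨(h2 ζ hζ).1, fun i => ?_⟩, ?_⟩
    · have h := (h2 ζ hζ).2 i.addr i.addr_ne_flash
      rw [enc_addr, enc_addr] at h
      exact h
    · rintro f rfl
      exact h3
  limit := by
    intro b hb
    obtain ⟨h1, h2⟩ := T.run_lim b (hb _ rfl)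
    exact ⟨Ordinal.omega0, h1, fun ζ hζ => ⟨(h2 ζ hζ).1, fun i =>
      ((h2 ζ hζ).2 i).trans (by cases i <;> rfl)⟩⟩
  halt := by
    rintro c _ rfl hc
    exact (T.reads_of_reads (T.reads_mem c 0)).exists_firstHalt ((T.quits_allRead c 0).2 ⟨rfl, hc⟩)

end Table
end ITTM

namespace ITTM
namespace Table

/-- Instructions: the next state, the values to write, and the direction to move. -/
abbrev Instr : Type := ℕ × (Bool × Bool × Bool) × Bool

/-- Finite descriptions of machines: the start, limit and halt states and the list of
instructions. -/
abbrev Descr : Type := ℕ × ℕ × ℕ × List Instr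

/-- The description with number `n`. -/
def descr (n : ℕ) : Descr := (Encodable.decode (α := Descr) n).getD default

theorem descr_encode (d : Descr) : descr (Encodable.encode d) = d := by
  rw [descr, Encodable.encodek, Option.getD_some]

theorem primrec_descr : Primrec descr :=
  Primrec.option_getD.comp Primrec.decode (Primrec.const default)

/-- The description of machine `r` if `e` is the number of the clock. -/
def descrOf (e r : ℕ) : Descr := descr (if r = 0 then e else r - 1)

theorem primrec_descrOf (e : ℕ) : Primrec (descrOf e) :=
  primrec_descr.comp (Primrec.ite (Primrec.eq.comp Primrec.id (Primrec.const 0))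
    (Primrec.const e) Primrec.pred)

/-- The instruction that a description assigns to a state and the values read. -/
def Descr.lookup (d : Descr) (x : ℕ × Bool × Bool × Bool) : Instr :=
  d.2.2.2.getD (Encodable.encode x) default

/-- The table of all machines, where the clock is the machine with number `e`. -/
def all (e : ℕ) : Table where
  start r := (descrOf e r).1
  limit r := (descrOf e r).2.1
  halt r := (descrOf e r).2.2.1
  next r x := Descr.lookup (descrOf e r) x
  start_prim := Primrec.fst.comp (primrec_descrOf e)
  limit_prim := Primrec.fst.comp (Primrec.snd.comp (primrec_descrOf e))
  halt_prim := Primrec.fst.comp (Primrec.snd.comp (Primrec.snd.comp (primrec_descrOf e)))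
  next_prim := (Primrec.list_getD default).comp
    (Primrec.snd.comp (Primrec.snd.comp (Primrec.snd.comp ((primrec_descrOf e).comp Primrec.fst))))
    (Primrec.encode.comp Primrec.snd)

/-- The instruction in the format of descriptions. -/
def packInstr {Q : ℕ} (t : Fin (Q + 1) × (Fin 3 → Bool) × Bool) : Instr :=
  (t.1, (t.2.1 0, t.2.1 1, t.2.1 2), t.2.2)

/-- Machine `r` of the table is the machine `M`. -/
structure IsRow (T : Table) (r : ℕ) (M : Machine) : Prop where
  start_eq : T.start r = M.start
  limit_eq : T.limit r = M.limit
  halt_eq : T.halt r = M.halt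
  next_eq : ∀ (q : Fin (M.Q + 1)) (v : Fin 3 → Bool),
    T.next r (q, v 0, v 1, v 2) = packInstr (M.trans (q, v))

theorem exists_descr (M : Machine) : ∃ d : Descr, d.1 = M.start ∧ d.2.1 = M.limit ∧
    d.2.2.1 = M.halt ∧ ∀ (q : Fin (M.Q + 1)) (v : Fin 3 → Bool),
      d.lookup (q, v 0, v 1, v 2) = packInstr (M.trans (q, v)) := by
  let F : ℕ × Bool × Bool × Bool → Instr := fun x =>
    packInstr (M.trans (Fin.ofNat _ x.1, ![x.2.1, x.2.2.1, x.2.2.2]))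
  obtain ⟨N, hN⟩ := (Set.finite_range fun p : Fin (M.Q + 1) × (Fin 3 → Bool) =>
    Encodable.encode ((p.1 : ℕ), p.2 0, p.2 1, p.2 2)).bddAbove
  refine ⟨(M.start, M.limit, M.halt, (List.range (N + 1)).map fun k =>
    F ((Encodable.decode (α := ℕ × Bool × Bool × Bool) k).getD default)), rfl, rfl, rfl,
    fun q v => ?_⟩
  have hlt := Nat.lt_succ_of_le (hN ⟨(q, v), rfl⟩)
  have hv : ![v 0, v 1, v 2] = v := by
    funext i
    fin_cases i <;> rfl
  have hF : F (q, v 0, v 1, v 2) = packInstr (M.trans (q, v)) := by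
    simp [F, hv]
  rw [Descr.lookup, List.getD_eq_getElem _ _ (by simpa using hlt), List.getElem_map,
    List.getElem_range, Encodable.encodek, Option.getD_some, hF]

theorem exists_code (M : Machine) : ∃ n, (all n).IsRow 0 M ∧ ∀ e, (all e).IsRow (n + 1) M := by
  obtain ⟨d, h1, h2, h3, h4⟩ := exists_descr M
  obtain ⟨n, hn⟩ : ∃ n, descr n = d := ⟨_, descr_encode d⟩
  have e0 : descrOf n 0 = d := by
    rw [descrOf, if_pos rfl, hn]
  have e1 (e : ℕ) : descrOf e (n + 1) = d := by
    rw [descrOf, if_neg (Nat.succ_ne_zero _), Nat.add_sub_cancel, hn]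
  refine ⟨n, ⟨?_, ?_, ?_, ?_⟩, fun e => ⟨?_, ?_, ?_, ?_⟩⟩ <;>
    simp only [all, e0, e1] <;> assumption

variable {T : Table} {r : ℕ} {M : Machine} {c : Cfg} {s : Snapshot M.Q}

/-- Machine `r` in a joint configuration has a given snapshot. -/
structure IsAt (c : Cfg) (r : ℕ) (s : Snapshot M.Q) : Prop where
  state_eq : c.state r = s.state
  head_eq : c.head r = s.head
  tape_eq : ∀ i n, c.tape r i n = s.tape i n

theorem IsRow.isAt_step (h : T.IsRow r M) (hs : IsAt c r s) (hr : reset c r = false) :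
    IsAt (T.stepCfg c) r (M.stepSnap s) := by
  have hi : T.instr c r = packInstr (M.trans (s.state, fun i => s.tape i s.head)) := by
    rw [instr, hs.state_eq, hs.head_eq, hs.tape_eq, hs.tape_eq, hs.tape_eq]
    exact h.next_eq _ fun i => s.tape i s.head
  constructor
  · simp [stepCfg, hr, hi, packInstr, Machine.stepSnap]
  · simp [stepCfg, hr, hi, packInstr, Machine.stepSnap, hs.head_eq, Bool.cond_eq_ite]
  · intro i n
    simp only [stepCfg, hr, hi, packInstr, Machine.stepSnap, hs.head_eq, hs.tape_eq, cond_false]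
    congr 1
    fin_cases i <;> rfl

/-- A machine of the table that is in its initial configuration and not reset behaves like the
machine itself. -/
theorem IsRow.isAt_run (h : T.IsRow r M) {c : Cfg} (hc : IsAt c r (M.init zeroR)) {o : Ordinal}
    (hr : ∀ ζ < o, reset (T.sys.run c ζ) r = false) :
    IsAt (T.sys.run c o) r (M.snap zeroR o) := by
  induction o using Ordinal.limitRecOn with
  | zero => rwa [Sys.run_zero, Machine.snap_eq_run, Sys.run_zero]
  | add_one o ih =>
    rw [Sys.run_add_one, Machine.snap_add_one]
    exact h.isAt_step (ih fun ζ hζ => hr ζ (hζ.trans (lt_add_one o))) (hr o (lt_add_one o))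
  | limit o ho ih =>
    rw [Sys.run_limit _ _ ho, Machine.snap_limit _ _ ho]
    refine ⟨h.limit_eq, rfl, fun i n => ?_⟩
    exact Sys.limsupBit_congr ho.bot_lt fun γ _ hγ =>
      (ih γ hγ fun ζ hζ => hr ζ (hζ.trans hγ)).tape_eq i n

end Table
end ITTM

namespace ITTM
namespace Table

variable {T : Table} {M : Machine} {α : Ordinal.{0}}

/-- Some machine other than the clock halts for the first time. -/
def Fires (T : Table) (c : Cfg) : Prop := ∃ r, r ≠ 0 ∧ c.dead r = false ∧ c.state r = T.halt r

/-- The clock has just been started. -/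
structure Fresh (T : Table) (c : Cfg) : Prop where
  kick_eq : c.kick = false
  hit_eq : c.hit = false
  state_eq : c.state 0 = T.start 0
  head_eq : c.head 0 = 0
  tape_eq : ∀ i n, c.tape 0 i n = false

theorem fresh_blank : T.Fresh T.blank := ⟨rfl, rfl, rfl, rfl, fun _ _ => rfl⟩

theorem fresh_step {c : Cfg} (h : c.kick = true) : T.Fresh (T.stepCfg c) := by
  constructor <;> simp [stepCfg, reset, h]

theorem kick_step {c : Cfg} (h : c.kick = false) :
    (T.stepCfg c).kick = (c.state 0 == T.halt 0) := by
  simp [stepCfg, h]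

theorem Fresh.isAt {c : Cfg} (h : T.Fresh c) (hM : T.IsRow 0 M) : IsAt c 0 (M.init zeroR) :=
  ⟨h.state_eq.trans hM.start_eq, h.head_eq, fun i n => by
    simp [h.tape_eq, Machine.init, zeroR]⟩

theorem reset_eq_false {c : Cfg} (h : c.kick = false) (r : ℕ) : reset c r = false := by
  simp [reset, h]

theorem dead_run_iff (r : ℕ) (o : Ordinal) :
    (T.sys.run T.blank o).dead r = true ↔ ∃ ζ < o, (T.sys.run T.blank ζ).state r = T.halt r := by
  induction o using Ordinal.limitRecOn with
  | zero => simp [blank]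
  | add_one o ih =>
    rw [Sys.run_add_one]
    simp only [stepCfg, Bool.or_eq_true, ih, beq_iff_eq, Order.lt_add_one_iff]
    constructor
    · rintro (⟨ζ, h1, h2⟩ | h)
      · exact ⟨ζ, h1.le, h2⟩
      · exact ⟨o, le_rfl, h⟩
    · rintro ⟨ζ, h1, h2⟩
      rcases h1.eq_or_lt with rfl | h1
      · exact .inr h2
      · exact .inl ⟨ζ, h1, h2⟩
  | limit o ho ih =>
    rw [Sys.run_limit _ _ ho]
    refine Sys.limsupBit_eq_true.trans ⟨fun H => ?_, ?_⟩
    · obtain ⟨γ, -, h1, h2⟩ := H 0 ho.bot_lt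
      obtain ⟨ζ, h3, h4⟩ := (ih γ h1).1 h2
      exact ⟨ζ, h3.trans h1, h4⟩
    · rintro ⟨ζ, h1, h2⟩ β hβ
      have h3 : max β (ζ + 1) < o := max_lt hβ (ho.add_one_lt h1)
      exact ⟨_, le_max_left _ _, h3, (ih _ h3).2
        ⟨ζ, (lt_add_one ζ).trans_le (le_max_right _ _), h2⟩⟩

theorem Fresh.kick_run {c : Cfg} (h : T.Fresh c) (hM : T.IsRow 0 M) (hα : M.haltsAt zeroR α)
    {o : Ordinal} (ho : o ≤ α) : (T.sys.run c o).kick = false := by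
  induction o using WellFoundedLT.induction with
  | ind o ih =>
  rcases Ordinal.zero_or_succ_or_isSuccLimit o with rfl | ⟨o, rfl⟩ | hl
  · rw [Sys.run_zero]
    exact h.kick_eq
  · rw [Order.succ_eq_add_one] at *
    have h1 : o < o + 1 := lt_add_one o
    have h2 := hM.isAt_run (h.isAt hM) (o := o) fun ζ hζ =>
      reset_eq_false (ih ζ (hζ.trans h1) ((hζ.trans h1).le.trans ho)) 0
    rw [Sys.run_add_one]
    refine (kick_step (ih o h1 (h1.le.trans ho))).trans ?_
    rw [beq_eq_false_iff_ne, h2.state_eq, hM.halt_eq]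
    exact fun e => hα.2 o (h1.trans_le ho) (Fin.val_injective e)
  · rw [Sys.run_limit _ _ hl]
    exact Sys.limsupBit_of_eventually hl.bot_lt fun γ _ hγ => ih γ hγ (hγ.le.trans ho)

theorem Fresh.isAt_run {c : Cfg} (h : T.Fresh c) (hM : T.IsRow 0 M) (hα : M.haltsAt zeroR α)
    {o : Ordinal} (ho : o ≤ α) : IsAt (T.sys.run c o) 0 (M.snap zeroR o) :=
  hM.isAt_run (h.isAt hM) fun _ hζ => reset_eq_false (h.kick_run hM hα (hζ.le.trans ho)) 0

theorem Fresh.state_run_eq_halt_iff {c : Cfg} (h : T.Fresh c) (hM : T.IsRow 0 M)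
    (hα : M.haltsAt zeroR α) {o : Ordinal} (ho : o ≤ α) :
    (T.sys.run c o).state 0 = T.halt 0 ↔ o = α := by
  rw [(h.isAt_run hM hα ho).state_eq, hM.halt_eq, Fin.val_inj]
  constructor
  · exact fun e => ho.eq_of_not_lt fun hlt => hα.2 o hlt e
  · rintro rfl
    exact hα.1

theorem Fresh.hit_run {c : Cfg} (h : T.Fresh c) (hM : T.IsRow 0 M) (hα : M.haltsAt zeroR α)
    {o : Ordinal} (ho : o ≤ α) :
    (T.sys.run c o).hit = true ↔ ∃ ζ < o, T.Fires (T.sys.run c ζ) := by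
  induction o using Ordinal.limitRecOn with
  | zero => simp [h.hit_eq]
  | add_one o ih =>
    have h1 : o ≤ α := (lt_add_one o).le.trans ho
    have h2 : (T.stepCfg (T.sys.run c o)).hit = true ↔
        (T.sys.run c o).hit = true ∨ T.Fires (T.sys.run c o) := by
      simp [stepCfg, h.kick_run hM hα h1, Fires]
    rw [Sys.run_add_one, h2, ih h1]
    simp only [Order.lt_add_one_iff]
    constructor
    · rintro (⟨ζ, h3, h4⟩ | h3)
      · exact ⟨ζ, h3.le, h4⟩
      · exact ⟨o, le_rfl, h3⟩
    · rintro ⟨ζ, h3, h4⟩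
      rcases h3.eq_or_lt with rfl | h3
      · exact .inr h4
      · exact .inl ⟨ζ, h3, h4⟩
  | limit o hl ih =>
    rw [Sys.run_limit _ _ hl]
    refine Sys.limsupBit_eq_true.trans ⟨fun H => ?_, ?_⟩
    · obtain ⟨γ, -, h1, h2⟩ := H 0 hl.bot_lt
      obtain ⟨ζ, h3, h4⟩ := (ih γ h1 (h1.le.trans ho)).1 h2
      exact ⟨ζ, h3.trans h1, h4⟩
    · rintro ⟨ζ, h1, h2⟩ β hβ
      have h3 : max β (ζ + 1) < o := max_lt hβ (hl.add_one_lt h1)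
      exact ⟨_, le_max_left _ _, h3, (ih _ h3 (h3.le.trans ho)).2
        ⟨ζ, (lt_add_one ζ).trans_le (le_max_right _ _), h2⟩⟩

theorem Fresh.kick_run_add_one {c : Cfg} (h : T.Fresh c) (hM : T.IsRow 0 M)
    (hα : M.haltsAt zeroR α) : (T.sys.run c (α + 1)).kick = true := by
  rw [Sys.run_add_one]
  refine (kick_step (h.kick_run hM hα le_rfl)).trans ?_
  rw [beq_iff_eq]
  exact (h.state_run_eq_halt_iff hM hα le_rfl).2 rfl

/-- At every stage the clock is either about to be restarted or running. -/
theorem kick_or_fresh (hM : T.IsRow 0 M) (hα : M.haltsAt zeroR α) (o : Ordinal) :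
    (T.sys.run T.blank o).kick = true ∨
      ∃ β ≤ o, T.Fresh (T.sys.run T.blank β) ∧ o ≤ β + α := by
  induction o using Ordinal.limitRecOn with
  | zero => exact .inr ⟨0, le_rfl, by rw [Sys.run_zero]; exact fresh_blank, zero_le⟩
  | add_one o ih =>
    rcases ih with h | ⟨β, h1, h2, h3⟩
    · refine .inr ⟨o + 1, le_rfl, ?_, le_self_add⟩
      rw [Sys.run_add_one]
      exact fresh_step h
    · rcases h3.eq_or_lt with rfl | h3
      · left
        rw [add_assoc, Sys.run_add]
        exact h2.kick_run_add_one hM hα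
      · exact .inr ⟨β, h1.trans (lt_add_one o).le, h2, Order.add_one_le_of_lt h3⟩
  | limit o ho ih =>
    rw [or_iff_not_imp_left]
    intro hk
    have hk' : ¬ ∀ β < o, ∃ γ, β ≤ γ ∧ γ < o ∧ (T.sys.run T.blank γ).kick = true := by
      rw [Sys.run_limit _ _ ho] at hk
      exact fun H => hk (Sys.limsupBit_eq_true.2 H)
    push Not at hk'
    obtain ⟨ζ, hζ, hno⟩ := hk'
    rcases ih ζ hζ with h | ⟨β, h1, h2, h3⟩
    · exact absurd h (hno ζ le_rfl hζ)
    · refine ⟨β, h1.trans hζ.le, h2, le_of_not_gt fun h4 => ?_⟩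
      refine hno (β + α + 1) (h3.trans (lt_add_one _).le) (ho.add_one_lt h4) ?_
      rw [add_assoc, Sys.run_add]
      exact h2.kick_run_add_one hM hα

theorem exists_fresh_ge (hM : T.IsRow 0 M) (hα : M.haltsAt zeroR α) (o : Ordinal) :
    ∃ β, o ≤ β ∧ T.Fresh (T.sys.run T.blank β) := by
  obtain ⟨ζ, h1, h2⟩ : ∃ ζ, o ≤ ζ ∧ (T.sys.run T.blank ζ).kick = true := by
    rcases kick_or_fresh hM hα o with h | ⟨β, -, h2, h3⟩
    · exact ⟨o, le_rfl, h⟩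
    · refine ⟨β + (α + 1), h3.trans (by gcongr; exact (lt_add_one α).le), ?_⟩
      rw [Sys.run_add]
      exact h2.kick_run_add_one hM hα
  refine ⟨ζ + 1, h1.trans (lt_add_one ζ).le, ?_⟩
  rw [Sys.run_add_one]
  exact fresh_step h2

theorem exists_forall_not_fires (T : Table) :
    ∃ o : Ordinal, ∀ ζ ≥ o, ¬ T.Fires (T.sys.run T.blank ζ) := by
  have h (r : ℕ) : ∃ o : Ordinal.{0}, ∀ ζ ≥ o, (T.sys.run T.blank ζ).dead r = true ∨
      (T.sys.run T.blank ζ).state r ≠ T.halt r := by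
    by_cases h : ∃ ζ, (T.sys.run T.blank ζ).state r = T.halt r
    · obtain ⟨ζ, hζ⟩ := h
      exact ⟨ζ + 1, fun η hη => .inl ((dead_run_iff r η).2
        ⟨ζ, (lt_add_one ζ).trans_le hη, hζ⟩)⟩
    · exact ⟨0, fun η _ => .inr fun e => h ⟨η, e⟩⟩
  choose f hf using h
  refine ⟨⨆ r, f r, fun ζ hζ => ?_⟩
  rintro ⟨r, -, h1, h2⟩
  rcases hf r ζ ((Ordinal.le_iSup f r).trans hζ) with h | h
  · exact Bool.false_ne_true (h1.symm.trans h)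
  · exact h h2

/-- The joint run stops at the end of a gap of length `α`. -/
theorem exists_firstHalt (hM : T.IsRow 0 M) (hα : M.haltsAt zeroR α) :
    ∃ β, T.sys.FirstHalt T.blank (β + α) ∧
      ∀ ζ < α, ¬ T.Fires (T.sys.run T.blank (β + ζ)) := by
  have hex : ∃ o, T.sys.halted (T.sys.run T.blank o) := by
    obtain ⟨o, ho⟩ := exists_forall_not_fires T
    obtain ⟨β, h1, h2⟩ := exists_fresh_ge hM hα o
    refine ⟨β + α, ?_⟩
    rw [Sys.run_add]
    refine ⟨h2.kick_run hM hα le_rfl, (h2.state_run_eq_halt_iff hM hα le_rfl).2 rfl, ?_⟩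
    rw [← Bool.not_eq_true, h2.hit_run hM hα le_rfl]
    rintro ⟨ζ, -, hζ⟩
    rw [← Sys.run_add] at hζ
    exact ho _ (h1.trans le_self_add) hζ
  obtain ⟨o, ho, hmin⟩ := WellFounded.has_min Ordinal.lt_wf
    {o | T.sys.halted (T.sys.run T.blank o)} hex
  rcases kick_or_fresh hM hα o with h | ⟨β, h1, h2, h3⟩
  · exact absurd (ho.1.symm.trans h) Bool.false_ne_true
  · obtain ⟨ζ, rfl⟩ := le_iff_exists_add.1 h1
    have h4 : ζ ≤ α := by simpa using h3
    have h5 : T.sys.halted (T.sys.run (T.sys.run T.blank β) ζ) := by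
      rw [← Sys.run_add]
      exact ho
    obtain rfl := (h2.state_run_eq_halt_iff hM hα h4).1 h5.2.1
    refine ⟨β, ⟨ho, fun o' ho' h => hmin o' h ho'⟩, fun ξ hξ hf => ?_⟩
    rw [Sys.run_add] at hf
    exact Bool.false_ne_true (h5.2.2.symm.trans ((h2.hit_run hM hα le_rfl).2 ⟨ξ, hξ, hf⟩))

theorem IsRow.fires {r : ℕ} (h : T.IsRow r M) (hr : r ≠ 0) {δ : Ordinal}
    (hδ : M.haltsAt zeroR δ) : T.Fires (T.sys.run T.blank δ) := by
  have hr' : (r == 0) = false := beq_eq_false_iff_ne.2 hr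
  have hat (o : Ordinal) : (T.sys.run T.blank o).state r = T.halt r ↔ M.haltedAt zeroR o := by
    have h1 : IsAt T.blank r (M.init zeroR) :=
      ⟨h.start_eq, rfl, fun i n => by simp [blank, Machine.init, zeroR]⟩
    rw [(h.isAt_run h1 (o := o) fun ζ _ => by simp [reset, hr']).state_eq, h.halt_eq,
      Fin.val_inj, Machine.haltedAt]
  refine ⟨r, hr, ?_, (hat δ).2 hδ.1⟩
  rw [← Bool.not_eq_true, dead_run_iff]
  rintro ⟨ζ, h1, h2⟩
  exact hδ.2 ζ h1 ((hat ζ).1 h2)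

/-- Beyond the stage at which the joint run of a table stops, there is a clockable ordinal. -/
theorem exists_clockable_ge (T : Table) {o : Ordinal} (h : T.sys.FirstHalt T.blank o) :
    ∃ ξ, Clockable ξ ∧ o ≤ ξ := by
  obtain ⟨o₁, h₁, f₁⟩ := T.sim.exists_firstHalt h
  obtain ⟨o₂, h₂, f₂⟩ := T.toTask.sim.exists_firstHalt f₁
  obtain ⟨o₃, h₃, f₃⟩ := T.toTask.toCtrl.sim.exists_firstHalt f₂
  obtain ⟨o₄, h₄, f₄⟩ := T.toTask.toCtrl.toSMachine.sim.exists_firstHalt f₃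
  obtain ⟨ξ, h₅, f₅⟩ := T.toTask.toCtrl.toSMachine.toTrack.sim.exists_firstHalt f₄
  exact ⟨ξ, ⟨_, (Machine.haltsAt_iff_firstHalt _ _ _).2 f₅⟩,
    h₁.trans (h₂.trans (h₃.trans (h₄.trans h₅)))⟩

end Table
end ITTM

/-- **Big Gaps Theorem.** For every clockable ordinal `α` there are gaps of
size at least `α` in the clockable ordinals: there is an ordinal `β` such
that no ordinal `δ` with `β ≤ δ < β + α` is clockable, while some clockable
ordinal lies at or beyond `β + α`. -/
theorem big_gaps (α : Ordinal) (h : ITTM.Clockable α) :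
    ∃ β : Ordinal,
      (∀ δ : Ordinal, β ≤ δ → δ < β + α → ¬ ITTM.Clockable δ) ∧
      (∃ ξ : Ordinal, ITTM.Clockable ξ ∧ β + α ≤ ξ) := by
  obtain ⟨C, hα⟩ := h
  obtain ⟨e, hC, -⟩ := ITTM.Table.exists_code C
  obtain ⟨β, hβ, hgap⟩ := ITTM.Table.exists_firstHalt hC hα
  refine ⟨β, ?_, ITTM.Table.exists_clockable_ge _ hβ⟩
  rintro δ h1 h2 ⟨M, hM⟩
  obtain ⟨ζ, rfl⟩ := le_iff_exists_add.1 h1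
  obtain ⟨n, -, hn⟩ := ITTM.Table.exists_code M
  exact hgap ζ (by simpa using h2) ((hn e).fires (Nat.succ_ne_zero n) hM)
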